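/- arXiv:2103.04890 — 2 statements merged into one kernel-verified Lean document; each statement's English description precedes it below -/
import Mathlib

section
/- Let k be a nonnegative integer and let f = f₀ + M₂* f₁ with f₀ ∈ M_{3k+2}(Γ₀⁺(3),χ^k) and f₁ ∈ M_{3k}(Γ₀⁺(3),χ^k), where M₂*(z) = (3E₂(3z)+E₂(z))/4. Suppose f is extremal, i.e. v_∞(f) = k (which equals dim 𝑀̃_{3k+2}^{≤1}(Γ₀⁺(3),χ^k) − 1). Let M₂(z) = (3E₂(3z) − E₂(z))/2, M₄(z) = (9E₄(3z)+E₄(z))/10 (= M₂²), M₆(z) = q ∏_{n≥1}(1−qⁿ)⁶(1−q^{3n})⁶, and P(z) = e^{πikz} ∏_{n≥1}(1−qⁿ)^{3k}(1−q^{3n})^{3k} (= M₆^{k/2}). Then y := f/(P·M₂) satisfies y″(z) = −4π² ( (k/2)² M₄(z) − 18 M₆(z)/M₂(z) ) y(z) at every z ∈ ℍ with M₂(z) ≠ 0. -/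
noncomputable section

open Complex Matrix Filter Topology

abbrev SL2R := Matrix.SpecialLinearGroup (Fin 2) ℝ
abbrev SL2Z := Matrix.SpecialLinearGroup (Fin 2) ℤ

/-- The upper half-plane, as a subset of `ℂ`. -/
def UHP : Set ℂ := {z : ℂ | 0 < z.im}

/-- The embedding of `SL(2,ℤ)` into `SL(2,ℝ)`. -/
def toR : SL2Z →* SL2R := Matrix.SpecialLinearGroup.map (Int.castRingHom ℝ)

/-- `SL(2,ℤ)` as a subgroup of `SL(2,ℝ)`. -/
def SL2ZR : Subgroup SL2R := Subgroup.map toR ⊤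

/-- Möbius action of a real matrix on a complex number. -/
def moeb (γ : SL2R) (z : ℂ) : ℂ :=
  ((γ.1 0 0 : ℂ) * z + (γ.1 0 1 : ℂ)) / ((γ.1 1 0 : ℂ) * z + (γ.1 1 1 : ℂ))

/-- The automorphy factor `cz + d`. -/
def jfac (γ : SL2R) (z : ℂ) : ℂ := (γ.1 1 0 : ℂ) * z + (γ.1 1 1 : ℂ)

/-- A holomorphic modular form of weight `k` and character `χ` on `Γ ≤ SL(2,ℝ)`
(for `Γ` commensurable with `SL(2,ℤ)`): holomorphic on `ℍ`, satisfying the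
transformation law, and holomorphic (bounded) at every cusp. -/
structure IsModularForm (Γ : Subgroup SL2R) (χ : SL2R → ℂ) (k : ℤ) (f : ℂ → ℂ) : Prop where
  holo : DifferentiableOn ℂ f UHP
  transform : ∀ γ ∈ Γ, ∀ z ∈ UHP, f (moeb γ z) = χ γ * jfac γ z ^ k * f z
  bdd_at_cusps : ∀ σ : SL2Z, ∃ C : ℝ, ∀ z ∈ UHP, 1 ≤ z.im →
    ‖jfac (toR σ) z ^ (-k) * f (moeb (toR σ) z)‖ ≤ C

/-- A finite-order character of `Γ`. -/
def IsCharacter (Γ : Subgroup SL2R) (χ : SL2R → ℂ) : Prop :=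
  (∀ γ ∈ Γ, ∀ δ ∈ Γ, χ (γ * δ) = χ γ * χ δ) ∧
    ∃ n : ℕ, 0 < n ∧ ∀ γ ∈ Γ, χ γ ^ n = 1

/-- `φ` is quasimodular of weight 2 and depth 1 on `Γ`, with constant `α`:
`(cz+d)⁻² φ(γz) = φ(z) + α c/(cz+d)`. -/
def IsQuasiWt2 (Γ : Subgroup SL2R) (α : ℂ) (φ : ℂ → ℂ) : Prop :=
  ∀ γ ∈ Γ, ∀ z ∈ UHP,
    (jfac γ z)⁻¹ ^ 2 * φ (moeb γ z) = φ z + α * (γ.1 1 0 : ℂ) / jfac γ z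

/-- `f` has vanishing order `ν` at the cusp `∞`, with respect to `q_N = e^{2πiz/N}`:
`q_N^{-ν}·f(z)` tends to a nonzero constant as `Im z → ∞`. -/
def VOrder (N : ℝ) (f : ℂ → ℂ) (ν : ℝ) : Prop :=
  ∃ c : ℂ, c ≠ 0 ∧ ∀ ε : ℝ, 0 < ε → ∃ Y : ℝ, ∀ z : ℂ, Y ≤ z.im →
    ‖Complex.exp (-(2 * Real.pi * Complex.I * (ν : ℂ) * z / (N : ℂ))) * f z - c‖ < ε


/-- `Γ₀(N)` as a subgroup of `SL(2,ℝ)`. -/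
def Gamma0R (N : ℕ) : Subgroup SL2R := Subgroup.map toR (CongruenceSubgroup.Gamma0 N)

/-- `q = e^{2πiz}`. -/
def qexp (z : ℂ) : ℂ := Complex.exp (2 * Real.pi * Complex.I * z)

/-- `E₂(z) = 1 - 24 ∑_{n≥1} σ₁(n) qⁿ`. -/
def E2 (z : ℂ) : ℂ :=
  1 - 24 * ∑' n : ℕ, (ArithmeticFunction.sigma 1 (n + 1) : ℂ) * qexp z ^ (n + 1)

/-- `E₄(z) = 1 + 240 ∑_{n≥1} σ₃(n) qⁿ`. -/
def E4 (z : ℂ) : ℂ :=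
  1 + 240 * ∑' n : ℕ, (ArithmeticFunction.sigma 3 (n + 1) : ℂ) * qexp z ^ (n + 1)

/-- `S₃ = (1/√3)(0 -1; 3 0)`. -/
def S3elt : SL2R :=
  ⟨!![0, -(Real.sqrt 3)⁻¹; Real.sqrt 3, 0], by
    have h : Real.sqrt 3 ≠ 0 := by positivity
    rw [Matrix.det_fin_two_of, neg_mul, inv_mul_cancel₀ h]
    norm_num⟩

/-- `R₃ = (1/√3)(3 -1; 3 0)`. -/
def R3elt : SL2R :=
  ⟨!![Real.sqrt 3, -(Real.sqrt 3)⁻¹; Real.sqrt 3, 0], by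
    have h : Real.sqrt 3 ≠ 0 := by positivity
    rw [Matrix.det_fin_two_of, neg_mul, inv_mul_cancel₀ h]
    norm_num⟩

/-- `Γ₀⁺(3) = ⟨Γ₀(3), S₃⟩`. -/
def GammaPlus3 : Subgroup SL2R :=
  Subgroup.closure ((Gamma0R 3 : Set SL2R) ∪ {S3elt})

/-- Modular forms of weight `k` with character `χ` on `Γ ≤ SL(2,ℝ)` whose only cusp
is `∞`: holomorphic on `ℍ`, transforming with `χ·(cz+d)^k`, holomorphic at `∞`. -/
def MFchar (Γ : Subgroup SL2R) (χ : SL2R → ℂ) (k : ℤ) (f : ℂ → ℂ) : Prop :=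
  DifferentiableOn ℂ f UHP ∧
    (∀ γ ∈ Γ, ∀ z ∈ UHP, f (moeb γ z) = χ γ * jfac γ z ^ k * f z) ∧
    ∃ C : ℝ, ∀ z ∈ UHP, 1 ≤ z.im → ‖f z‖ ≤ C

/-- `M₂*(z) = (3E₂(3z) + E₂(z))/4`. -/
def M2star3 (z : ℂ) : ℂ := (3 * E2 (3 * z) + E2 z) / 4

/-- `M₄(z) = (9E₄(3z) + E₄(z))/10`. -/
def M4plus3 (z : ℂ) : ℂ := (9 * E4 (3 * z) + E4 z) / 10

/-- `P(z) = e^{πikz} ∏_{n≥1} (1-qⁿ)^{3k}(1-q^{3n})^{3k}` (equal to `M₆(z)^{k/2}` where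
`M₆ = η(z)⁶η(3z)⁶`; nonvanishing on `ℍ`). -/
def Pfun3 (k : ℕ) (z : ℂ) : ℂ :=
  Complex.exp (Real.pi * Complex.I * k * z) *
    ∏' n : ℕ, ((1 - qexp z ^ (n + 1)) ^ (3 * k) * (1 - qexp z ^ (3 * (n + 1))) ^ (3 * k))


/-- `M₂(z) = (3E₂(3z) - E₂(z))/2`. -/
def M2minus3 (z : ℂ) : ℂ := (3 * E2 (3 * z) - E2 z) / 2

/-- `M₆(z) = q ∏_{n≥1}(1-qⁿ)⁶(1-q^{3n})⁶ = η(z)⁶η(3z)⁶`. -/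
def M6fun (z : ℂ) : ℂ :=
  qexp z * ∏' n : ℕ, ((1 - qexp z ^ (n + 1)) ^ 6 * (1 - qexp z ^ (3 * (n + 1))) ^ 6)

namespace G3

theorem uhp_open : IsOpen UHP := isOpen_lt continuous_const Complex.continuous_im

theorem uhp_ne {z : ℂ} (hz : z ∈ UHP) : z ≠ 0 := by
  rintro rfl; simp [UHP] at hz

theorem im_S (z : ℂ) : (-1 / (3 * z)).im = z.im / (3 * Complex.normSq z) := by
  rw [show (-1 / (3 * z) : ℂ) = ((-1/3 : ℝ) : ℂ) * z⁻¹ by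
    push_cast; rw [div_eq_mul_inv, mul_inv]; ring]
  rw [Complex.im_ofReal_mul, Complex.inv_im]
  by_cases h : Complex.normSq z = 0
  · simp [h]
  · field_simp

theorem S_mem {z : ℂ} (hz : z ∈ UHP) : -1 / (3 * z) ∈ UHP := by
  have h1 : 0 < Complex.normSq z := Complex.normSq_pos.2 (uhp_ne hz)
  have h2 : 0 < z.im := hz
  change 0 < (-1 / (3 * z)).im
  rw [im_S]; positivity

theorem T_mem {z : ℂ} (hz : z ∈ UHP) : z + 1 ∈ UHP := by
  simpa [UHP] using hz

theorem three_mem {z : ℂ} (hz : z ∈ UHP) : 3 * z ∈ UHP := by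
  have h2 : 0 < z.im := hz
  simp [UHP]; exact h2

theorem norm_qexp (z : ℂ) : ‖qexp z‖ = Real.exp (-2 * Real.pi * z.im) := by
  rw [qexp, Complex.norm_exp]; congr 1; simp

theorem qexp_ne (z : ℂ) : qexp z ≠ 0 := Complex.exp_ne_zero _

theorem qexp_mem {z : ℂ} (hz : z ∈ UHP) : qexp z ∈ Metric.ball (0 : ℂ) 1 := by
  have h2 : 0 < z.im := hz
  rw [mem_ball_zero_iff, norm_qexp, Real.exp_lt_one_iff]
  have := Real.pi_pos
  nlinarith [mul_pos this h2]

theorem hasDerivAt_qexp (z : ℂ) :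
    HasDerivAt qexp (2 * Real.pi * Complex.I * qexp z) z := by
  have : HasDerivAt (fun z : ℂ => 2 * Real.pi * Complex.I * z) (2 * Real.pi * Complex.I) z := by
    simpa using (hasDerivAt_id z).const_mul (2 * Real.pi * Complex.I : ℂ)
  have := this.cexp
  rw [mul_comm]; exact this

theorem qexp_T (z : ℂ) : qexp (z + 1) = qexp z := by
  rw [qexp, qexp, mul_add, Complex.exp_add, mul_one, Complex.exp_two_pi_mul_I, mul_one]

theorem qexp_three (z : ℂ) : qexp (3 * z) = qexp z ^ 3 := by
  rw [qexp, qexp, ← Complex.exp_nat_mul]; congr 1; push_cast; ring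

theorem tpi_ne : (2 * Real.pi * Complex.I : ℂ) ≠ 0 := Complex.two_pi_I_ne_zero

theorem qexp_surj {q : ℂ} (hq : q ∈ Metric.ball (0 : ℂ) 1) (h0 : q ≠ 0) :
    ∃ z ∈ UHP, qexp z = q := by
  have key : qexp (Complex.log q / (2 * Real.pi * Complex.I)) = q := by
    rw [qexp, mul_div_cancel₀ _ tpi_ne, Complex.exp_log h0]
  refine ⟨_, ?_, key⟩
  have h1 := norm_qexp (Complex.log q / (2 * Real.pi * Complex.I))
  rw [key] at h1
  rw [mem_ball_zero_iff, h1, Real.exp_lt_one_iff] at hq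
  change 0 < (Complex.log q / (2 * Real.pi * Complex.I)).im
  by_contra hcon
  push Not at hcon
  nlinarith [Real.pi_pos, mul_nonneg Real.pi_pos.le (neg_nonneg.2 hcon)]

/-- `f` is a holomorphic function of `q` on the unit disc. -/
def HasQ (f G : ℂ → ℂ) : Prop :=
  DifferentiableOn ℂ G (Metric.ball 0 1) ∧ ∀ z ∈ UHP, f z = G (qexp z)

def Dd (f : ℂ → ℂ) (z : ℂ) : ℂ := deriv f z / (2 * Real.pi * Complex.I)

theorem HasQ.hasDerivAt' {f G : ℂ → ℂ} (h : HasQ f G) {z : ℂ} (hz : z ∈ UHP) :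
    HasDerivAt f (2 * Real.pi * Complex.I * (qexp z * deriv G (qexp z))) z := by
  have h1 : HasDerivAt G (deriv G (qexp z)) (qexp z) :=
    (h.1.differentiableAt (Metric.isOpen_ball.mem_nhds (qexp_mem hz))).hasDerivAt
  have h2 := h1.comp z (hasDerivAt_qexp z)
  have h3 : f =ᶠ[𝓝 z] G ∘ qexp := by
    filter_upwards [uhp_open.mem_nhds hz] with w hw using h.2 w hw
  refine (h2.congr_of_eventuallyEq h3).congr_deriv (by ring)

theorem HasQ.D_eq {f G : ℂ → ℂ} (h : HasQ f G) {z : ℂ} (hz : z ∈ UHP) :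
    Dd f z = qexp z * deriv G (qexp z) := by
  rw [Dd, (h.hasDerivAt' hz).deriv, mul_div_cancel_left₀ _ tpi_ne]

theorem HasQ.hasDerivAt {f G : ℂ → ℂ} (h : HasQ f G) {z : ℂ} (hz : z ∈ UHP) :
    HasDerivAt f (2 * Real.pi * Complex.I * Dd f z) z := by
  rw [h.D_eq hz]; exact h.hasDerivAt' hz

theorem HasQ.D {f G : ℂ → ℂ} (h : HasQ f G) : HasQ (Dd f) (fun q => q * deriv G q) :=
  ⟨differentiableOn_id.mul (h.1.deriv Metric.isOpen_ball), fun _ hz => h.D_eq hz⟩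

theorem HasQ.mul {f g F G : ℂ → ℂ} (h : HasQ f F) (h' : HasQ g G) :
    HasQ (fun z => f z * g z) (fun q => F q * G q) :=
  ⟨h.1.mul h'.1, fun z hz => by simp only [h.2 z hz, h'.2 z hz]⟩

theorem HasQ.add {f g F G : ℂ → ℂ} (h : HasQ f F) (h' : HasQ g G) :
    HasQ (fun z => f z + g z) (fun q => F q + G q) :=
  ⟨h.1.add h'.1, fun z hz => by simp only [h.2 z hz, h'.2 z hz]⟩

theorem HasQ.sub {f g F G : ℂ → ℂ} (h : HasQ f F) (h' : HasQ g G) :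
    HasQ (fun z => f z - g z) (fun q => F q - G q) :=
  ⟨h.1.sub h'.1, fun z hz => by simp only [h.2 z hz, h'.2 z hz]⟩

theorem HasQ.cmul {f F : ℂ → ℂ} (h : HasQ f F) (c : ℂ) :
    HasQ (fun z => c * f z) (fun q => c * F q) :=
  ⟨h.1.const_mul c, fun z hz => by simp only [h.2 z hz]⟩

theorem HasQ.pow {f F : ℂ → ℂ} (h : HasQ f F) (n : ℕ) :
    HasQ (fun z => f z ^ n) (fun q => F q ^ n) :=
  ⟨h.1.pow n, fun z hz => by simp only [h.2 z hz]⟩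

theorem div_q {G : ℂ → ℂ} (h : DifferentiableOn ℂ G (Metric.ball 0 1)) (h0 : G 0 = 0) :
    ∃ G2 : ℂ → ℂ, DifferentiableOn ℂ G2 (Metric.ball 0 1) ∧ ∀ q, G q = q * G2 q := by
  refine ⟨dslope G 0, ?_, fun q => ?_⟩
  · exact (Complex.differentiableOn_dslope
      (Metric.isOpen_ball.mem_nhds (Metric.mem_ball_self one_pos))).2 h
  · have := sub_smul_dslope G 0 q
    simp only [sub_zero, smul_eq_mul, h0] at this
    exact this.symm

theorem reduce {u : ℂ → ℝ} (hT : ∀ z ∈ UHP, u (z + 1) = u z)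
    (hS : ∀ z ∈ UHP, u (-1 / (3 * z)) = u z) (z : ℂ) (hz : z ∈ UHP) :
    ∃ z' ∈ UHP, 1 / 4 ≤ z'.im ∧ u z' = u z := by
  have hTn : ∀ n : ℕ, ∀ z ∈ UHP, u (z + n) = u z := by
    intro n
    induction n with
    | zero => simp
    | succ n ih =>
      intro z hz
      have h1 : z + n ∈ UHP := by simpa [UHP] using hz
      rw [Nat.cast_succ, ← add_assoc, hT _ h1, ih z hz]
  have hTz : ∀ n : ℤ, ∀ z ∈ UHP, u (z + n) = u z := by
    intro n z hz
    rcases Int.eq_nat_or_neg n with ⟨m, rfl | rfl⟩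
    · exact_mod_cast hTn m z hz
    · have h1 : z + ((-(m : ℤ) : ℤ) : ℂ) ∈ UHP := by simpa [UHP] using hz
      have := hTn m _ h1
      rw [← this]; congr 1; push_cast; ring
  have main : ∀ n : ℕ, ∀ z ∈ UHP, 1 / 4 * (15 / 16 : ℝ) ^ n ≤ z.im →
      ∃ z' ∈ UHP, 1 / 4 ≤ z'.im ∧ u z' = u z := by
    intro n
    induction n with
    | zero => intro z hz h; exact ⟨z, hz, by simpa using h, rfl⟩
    | succ n ih =>
      intro z hz h
      by_cases h4 : 1 / 4 ≤ z.im
      · exact ⟨z, hz, h4, rfl⟩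
      push Not at h4
      set w : ℂ := z + ((-round z.re : ℤ) : ℂ) with hw
      have hwim : w.im = z.im := by simp [hw]
      have hwre : |w.re| ≤ 1 / 2 := by
        have := abs_sub_round z.re
        simpa [hw, sub_eq_add_neg] using this
      have hwU : w ∈ UHP := by change 0 < w.im; rw [hwim]; exact hz
      have hz0 : 0 < z.im := hz
      have hns : 3 * Complex.normSq w ≤ 15 / 16 := by
        rw [Complex.normSq_apply, hwim]
        have := abs_le.1 hwre
        nlinarith
      have hns0 : 0 < Complex.normSq w := Complex.normSq_pos.2 (uhp_ne hwU)
      obtain ⟨z', h1, h2, h3⟩ := ih (-1 / (3 * w)) (S_mem hwU) (by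
        rw [im_S, hwim, le_div_iff₀ (by positivity)]
        rw [pow_succ] at h
        have hp : (0:ℝ) < 1 / 4 * (15 / 16) ^ n := by positivity
        nlinarith)
      exact ⟨z', h1, h2, by rw [h3, hS w hwU, hTz _ z hz]⟩
  have hz0 : 0 < z.im := hz
  obtain ⟨n, hn⟩ := exists_pow_lt_of_lt_one (show 0 < 4 * z.im by positivity)
    (show (15 / 16 : ℝ) < 1 by norm_num)
  exact main n z hz (by linarith)

theorem vanish0 {h G : ℂ → ℂ} (hG : HasQ h G) {p : ℕ} (hp : 0 < p)
    (hS : ∀ z ∈ UHP, ‖(Real.sqrt 3 : ℂ) * z‖ ^ p * ‖h (-1 / (3 * z))‖ = ‖h z‖) :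
    ∀ q ∈ Metric.ball (0 : ℂ) 1, G q = 0 := by
  -- bound on the closed disc
  set r0 : ℝ := Real.exp (-(Real.pi / 2)) with hr0
  have hr01 : r0 < 1 := by rw [hr0, Real.exp_lt_one_iff]; linarith [Real.pi_pos]
  obtain ⟨C, hC⟩ := (isCompact_closedBall (0:ℂ) r0).exists_bound_of_continuousOn
    (hG.1.continuousOn.mono (Metric.closedBall_subset_ball hr01))
  have hbd : ∀ z ∈ UHP, ‖h z‖ ^ 2 ≤ C ^ 2 * 4 ^ p * z.im ^ p := by
    intro z hz
    obtain ⟨z', hz', h4, hu⟩ := reduce (u := fun z => ‖h z‖ ^ 2 / z.im ^ p) (by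
      intro z hz
      simp only [hG.2 z hz, hG.2 _ (T_mem hz), qexp_T]; simp) (by
      intro z hz
      have hn : 0 < Complex.normSq z := Complex.normSq_pos.2 (uhp_ne hz)
      have hz0 : 0 < z.im := hz
      rw [im_S, ← hS z hz]
      have h3 : ‖(Real.sqrt 3 : ℂ) * z‖ ^ 2 = 3 * Complex.normSq z := by
        rw [norm_mul, mul_pow, Complex.normSq_eq_norm_sq]; congr 1
        rw [Complex.norm_real, Real.norm_of_nonneg (Real.sqrt_nonneg _), Real.sq_sqrt (by norm_num)]
      rw [mul_pow, ← pow_mul, mul_comm p 2, pow_mul, h3, div_pow]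
      field_simp) z hz
    have hz0 : 0 < z.im := hz
    have hz0' : 0 < z'.im := hz'
    have hb : ‖h z'‖ ≤ C := by
      rw [hG.2 z' hz']; apply hC
      rw [mem_closedBall_zero_iff, norm_qexp, hr0]
      apply Real.exp_le_exp.2
      nlinarith [Real.pi_pos]
    have : ‖h z‖ ^ 2 / z.im ^ p ≤ C ^ 2 * 4 ^ p := by
      rw [← hu, div_le_iff₀ (by positivity), mul_assoc, ← mul_pow]
      have h1 : (1:ℝ) ≤ (4 * z'.im) ^ p := one_le_pow₀ (by linarith)
      have h2 : ‖h z'‖ ^ 2 ≤ C ^ 2 := by gcongr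
      nlinarith [sq_nonneg C]
    rwa [div_le_iff₀ (by positivity)] at this
  intro q hq
  -- max modulus
  have hq1 : ‖q‖ < 1 := by simpa using hq
  have hle : ∀ y : ℝ, 0 < y → ‖q‖ < Real.exp (-2 * Real.pi * y) →
      ‖G q‖ ^ 2 ≤ C ^ 2 * 4 ^ p * y ^ p := by
    intro y hy hqy
    set r := Real.exp (-2 * Real.pi * y) with hr
    have hr1 : r < 1 := by
      rw [hr, Real.exp_lt_one_iff]; nlinarith [Real.pi_pos, mul_pos Real.pi_pos hy]
    have hrpos : 0 < r := Real.exp_pos _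
    set B := Real.sqrt (C ^ 2 * 4 ^ p * y ^ p) with hB
    have hmax : ‖G q‖ ≤ B := by
      refine Complex.norm_le_of_forall_mem_frontier_norm_le (U := Metric.ball (0:ℂ) r)
        Metric.isBounded_ball ?_ ?_ ?_
      · apply DifferentiableOn.diffContOnCl
        rw [closure_ball _ hrpos.ne']
        exact hG.1.mono (Metric.closedBall_subset_ball hr1)
      · intro s hs
        rw [frontier_ball _ hrpos.ne', mem_sphere_zero_iff_norm] at hs
        have hs0 : s ≠ 0 := by rw [← norm_pos_iff, hs]; exact hrpos
        obtain ⟨z, hz, rfl⟩ := qexp_surj (q := s) (by rw [mem_ball_zero_iff, hs]; exact hr1) hs0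
        rw [norm_qexp, hr] at hs
        have hs' := Real.exp_injective hs
        have hzy : z.im = y := by
          have := Real.pi_pos
          have h2 : (2 * Real.pi) * z.im = (2 * Real.pi) * y := by linarith
          exact mul_left_cancel₀ (by positivity) h2
        rw [← hG.2 z hz]
        apply Real.le_sqrt_of_sq_le
        rw [← hzy]; exact hbd z hz
      · apply subset_closure; simpa using hqy
    calc ‖G q‖ ^ 2 ≤ B ^ 2 := by gcongr
      _ = _ := Real.sq_sqrt (by positivity)
  have hev : ∀ᶠ y in 𝓝[>] (0:ℝ), ‖G q‖ ^ 2 ≤ C ^ 2 * 4 ^ p * y ^ p := by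
    have hc : Tendsto (fun y : ℝ => Real.exp (-2 * Real.pi * y)) (𝓝[>] 0) (𝓝 1) := by
      have : Continuous (fun y : ℝ => Real.exp (-2 * Real.pi * y)) := by fun_prop
      have := (this.tendsto 0).mono_left (nhdsWithin_le_nhds (s := Set.Ioi 0))
      simpa using this
    filter_upwards [self_mem_nhdsWithin, hc.eventually (lt_mem_nhds hq1)] with y hy hy2
      using hle y hy hy2
  have hlim : Tendsto (fun y : ℝ => C ^ 2 * 4 ^ p * y ^ p) (𝓝[>] 0) (𝓝 0) := by
    have : Continuous (fun y : ℝ => C ^ 2 * 4 ^ p * y ^ p) := by fun_prop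
    have := (this.tendsto 0).mono_left (nhdsWithin_le_nhds (s := Set.Ioi 0))
    simpa [hp.ne'] using this
  have := ge_of_tendsto hlim hev
  have h2 : ‖G q‖ = 0 := by
    have := le_antisymm this (by positivity)
    simpa using this
  simpa using h2

end G3

namespace G3

def Sq (j : ℕ) (q : ℂ) : ℂ := ∑' n : ℕ, (ArithmeticFunction.sigma j (n + 1) : ℂ) * q ^ n

theorem Sq_zero (j : ℕ) : Sq j 0 = 1 := by
  rw [Sq, tsum_eq_single 0]
  · simp
  · intro n hn; simp [hn]

theorem Sq_diff (j : ℕ) : DifferentiableOn ℂ (Sq j) (Metric.ball 0 1) := by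
  intro q hq
  obtain ⟨r, hr1, hr2⟩ := exists_between (show ‖q‖ < 1 by simpa using hq)
  have hr0 : 0 < r := lt_of_le_of_lt (norm_nonneg _) hr1
  have hsum : Summable (fun n : ℕ => (((n + 1 : ℕ) : ℝ) ^ (j + 1) * r ^ (n + 1)) * r⁻¹) := by
    apply Summable.mul_right
    exact (summable_nat_add_iff (f := fun n : ℕ => (n : ℝ) ^ (j + 1) * r ^ n) 1).2
      (summable_pow_mul_geometric_of_norm_lt_one (j + 1) (by
        rw [Real.norm_of_nonneg hr0.le]; exact hr2))
  have h := differentiableOn_tsum_of_summable_norm (U := Metric.ball (0:ℂ) r)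
    (F := fun n q => (ArithmeticFunction.sigma j (n + 1) : ℂ) * q ^ n) hsum
    (fun n => by fun_prop) Metric.isOpen_ball (by
      intro n w hw
      have hw' : ‖w‖ ≤ r := by simpa using (mem_ball_zero_iff.1 hw).le
      rw [norm_mul, norm_pow, Complex.norm_natCast,
        show (((n + 1 : ℕ) : ℝ) ^ (j + 1) * r ^ (n + 1)) * r⁻¹ = ((n + 1 : ℕ) : ℝ) ^ (j + 1) * r ^ n by
          rw [pow_succ r n]; field_simp]
      gcongr
      exact_mod_cast ArithmeticFunction.sigma_le_pow_succ j (n + 1))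
  exact (h.differentiableAt (Metric.isOpen_ball.mem_nhds (by simpa using hr1))).differentiableWithinAt

theorem tsum_Sq (j : ℕ) (q : ℂ) :
    ∑' n : ℕ, (ArithmeticFunction.sigma j (n + 1) : ℂ) * q ^ (n + 1) = q * Sq j q := by
  rw [Sq, ← tsum_mul_left]; congr 1; ext n; ring

def E2q (q : ℂ) : ℂ := 1 - 24 * (q * Sq 1 q)

theorem hasQ_E2 : HasQ E2 E2q := by
  refine ⟨(differentiableOn_const _).sub ((differentiableOn_id.mul (Sq_diff 1)).const_mul _), ?_⟩
  intro z _
  rw [E2, tsum_Sq, E2q]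

theorem hasQ_E4 : HasQ E4 (fun q => 1 + 240 * (q * Sq 3 q)) := by
  refine ⟨(differentiableOn_const _).add ((differentiableOn_id.mul (Sq_diff 3)).const_mul _), ?_⟩
  intro z _
  rw [E4, tsum_Sq]

theorem cube_mem {q : ℂ} (hq : q ∈ Metric.ball (0 : ℂ) 1) : q ^ 3 ∈ Metric.ball (0 : ℂ) 1 := by
  rw [mem_ball_zero_iff] at *
  rw [norm_pow]; exact pow_lt_one₀ (norm_nonneg _) hq (by norm_num)

theorem HasQ.three {f G : ℂ → ℂ} (h : HasQ f G) :
    HasQ (fun z => f (3 * z)) (fun q => G (q ^ 3)) := by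
  refine ⟨h.1.comp (by fun_prop) (fun q hq => cube_mem hq), fun z hz => ?_⟩
  simp only [h.2 _ (three_mem hz), qexp_three]

theorem E2_S {z : ℂ} (hz : z ∈ UHP) :
    E2 (-1 / z) = z ^ 2 * E2 z + 6 * z / (Real.pi * Complex.I) := by
  have key : ∀ t : UpperHalfPlane, E2 t = EisensteinSeries.E2 t := by
    intro t
    rw [EisensteinSeries.E2_eq_tsum_cexp, E2]
    rw [tsum_pnat_eq_tsum_succ (f := fun n : ℕ => (ArithmeticFunction.sigma 1 n : ℂ) * cexp (2 * Real.pi * Complex.I * t) ^ n)]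
    simp [qexp]
  have h := EisensteinSeries.G2_S_transform ⟨z, hz⟩
  have h1 := key ⟨z, hz⟩
  have h2 := key (ModularGroup.S • ⟨z, hz⟩)
  have h3 : ((ModularGroup.S • (⟨z, hz⟩ : UpperHalfPlane) : UpperHalfPlane) : ℂ) = -1 / z := by
    rw [UpperHalfPlane.modular_S_smul]; simp; rw [neg_div, one_div]
  rw [h3] at h2
  rw [h2]
  change E2 z = _ at h1
  rw [h1, EisensteinSeries.E2]
  simp only [Pi.smul_apply, smul_eq_mul]
  rw [h]
  have hz0 := uhp_ne hz
  have hpi : (Real.pi : ℂ) ≠ 0 := by exact_mod_cast Real.pi_ne_zero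
  have hI := Complex.I_ne_zero
  rw [riemannZeta_two]
  change _ = z ^ 2 * (_ * ((z ^ 2)⁻¹ * _ - _ / z)) + _
  field_simp
  ring_nf
  simp

open scoped ModularForm MatrixGroups in
theorem E4_S {z : ℂ} (hz : z ∈ UHP) : E4 (-1 / z) = z ^ 4 * E4 z := by
  have key : ∀ t : UpperHalfPlane, E4 t = ModularForm.E₄ t := by
    intro t
    rw [EisensteinSeries.q_expansion_bernoulli _ (by decide), E4]
    have hb : bernoulli 4 = -1/30 := by
      rw [bernoulli_eq_bernoulli'_of_ne_one (by norm_num), bernoulli'_four]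
    have := tsum_pnat_eq_tsum_succ (f := fun n : ℕ => (ArithmeticFunction.sigma 3 n : ℂ) * cexp (2 * Real.pi * Complex.I * t) ^ n)
    simp only [zpow_natCast]
    rw [show (4 - 1 : ℕ) = 3 from rfl, this, hb]
    simp only [qexp]
    push_cast; ring
  have h := SlashInvariantForm.slash_S_apply (ModularForm.E₄ : UpperHalfPlane → ℂ) 4 ⟨z, hz⟩
  have h1 := key ⟨z, hz⟩
  have h3 : ((ModularGroup.S • (⟨z, hz⟩ : UpperHalfPlane) : UpperHalfPlane) : ℂ) = -1 / z := by
    rw [UpperHalfPlane.modular_S_smul]; simp; rw [neg_div, one_div]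
  have h2 := key (ModularGroup.S • ⟨z, hz⟩)
  rw [h3] at h2
  change E4 z = _ at h1
  rw [h1, h2]
  have h5 : ((ModularForm.E₄ : UpperHalfPlane → ℂ) ∣[(4:ℤ)] ModularGroup.S) = ModularForm.E₄ := by
    have := SlashInvariantForm.slash_action_eqn ModularForm.E₄ (ModularGroup.S : GL (Fin 2) ℝ) ⟨ModularGroup.S, rfl⟩
    exact this
  have h6 : (ModularGroup.S • (⟨z, hz⟩ : UpperHalfPlane)) = UpperHalfPlane.mk (-(⟨z, hz⟩ : UpperHalfPlane) : ℂ)⁻¹ (UpperHalfPlane.im_inv_neg_coe_pos _) := UpperHalfPlane.modular_S_smul _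
  rw [h5, ← h6] at h
  rw [h]
  change _ = z ^ 4 * (_ * z ^ (-4 : ℤ))
  have hz0 := uhp_ne hz
  field_simp

end G3

namespace G3

def prq (q : ℂ) : ℂ := ∏' n : ℕ, (1 - q ^ (n + 1))

theorem prq_diff : DifferentiableOn ℂ prq (Metric.ball 0 1) :=
  ModularForm.differentiableOn_tprod_one_sub_pow

theorem prq_zero : prq 0 = 1 := by simp [prq]

theorem prq_ne {q : ℂ} (hq : q ∈ Metric.ball (0:ℂ) 1) : prq q ≠ 0 := by
  by_cases h0 : q = 0
  · rw [h0, prq_zero]; exact one_ne_zero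
  obtain ⟨z, hz, rfl⟩ := qexp_surj hq h0
  have := ModularForm.eta_tprod_ne_zero (z := z) hz
  simp only [ModularForm.eta_q_eq_pow] at this
  exact this

theorem eta_eq (z : ℂ) : ModularForm.eta z = cexp (2 * Real.pi * I * z / 24) * prq (qexp z) := by
  rw [ModularForm.eta]
  simp only [ModularForm.eta_q_eq_pow]
  rw [Function.Periodic.qParam, prq]; simp [qexp]

def Wt (j : ℕ) (z : ℂ) : ℂ := ModularForm.eta z ^ j * ModularForm.eta (3 * z) ^ j

theorem tprod_eq (j : ℕ) {z : ℂ} (hz : z ∈ UHP) :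
    ∏' n : ℕ, ((1 - qexp z ^ (n + 1)) ^ j * (1 - qexp z ^ (3 * (n + 1))) ^ j)
      = prq (qexp z) ^ j * prq (qexp z ^ 3) ^ j := by
  have h1 := ModularForm.multipliable_one_sub_pow (mem_ball_zero_iff.1 (qexp_mem hz))
  have h2 := ModularForm.multipliable_one_sub_pow (mem_ball_zero_iff.1 (cube_mem (qexp_mem hz)))
  simp only [pow_mul (qexp z) 3]
  rw [Multipliable.tprod_mul (h1.pow j) (h2.pow j), h1.tprod_pow, h2.tprod_pow, prq, prq]

theorem Wt_eq (j : ℕ) {z : ℂ} (_ : z ∈ UHP) :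
    Wt j z = cexp (Real.pi * I * j * z / 3) * (prq (qexp z) ^ j * prq (qexp z ^ 3) ^ j) := by
  rw [Wt, eta_eq, eta_eq, mul_pow, mul_pow, qexp_three, ← Complex.exp_nat_mul, ← Complex.exp_nat_mul]
  rw [show (Real.pi * I * j * z / 3 : ℂ) = j * (2 * Real.pi * I * z / 24) + j * (2 * Real.pi * I * (3 * z) / 24) by ring,
    Complex.exp_add]
  ring

theorem M6_Wt {z : ℂ} (hz : z ∈ UHP) : M6fun z = Wt 6 z := by
  rw [M6fun, tprod_eq 6 hz, Wt_eq 6 hz, qexp]; congr 2; push_cast; ring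

theorem P_Wt (k : ℕ) {z : ℂ} (hz : z ∈ UHP) : Pfun3 k z = Wt (3 * k) z := by
  rw [Pfun3, tprod_eq _ hz, Wt_eq _ hz]; congr 2; push_cast; ring

theorem E2_eq (t : UpperHalfPlane) : E2 t = EisensteinSeries.E2 t := by
  rw [EisensteinSeries.E2_eq_tsum_cexp, E2]
  rw [tsum_pnat_eq_tsum_succ (f := fun n : ℕ => (ArithmeticFunction.sigma 1 n : ℂ) * cexp (2 * Real.pi * Complex.I * t) ^ n)]
  simp [qexp]

theorem eta_deriv {z : ℂ} (hz : z ∈ UHP) :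
    HasDerivAt ModularForm.eta (Real.pi * I / 12 * E2 z * ModularForm.eta z) z := by
  have h := ModularForm.logDeriv_eta_eq_E2 ⟨z, hz⟩
  rw [← E2_eq] at h
  change logDeriv ModularForm.eta z = _ * E2 z at h
  have h1 := (ModularForm.differentiableAt_eta_of_mem_upperHalfPlaneSet (z := z) hz).hasDerivAt
  have h2 := ModularForm.eta_ne_zero (z := z) hz
  rw [logDeriv_apply, div_eq_iff h2] at h
  rwa [h] at h1

theorem Wt_ne (j : ℕ) {z : ℂ} (hz : z ∈ UHP) : Wt j z ≠ 0 :=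
  mul_ne_zero (pow_ne_zero _ (ModularForm.eta_ne_zero hz))
    (pow_ne_zero _ (ModularForm.eta_ne_zero (three_mem hz)))

theorem Wt_deriv (j : ℕ) {z : ℂ} (hz : z ∈ UHP) :
    HasDerivAt (Wt j) (2 * Real.pi * I * ((j / 6) * M2star3 z * Wt j z)) z := by
  have h1 := (eta_deriv hz)
  have h2 : HasDerivAt (fun z => ModularForm.eta (3 * z)) _ z :=
    (eta_deriv (three_mem hz)).comp z ((hasDerivAt_id z).const_mul 3)
  have h3 := (h1.pow j).mul (h2.pow j)
  refine h3.congr_deriv ?_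
  simp only [Wt, M2star3, Pi.pow_apply]
  cases j with
  | zero => simp
  | succ n => simp only [Nat.add_sub_cancel, pow_succ]; push_cast; ring

theorem M6_ne {z : ℂ} (hz : z ∈ UHP) : M6fun z ≠ 0 := by rw [M6_Wt hz]; exact Wt_ne 6 hz
theorem P_ne (k : ℕ) {z : ℂ} (hz : z ∈ UHP) : Pfun3 k z ≠ 0 := by
  rw [P_Wt k hz]; exact Wt_ne _ hz

theorem M6_deriv {z : ℂ} (hz : z ∈ UHP) :
    HasDerivAt M6fun (2 * Real.pi * I * (M2star3 z * M6fun z)) z := by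
  rw [M6_Wt hz]
  refine ((Wt_deriv 6 hz).congr_of_eventuallyEq ?_).congr_deriv (by push_cast; ring)
  filter_upwards [uhp_open.mem_nhds hz] with w hw using M6_Wt hw

theorem P_deriv (k : ℕ) {z : ℂ} (hz : z ∈ UHP) :
    HasDerivAt (Pfun3 k) (2 * Real.pi * I * ((k / 2) * M2star3 z * Pfun3 k z)) z := by
  rw [P_Wt k hz]
  refine ((Wt_deriv (3 * k) hz).congr_of_eventuallyEq ?_).congr_deriv (by push_cast; ring)
  filter_upwards [uhp_open.mem_nhds hz] with w hw using P_Wt k hw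

def mq (q : ℂ) : ℂ := prq q ^ 6 * prq (q ^ 3) ^ 6

theorem mq_diff : DifferentiableOn ℂ mq (Metric.ball 0 1) :=
  (prq_diff.pow 6).mul ((prq_diff.comp (by fun_prop) (fun _ hq => cube_mem hq)).pow 6)

theorem mq_ne {q : ℂ} (hq : q ∈ Metric.ball (0:ℂ) 1) : mq q ≠ 0 :=
  mul_ne_zero (pow_ne_zero _ (prq_ne hq)) (pow_ne_zero _ (prq_ne (cube_mem hq)))

theorem mq_zero : mq 0 = 1 := by simp [mq, prq_zero]

theorem hasQ_M6 : HasQ M6fun (fun q => q * mq q) :=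
  ⟨differentiableOn_id.mul mq_diff, fun z hz => by rw [M6fun, tprod_eq 6 hz]; rfl⟩

theorem D_M6 {z : ℂ} (hz : z ∈ UHP) : Dd M6fun z = M2star3 z * M6fun z := by
  rw [Dd, (M6_deriv hz).deriv, mul_div_cancel_left₀ _ tpi_ne]

def phq (q : ℂ) : ℂ := (3 * E2q (q ^ 3) + E2q q) / 4
def M2q (q : ℂ) : ℂ := (3 * E2q (q ^ 3) - E2q q) / 2

theorem hasQ_ph : HasQ M2star3 phq := by
  have h := ((hasQ_E2.three.cmul 3).add hasQ_E2).cmul (1/4)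
  refine ⟨h.1.congr fun q _ => by rw [phq]; ring, fun z hz => ?_⟩
  have := h.2 z hz
  rw [M2star3, phq]; simp only at this; linear_combination this

theorem hasQ_M2 : HasQ M2minus3 M2q := by
  have h := ((hasQ_E2.three.cmul 3).sub hasQ_E2).cmul (1/2)
  refine ⟨h.1.congr fun q _ => by rw [M2q]; ring, fun z hz => ?_⟩
  have := h.2 z hz
  rw [M2minus3, M2q]; simp only at this; linear_combination this

theorem phq_zero : phq 0 = 1 := by simp [phq, E2q]; norm_num
theorem M2q_zero : M2q 0 = 1 := by simp [M2q, E2q]; norm_num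

theorem E2q_deriv : HasDerivAt E2q (-24) 0 := by
  have h1 : HasDerivAt (Sq 1) (deriv (Sq 1) 0) 0 :=
    ((Sq_diff 1).differentiableAt (Metric.isOpen_ball.mem_nhds (by simp))).hasDerivAt
  have h2 := (((hasDerivAt_id (0:ℂ)).mul h1).const_mul 24).const_sub 1
  refine h2.congr_deriv ?_
  simp [Sq_zero]

theorem E2q3_deriv : HasDerivAt (fun q => E2q (q ^ 3)) 0 0 := by
  have h : HasDerivAt E2q (-24) ((0:ℂ)^3) := by simpa using E2q_deriv
  have := h.comp (0:ℂ) (hasDerivAt_pow 3 (0:ℂ))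
  exact this.congr_deriv (by simp)

theorem phq_deriv : HasDerivAt phq (-6) 0 := by
  refine ((((E2q3_deriv).const_mul 3).add E2q_deriv).div_const 4).congr_deriv (by norm_num)
theorem M2q_deriv : HasDerivAt M2q 12 0 := by
  refine ((((E2q3_deriv).const_mul 3).sub E2q_deriv).div_const 2).congr_deriv (by norm_num)

/-- modular objects -/
def IsM (ε : ℂ) (w : ℕ) (f : ℂ → ℂ) : Prop :=
  (∃ G, HasQ f G) ∧ ∀ z ∈ UHP, f (-1 / (3 * z)) = ε * ((Real.sqrt 3 : ℂ) * z) ^ w * f z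

theorem s3 : (Real.sqrt 3 : ℂ) ^ 2 = 3 := by
  exact_mod_cast Real.sq_sqrt (show (0:ℝ) ≤ 3 by norm_num)
theorem s3_ne : (Real.sqrt 3 : ℂ) ≠ 0 := by
  intro h; have := s3; rw [h] at this; norm_num at this

theorem E2_S3 {z : ℂ} (hz : z ∈ UHP) :
    E2 (3 * (-1 / (3 * z))) = z ^ 2 * E2 z + 6 * z / (Real.pi * I) ∧
    E2 (-1 / (3 * z)) = (3 * z) ^ 2 * E2 (3 * z) + 6 * (3 * z) / (Real.pi * I) := by
  refine ⟨?_, E2_S (three_mem hz)⟩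
  rw [show (3 * (-1 / (3 * z)) : ℂ) = -1 / z by have := uhp_ne hz; field_simp]
  exact E2_S hz

theorem ph_S {z : ℂ} (hz : z ∈ UHP) :
    M2star3 (-1 / (3 * z)) = 3 * z ^ 2 * (M2star3 z + 3 / (Real.pi * I * z)) := by
  have hz0 := uhp_ne hz
  have hpi : (Real.pi : ℂ) ≠ 0 := by exact_mod_cast Real.pi_ne_zero
  have hI := Complex.I_ne_zero
  obtain ⟨h1, h2⟩ := E2_S3 hz
  rw [M2star3, h1, h2, M2star3]; field_simp; ring

theorem M2_isM : IsM (-1) 2 M2minus3 := by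
  refine ⟨⟨_, hasQ_M2⟩, fun z hz => ?_⟩
  obtain ⟨h1, h2⟩ := E2_S3 hz
  rw [M2minus3, h1, h2, M2minus3, mul_pow (Real.sqrt 3 : ℂ), s3]; ring

theorem M4_isM : IsM 1 4 M4plus3 := by
  refine ⟨⟨fun q => (9 * (1 + 240 * (q ^ 3 * Sq 3 (q ^ 3))) + (1 + 240 * (q * Sq 3 q))) / 10, ?_⟩, ?_⟩
  · have h := ((hasQ_E4.three.cmul 9).add hasQ_E4).cmul (1/10)
    refine ⟨h.1.congr fun q _ => by ring, fun z hz => ?_⟩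
    have := h.2 z hz
    rw [M4plus3]; simp only at this; linear_combination this
  · intro z hz
    have h2 := E4_S (three_mem hz)
    have h1 := E4_S hz
    rw [M4plus3, h2, show (3 * (-1 / (3 * z)) : ℂ) = -1 / z by have := uhp_ne hz; field_simp, h1, M4plus3,
      mul_pow (Real.sqrt 3 : ℂ), show (Real.sqrt 3 : ℂ) ^ 4 = ((Real.sqrt 3 : ℂ) ^ 2) ^ 2 by ring, s3]; ring

theorem IsM.mul {ε ε' f g} {w w' : ℕ} (hf : IsM ε w f) (hg : IsM ε' w' g) :
    IsM (ε * ε') (w + w') (fun z => f z * g z) := by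
  obtain ⟨⟨F, hF⟩, h⟩ := hf
  obtain ⟨⟨G, hG⟩, h'⟩ := hg
  exact ⟨⟨_, hF.mul hG⟩, fun z hz => by simp only [h z hz, h' z hz]; ring⟩

theorem IsM.add {ε f g} {w : ℕ} (hf : IsM ε w f) (hg : IsM ε w g) :
    IsM ε w (fun z => f z + g z) := by
  obtain ⟨⟨F, hF⟩, h⟩ := hf
  obtain ⟨⟨G, hG⟩, h'⟩ := hg
  exact ⟨⟨_, hF.add hG⟩, fun z hz => by simp only [h z hz, h' z hz]; ring⟩

theorem IsM.sub {ε f g} {w : ℕ} (hf : IsM ε w f) (hg : IsM ε w g) :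
    IsM ε w (fun z => f z - g z) := by
  obtain ⟨⟨F, hF⟩, h⟩ := hf
  obtain ⟨⟨G, hG⟩, h'⟩ := hg
  exact ⟨⟨_, hF.sub hG⟩, fun z hz => by simp only [h z hz, h' z hz]; ring⟩

theorem IsM.cmul {ε f} {w : ℕ} (hf : IsM ε w f) (c : ℂ) : IsM ε w (fun z => c * f z) := by
  obtain ⟨⟨F, hF⟩, h⟩ := hf
  exact ⟨⟨_, hF.cmul c⟩, fun z hz => by simp only [h z hz]; ring⟩

theorem IsM.pow {ε f} {w : ℕ} (hf : IsM ε w f) (n : ℕ) :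
    IsM (ε ^ n) (w * n) (fun z => f z ^ n) := by
  obtain ⟨⟨F, hF⟩, h⟩ := hf
  exact ⟨⟨_, hF.pow n⟩, fun z hz => by simp only [h z hz, mul_pow, ← pow_mul]⟩

theorem IsM.congr {ε ε' f g} {w w' : ℕ} (hf : IsM ε w f) (h1 : ε = ε') (h2 : w = w')
    (h : ∀ z ∈ UHP, f z = g z) : IsM ε' w' g := by
  subst h1 h2
  obtain ⟨⟨F, hF⟩, h'⟩ := hf
  exact ⟨⟨F, hF.1, fun z hz => by rw [← h z hz, hF.2 z hz]⟩, fun z hz => by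
    rw [← h z hz, ← h _ (S_mem hz), h' z hz]⟩

theorem hasDerivAt_S {z : ℂ} (hz : z ∈ UHP) :
    HasDerivAt (fun z : ℂ => -1 / (3 * z)) (1 / (3 * z ^ 2)) z := by
  have hz0 := uhp_ne hz
  have h := ((hasDerivAt_inv hz0).const_mul (-1/3))
  refine (h.congr_of_eventuallyEq ?_).congr_deriv (by field_simp)
  filter_upwards with w
  rw [div_eq_mul_inv, mul_inv]; ring

/-- Serre derivative -/
def Se (w : ℕ) (f : ℂ → ℂ) (z : ℂ) : ℂ := Dd f z - (w / 6) * M2star3 z * f z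

theorem IsM.Se {ε f} {w : ℕ} (hf : IsM ε w f) : IsM ε (w + 2) (Se w f) := by
  obtain ⟨⟨F, hF⟩, h⟩ := hf
  refine ⟨⟨_, hF.D.sub ((hasQ_ph.cmul (w/6)).mul hF)⟩, fun z hz => ?_⟩
  have hz0 := uhp_ne hz
  have hpi : (Real.pi : ℂ) ≠ 0 := by exact_mod_cast Real.pi_ne_zero
  have hI := Complex.I_ne_zero
  have h1 := (hF.hasDerivAt (S_mem hz)).comp z (hasDerivAt_S hz)
  have h2 : HasDerivAt (fun z => ε * ((Real.sqrt 3 : ℂ) * z) ^ w * f z) _ z :=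
    ((((hasDerivAt_id z).const_mul (Real.sqrt 3 : ℂ)).pow w).const_mul ε).mul (hF.hasDerivAt hz)
  have h3 : (f ∘ fun z : ℂ => -1 / (3 * z)) =ᶠ[𝓝 z] (fun z => ε * ((Real.sqrt 3 : ℂ) * z) ^ w * f z) := by
    filter_upwards [uhp_open.mem_nhds hz] with u hu using h u hu
  have h4 := h1.unique (h2.congr_of_eventuallyEq h3)
  have h5 : Dd f (-1 / (3 * z)) = ε * ((Real.sqrt 3 : ℂ) * z) ^ w * (3 * z ^ 2) *
      (Dd f z + w / (2 * Real.pi * I * z) * f z) := by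
    have h6 : (w : ℂ) * ((Real.sqrt 3 : ℂ) * z) ^ (w - 1) * Real.sqrt 3 = w * ((Real.sqrt 3 : ℂ) * z) ^ w / z := by
      cases w with
      | zero => simp
      | succ n => simp only [Nat.add_sub_cancel, pow_succ]; field_simp
    simp only [id, mul_one, Pi.pow_apply] at h4
    rw [h6] at h4
    field_simp at h4 ⊢
    linear_combination h4
  rw [G3.Se, h5, h z hz, ph_S hz, G3.Se, pow_add, mul_pow _ _ 2, s3]
  field_simp
  ring

end G3

namespace G3

theorem uhp_convex : Convex ℝ UHP := by
  have : UHP = {z : ℂ | (0:ℝ) < Complex.imLm z} := rfl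
  rw [this]
  exact convex_halfSpace_gt (LinearMap.isLinear _) 0

theorem M6_isM : IsM (-1) 6 M6fun := by
  refine ⟨⟨_, hasQ_M6⟩, ?_⟩
  set K : ℂ → ℂ := fun z => M6fun (-1 / (3 * z)) / (((Real.sqrt 3 : ℂ) * z) ^ 6 * M6fun z) with hK
  have hder : ∀ z ∈ UHP, HasDerivAt K 0 z := by
    intro z hz
    have hz0 := uhp_ne hz
    have hpi : (Real.pi : ℂ) ≠ 0 := by exact_mod_cast Real.pi_ne_zero
    have hI := Complex.I_ne_zero
    have hs := s3_ne
    have hm := M6_ne hz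
    have h1 : HasDerivAt (fun z => M6fun (-1 / (3 * z))) _ z :=
      HasDerivAt.comp (h₂ := M6fun) z (M6_deriv (S_mem hz)) (hasDerivAt_S hz)
    have h2 : HasDerivAt (fun z => ((Real.sqrt 3 : ℂ) * z) ^ 6 * M6fun z) _ z :=
      (((hasDerivAt_id z).const_mul (Real.sqrt 3 : ℂ)).pow 6).mul (M6_deriv hz)
    have hne : ((Real.sqrt 3 : ℂ) * z) ^ 6 * M6fun z ≠ 0 :=
      mul_ne_zero (pow_ne_zero _ (mul_ne_zero hs hz0)) hm
    refine (h1.div h2 hne).congr_deriv ?_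
    rw [ph_S hz]
    rw [div_eq_zero_iff]; left
    simp only [id, mul_one, Pi.pow_apply]
    field_simp
    ring
  have hconst : ∀ z ∈ UHP, ∀ w ∈ UHP, K z = K w := by
    intro z hz w hw
    have := uhp_convex.norm_image_sub_le_of_norm_hasDerivWithin_le (f := K) (f' := fun _ => 0) (C := 0)
      (fun x hx => (hder x hx).hasDerivWithinAt) (by simp) hw hz
    simpa [sub_eq_zero] using this
  have hz1 : I / (Real.sqrt 3 : ℂ) ∈ UHP := by
    change 0 < (I / (Real.sqrt 3 : ℂ)).im
    rw [Complex.div_ofReal_im]; simp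
  have hK1 : K (I / (Real.sqrt 3 : ℂ)) = -1 := by
    have hs := s3_ne
    have hI := Complex.I_ne_zero
    have e1 : (-1 / (3 * (I / (Real.sqrt 3 : ℂ)))) = I / (Real.sqrt 3 : ℂ) := by
      field_simp
      rw [I_sq, s3]; norm_num
    have hm := M6_ne hz1
    rw [hK]; simp only
    rw [e1, mul_div_cancel₀ _ hs, show I ^ 6 = -1 by rw [show (6:ℕ) = 2 * 3 by norm_num, pow_mul, I_sq]; norm_num]
    field_simp
  intro z hz
  have := hconst z hz _ hz1
  rw [hK1, hK] at this
  simp only at this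
  have hne : ((Real.sqrt 3 : ℂ) * z) ^ 6 * M6fun z ≠ 0 :=
      mul_ne_zero (pow_ne_zero _ (mul_ne_zero s3_ne (uhp_ne hz))) (M6_ne hz)
  rw [div_eq_iff hne] at this
  rw [this]; ring

theorem lemV {ε f G} {w n : ℕ} (hf : IsM ε w f) (hε : ‖ε‖ = 1)
    (hG : DifferentiableOn ℂ G (Metric.ball 0 1))
    (hfG : ∀ z ∈ UHP, f z = qexp z ^ n * G (qexp z)) (hw : w < 6 * n) :
    ∀ z ∈ UHP, f z = 0 := by
  have hQ : HasQ (fun z => f z / M6fun z ^ n) (fun q => G q / mq q ^ n) := by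
    refine ⟨hG.div (mq_diff.pow n) (fun q hq => pow_ne_zero _ (mq_ne hq)), fun z hz => ?_⟩
    simp only [hfG z hz, hasQ_M6.2 z hz, mul_pow]
    have := qexp_ne z
    have h2 := mq_ne (qexp_mem hz)
    field_simp
  have hv := vanish0 hQ (p := 6 * n - w) (by omega) (by
    intro z hz
    have hne : ‖(Real.sqrt 3 : ℂ) * z‖ ≠ 0 := norm_ne_zero_iff.2 (mul_ne_zero s3_ne (uhp_ne hz))
    have hm : ‖M6fun z‖ ≠ 0 := norm_ne_zero_iff.2 (M6_ne hz)
    rw [hf.2 z hz, M6_isM.2 z hz]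
    simp only [norm_div, norm_mul, norm_pow, hε, norm_neg, norm_one, one_mul]
    simp only [← norm_mul]
    rw [mul_pow, ← pow_mul, show 6 * n = (6 * n - w) + w by omega, pow_add]
    rw [show 6 * n - w + w - w = 6 * n - w by omega]
    field_simp)
  intro z hz
  have h1 := hQ.2 z hz
  simp only at h1
  rw [hv _ (qexp_mem hz), div_eq_zero_iff] at h1
  exact h1.resolve_right (pow_ne_zero _ (M6_ne hz))

theorem divq2 {G : ℂ → ℂ} (h : DifferentiableOn ℂ G (Metric.ball 0 1)) (h0 : G 0 = 0)
    (h1 : HasDerivAt G 0 0) :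
    ∃ G2 : ℂ → ℂ, DifferentiableOn ℂ G2 (Metric.ball 0 1) ∧ ∀ q, G q = q ^ 2 * G2 q := by
  obtain ⟨A, hA, hA2⟩ := div_q h h0
  have hA0 : A 0 = 0 := by
    have h3 : HasDerivAt A (deriv A 0) 0 :=
      (hA.differentiableAt (Metric.isOpen_ball.mem_nhds (by simp))).hasDerivAt
    have h4 := (hasDerivAt_id (0:ℂ)).mul h3
    have h5 : G = id * A := by ext q; rw [hA2 q]; rfl
    rw [← h5] at h4
    have := h4.unique h1
    simpa using this
  obtain ⟨B, hB, hB2⟩ := div_q hA hA0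
  exact ⟨B, hB, fun q => by rw [hA2, hB2]; ring⟩

/-- vanishing with one condition -/
theorem lemV1 {ε f G} {w : ℕ} (hf : IsM ε w f) (hε : ‖ε‖ = 1) (hG : HasQ f G) (h0 : G 0 = 0)
    (hw : w < 6) : ∀ z ∈ UHP, f z = 0 := by
  obtain ⟨A, hA, hA2⟩ := div_q hG.1 h0
  exact lemV (n := 1) hf hε hA (fun z hz => by rw [hG.2 z hz, hA2, pow_one]) (by omega)

theorem lemV2 {ε f G} {w : ℕ} (hf : IsM ε w f) (hε : ‖ε‖ = 1) (hG : HasQ f G) (h0 : G 0 = 0)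
    (h1 : HasDerivAt G 0 0) (hw : w < 12) : ∀ z ∈ UHP, f z = 0 := by
  obtain ⟨A, hA, hA2⟩ := divq2 hG.1 h0 h1
  exact lemV (n := 2) hf hε hA (fun z hz => by rw [hG.2 z hz, hA2]) (by omega)

theorem Dq_deriv {G : ℂ → ℂ} (h : DifferentiableOn ℂ G (Metric.ball 0 1)) {a : ℂ}
    (ha : HasDerivAt G a 0) : HasDerivAt (fun q => q * deriv G q) a 0 := by
  have h3 : HasDerivAt (deriv G) (deriv (deriv G) 0) 0 :=
    ((h.deriv Metric.isOpen_ball).differentiableAt (Metric.isOpen_ball.mem_nhds (by simp))).hasDerivAt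
  have h4 : HasDerivAt (fun q => q * deriv G q) _ 0 := (hasDerivAt_id (0:ℂ)).mul h3
  refine h4.congr_deriv ?_
  rw [ha.deriv]; simp

theorem M4_eq {z : ℂ} (hz : z ∈ UHP) : M4plus3 z = M2minus3 z ^ 2 := by
  have h4 : HasQ M4plus3 (fun q => (9 * (1 + 240 * (q ^ 3 * Sq 3 (q ^ 3))) + (1 + 240 * (q * Sq 3 q))) / 10) := by
    have h := ((hasQ_E4.three.cmul 9).add hasQ_E4).cmul (1/10)
    refine ⟨h.1.congr fun q _ => by ring, fun z hz => ?_⟩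
    have := h.2 z hz
    rw [M4plus3]; simp only at this; linear_combination this
  have h := lemV1 (M4_isM.sub ((M2_isM.pow 2).congr (by norm_num) rfl (fun _ _ => rfl))) (by simp)
    (h4.sub (hasQ_M2.pow 2)) (by simp [M2q_zero]; norm_num) (by norm_num) z hz
  exact sub_eq_zero.1 h

theorem D_ph {z : ℂ} (hz : z ∈ UHP) : Dd M2star3 z = (M2star3 z ^ 2 - M2minus3 z ^ 2) / 6 := by
  have hQ := (hasQ_ph.D.sub ((hasQ_ph.pow 2).cmul (1/6))).add ((hasQ_M2.pow 2).cmul (1/6))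
  have hM : IsM 1 4 (fun z => Dd M2star3 z - 1/6 * M2star3 z ^ 2) := by
    refine ⟨⟨_, hasQ_ph.D.sub ((hasQ_ph.pow 2).cmul (1/6))⟩, fun z hz => ?_⟩
    have hz0 := uhp_ne hz
    have hpi : (Real.pi : ℂ) ≠ 0 := by exact_mod_cast Real.pi_ne_zero
    have hI := Complex.I_ne_zero
    have h1 := (hasQ_ph.hasDerivAt (S_mem hz)).comp z (hasDerivAt_S hz)
    have h2 : HasDerivAt (fun z => 3 * z ^ 2 * M2star3 z + 9 / (Real.pi * I) * z) _ z :=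
      (((hasDerivAt_pow 2 z).const_mul 3).mul (hasQ_ph.hasDerivAt hz)).add
        ((hasDerivAt_id z).const_mul (9 / (Real.pi * I)))
    have h3 : (M2star3 ∘ fun z : ℂ => -1 / (3 * z)) =ᶠ[𝓝 z] (fun z => 3 * z ^ 2 * M2star3 z + 9 / (Real.pi * I) * z) := by
      filter_upwards [uhp_open.mem_nhds hz] with u hu
      have hu0 := uhp_ne hu
      simp only [Function.comp]
      rw [ph_S hu]; field_simp; ring
    have h4 := h1.unique (h2.congr_of_eventuallyEq h3)
    have h5 : Dd M2star3 (-1 / (3 * z)) = 9 * z ^ 4 * Dd M2star3 z + 9 * z ^ 3 / (Real.pi * I) * M2star3 z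
        + 27 * z ^ 2 / (2 * (Real.pi * I) ^ 2) := by
      simp only [mul_one, Nat.cast_ofNat] at h4
      field_simp at h4 ⊢
      linear_combination h4
    simp only [ph_S hz, h5]
    rw [mul_pow (Real.sqrt 3 : ℂ), show (Real.sqrt 3 : ℂ) ^ 4 = ((Real.sqrt 3 : ℂ) ^ 2) ^ 2 by ring, s3]
    field_simp
    ring
  have h := lemV1 (hM.add (((M2_isM.pow 2).cmul (1/6)).congr (by norm_num) rfl (fun _ _ => rfl))) (by simp)
    hQ (by simp [M2q_zero, phq_zero]) (by norm_num) z hz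
  linear_combination h

def Nn : ℂ → ℂ := Se 2 M2minus3
def Nq (q : ℂ) : ℂ := q * deriv M2q q - 1/3 * phq q * M2q q

theorem N_isM : IsM (-1) 4 Nn := M2_isM.Se

theorem D_M2 (z : ℂ) : Dd M2minus3 z = Nn z + M2star3 z * M2minus3 z / 3 := by
  rw [Nn, Se]; push_cast; ring

theorem hasQ_N : HasQ Nn Nq := by
  have h := hasQ_M2.D.sub ((hasQ_ph.cmul (1/3)).mul hasQ_M2)
  refine ⟨h.1, fun z hz => ?_⟩
  have := h.2 z hz
  simp only at this
  rw [Nq, ← this, Nn, Se]; push_cast; ring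

theorem Nq_zero : Nq 0 = -1/3 := by simp [Nq, phq_zero, M2q_zero]; norm_num
theorem Nq_deriv : HasDerivAt Nq 10 0 := by
  have h := (Dq_deriv hasQ_M2.1 M2q_deriv).sub ((phq_deriv.const_mul (1/3)).mul M2q_deriv)
  refine h.congr_deriv ?_
  rw [phq_zero, M2q_zero]; norm_num

theorem M6q_deriv : HasDerivAt (fun q => q * mq q) 1 0 := by
  have h3 : HasDerivAt mq (deriv mq 0) 0 :=
      (mq_diff.differentiableAt (Metric.isOpen_ball.mem_nhds (by simp))).hasDerivAt
  have h4 : HasDerivAt (fun q => q * mq q) _ 0 := (hasDerivAt_id (0:ℂ)).mul h3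
  exact h4.congr_deriv (by simp [mq_zero])

theorem N_sq {z : ℂ} (hz : z ∈ UHP) :
    Nn z ^ 2 = M2minus3 z ^ 4 / 9 - 12 * (M2minus3 z * M6fun z) := by
  have hQ := (hasQ_N.pow 2).sub (((hasQ_M2.pow 4).cmul (1/9)).sub ((hasQ_M2.mul hasQ_M6).cmul 12))
  have hM := ((N_isM.pow 2).congr (ε' := 1) (by norm_num) rfl (fun _ _ => rfl)).sub
    ((((M2_isM.pow 4).cmul (1/9)).congr (ε' := 1) (by norm_num) rfl (fun _ _ => rfl)).sub
      (((M2_isM.mul M6_isM).cmul 12).congr (by norm_num) rfl (fun _ _ => rfl)))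
  have h := lemV2 hM (by simp) hQ (by simp [M2q_zero, Nq_zero]; norm_num) (by
    have := (Nq_deriv.pow 2).sub (((M2q_deriv.pow 4).const_mul (1/9)).sub ((M2q_deriv.mul M6q_deriv).const_mul 12))
    refine this.congr_deriv ?_
    simp [M2q_zero, Nq_zero]; norm_num) (by norm_num) z hz
  linear_combination h

theorem D_N {z : ℂ} (hz : z ∈ UHP) :
    Dd Nn z = 2/3 * M2star3 z * Nn z + 2/9 * M2minus3 z ^ 3 - 6 * M6fun z := by
  have hQ := (hasQ_N.D.sub ((hasQ_ph.cmul (2/3)).mul hasQ_N)).sub (((hasQ_M2.pow 3).cmul (2/9)).sub (hasQ_M6.cmul 6))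
  have hM := (N_isM.Se).sub
    ((((M2_isM.pow 3).cmul (2/9)).congr (ε' := -1) (by norm_num) rfl (fun _ _ => rfl)).sub
      (M6_isM.cmul 6))
  have hM' := hM.congr rfl rfl (g := fun z => Dd Nn z - 2/3 * M2star3 z * Nn z - (2/9 * M2minus3 z ^ 3 - 6 * M6fun z)) (fun z _ => by
    simp only [Se]; push_cast; ring)
  have h := lemV2 hM' (by simp) hQ (by simp [M2q_zero, Nq_zero, phq_zero]; norm_num) (by
    have := ((Dq_deriv hasQ_N.1 Nq_deriv).sub ((phq_deriv.const_mul (2/3)).mul Nq_deriv)).sub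
      (((M2q_deriv.pow 3).const_mul (2/9)).sub (M6q_deriv.const_mul 6))
    refine this.congr_deriv ?_
    simp [M2q_zero, Nq_zero, phq_zero]; norm_num) (by norm_num) z hz
  linear_combination h

end G3

namespace G3

def Telt : SL2R := toR ⟨!![1, 1; 0, 1], by simp⟩

theorem T_in : Telt ∈ GammaPlus3 := by
  apply Subgroup.subset_closure
  left
  refine ⟨⟨!![1, 1; 0, 1], by simp⟩, ?_, rfl⟩
  exact CongruenceSubgroup.Gamma0_mem.2 (by simp)

theorem S_in : S3elt ∈ GammaPlus3 := Subgroup.subset_closure (Or.inr rfl)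

theorem Telt_val : Telt.1 = !![1, 1; 0, 1] := by
  ext i j
  change (((!![1, 1; 0, 1] : Matrix (Fin 2) (Fin 2) ℤ) i j : ℤ) : ℝ) = _
  fin_cases i <;> fin_cases j <;> simp

theorem R_eq : R3elt = Telt * S3elt := by
  have h3 : Real.sqrt 3 ≠ 0 := by positivity
  apply Subtype.ext
  change R3elt.1 = Telt.1 * S3elt.1
  rw [Telt_val]
  ext i j
  simp only [S3elt, R3elt]
  fin_cases i <;> fin_cases j <;> simp [Matrix.mul_apply, Fin.sum_univ_two]

theorem moeb_T (z : ℂ) : moeb Telt z = z + 1 := by simp [moeb, Telt_val]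
theorem jfac_T (z : ℂ) : jfac Telt z = 1 := by simp [jfac, Telt_val]
theorem moeb_S {z : ℂ} (hz : z ∈ UHP) : moeb S3elt z = -1 / (3 * z) := by
  have h := s3_ne
  have hz0 := uhp_ne hz
  simp [moeb, S3elt]
  field_simp
  rw [s3]
theorem jfac_S (z : ℂ) : jfac S3elt z = Real.sqrt 3 * z := by simp [jfac, S3elt]

theorem hasQ_of {f : ℂ → ℂ} (hd : DifferentiableOn ℂ f UHP) (hT : ∀ z ∈ UHP, f (z + 1) = f z)
    {C : ℝ} (hb : ∀ z ∈ UHP, 1 ≤ z.im → ‖f z‖ ≤ C) : ∃ G, HasQ f G := by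
  classical
  set F : ℂ → ℂ := fun z => if z ∈ UHP then f z else 0 with hF
  have hFe : ∀ z ∈ UHP, F z = f z := fun z hz => by simp [hF, hz]
  have hper : Function.Periodic F ((1:ℝ):ℂ) := by
    intro z
    by_cases hz : z ∈ UHP
    · have := T_mem hz
      rw [ofReal_one, hFe z hz, hFe _ this, hT z hz]
    · have : z + 1 ∉ UHP := by simpa [UHP] using hz
      simp [hF, hz, this]
  have hdF : ∀ z ∈ UHP, DifferentiableAt ℂ F z := by
    intro z hz
    refine (hd.differentiableAt (uhp_open.mem_nhds hz)).congr_of_eventuallyEq ?_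
    filter_upwards [uhp_open.mem_nhds hz] with w hw using hFe w hw
  have hq : ∀ z, Function.Periodic.qParam 1 z = qexp z := by
    intro z; simp [Function.Periodic.qParam, qexp]
  refine ⟨Function.Periodic.cuspFunction 1 F, ?_, ?_⟩
  · intro q hq1
    apply DifferentiableAt.differentiableWithinAt
    by_cases h0 : q = 0
    · rw [h0]
      apply Function.Periodic.differentiableAt_cuspFunction_zero one_pos hper
      · have : ∀ᶠ z : ℂ in comap Complex.im atTop, 0 < z.im :=
          (eventually_gt_atTop (0:ℝ)).comap _
        filter_upwards [this] with z hz using hdF z hz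
      · have : ∀ᶠ z : ℂ in comap Complex.im atTop, 1 ≤ z.im :=
          (eventually_ge_atTop (1:ℝ)).comap _
        refine Asymptotics.IsBigO.of_bound C ?_
        filter_upwards [this] with z hz
        have hz' : z ∈ UHP := lt_of_lt_of_le one_pos hz
        rw [hFe z hz']; simpa using hb z hz' hz
    · obtain ⟨z, hz, rfl⟩ := qexp_surj hq1 h0
      rw [← hq]
      exact Function.Periodic.differentiableAt_cuspFunction one_ne_zero hper (hdF z hz)
  · intro z hz
    rw [← hq, Function.Periodic.eq_cuspFunction one_ne_zero hper, hFe z hz]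

theorem isM_of {χ : SL2R → ℂ}
    (hχmul : ∀ γ ∈ GammaPlus3, ∀ δ ∈ GammaPlus3, χ (γ * δ) = χ γ * χ δ)
    (hχS : χ S3elt = -Complex.I) (hχR : χ R3elt = -Complex.I)
    {k w : ℕ} {W : ℤ} (hW : W = w) {f : ℂ → ℂ} (hf : MFchar GammaPlus3 (fun γ => χ γ ^ k) W f) :
    IsM ((-I) ^ k) w f := by
  subst hW
  obtain ⟨hd, ht, C, hC⟩ := hf
  have hT : χ Telt = 1 := by
    have h := hχmul _ T_in _ S_in
    rw [← R_eq, hχS, hχR] at h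
    have hI : -I ≠ 0 := neg_ne_zero.2 I_ne_zero
    exact mul_right_cancel₀ hI (by rw [one_mul]; exact h.symm)
  refine ⟨hasQ_of hd (fun z hz => ?_) hC, fun z hz => ?_⟩
  · have := ht _ T_in z hz
    simp only at this
    rwa [moeb_T, jfac_T, hT, one_pow, _root_.one_zpow, one_mul, one_mul] at this
  · have := ht _ S_in z hz
    simp only at this
    rwa [moeb_S hz, jfac_S, hχS, zpow_natCast] at this

theorem fac_q {c : ℂ} : ∀ (k : ℕ) {G : ℂ → ℂ}, DifferentiableOn ℂ G (Metric.ball 0 1) →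
    Tendsto (fun q => G q / q ^ k) (𝓝[≠] 0) (𝓝 c) →
    ∃ g : ℂ → ℂ, DifferentiableOn ℂ g (Metric.ball 0 1) ∧ (∀ q, G q = q ^ k * g q) ∧ g 0 = c := by
  intro k
  induction k with
  | zero =>
    intro G hG hc
    refine ⟨G, hG, fun q => by simp, ?_⟩
    have hcont : ContinuousAt G 0 :=
      (hG.differentiableAt (Metric.isOpen_ball.mem_nhds (by simp))).continuousAt
    have h1 : Tendsto G (𝓝[≠] 0) (𝓝 (G 0)) := hcont.tendsto.mono_left nhdsWithin_le_nhds
    simp only [pow_zero, div_one] at hc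
    exact tendsto_nhds_unique h1 hc
  | succ k ih =>
    intro G hG hc
    have hcont : ContinuousAt G 0 :=
      (hG.differentiableAt (Metric.isOpen_ball.mem_nhds (by simp))).continuousAt
    have h1 : Tendsto G (𝓝[≠] 0) (𝓝 (G 0)) := hcont.tendsto.mono_left nhdsWithin_le_nhds
    have h2 : Tendsto (fun q : ℂ => q ^ (k + 1)) (𝓝[≠] 0) (𝓝 0) := by
      have : Continuous (fun q : ℂ => q ^ (k + 1)) := by fun_prop
      simpa using (this.tendsto 0).mono_left (nhdsWithin_le_nhds (s := {0}ᶜ))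
    have h0 : G 0 = 0 := by
      have h3 := hc.mul h2
      rw [mul_zero] at h3
      refine tendsto_nhds_unique h1 (h3.congr' ?_)
      filter_upwards [self_mem_nhdsWithin] with q hq
      have hq' : q ≠ 0 := hq
      field_simp
    obtain ⟨A, hA, hA2⟩ := div_q hG h0
    obtain ⟨g, hg, hg2, hg3⟩ := ih hA (hc.congr' (by
      filter_upwards [self_mem_nhdsWithin] with q hq
      have hq' : q ≠ 0 := hq
      rw [hA2 q, pow_succ]; field_simp))
    exact ⟨g, hg, fun q => by rw [hA2, hg2]; ring, hg3⟩

theorem fac_of_VOrder {f G : ℂ → ℂ} (hG : HasQ f G) {k : ℕ} (h : VOrder 1 f (k : ℝ)) :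
    ∃ g : ℂ → ℂ, DifferentiableOn ℂ g (Metric.ball 0 1) ∧ (∀ z ∈ UHP, f z = qexp z ^ k * g (qexp z)) ∧
      g 0 ≠ 0 := by
  obtain ⟨c, hc0, hc⟩ := h
  have ht : Tendsto (fun q => G q / q ^ k) (𝓝[≠] 0) (𝓝 c) := by
    rw [Metric.tendsto_nhds]
    intro ε hε
    obtain ⟨Y, hY⟩ := hc ε hε
    have hball : Metric.ball (0:ℂ) (min 1 (Real.exp (-2 * Real.pi * Y))) ∈ 𝓝 (0:ℂ) :=
      Metric.ball_mem_nhds _ (by positivity)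
    filter_upwards [self_mem_nhdsWithin, mem_nhdsWithin_of_mem_nhds hball] with q hq0 hq
    rw [mem_ball_zero_iff, lt_min_iff] at hq
    obtain ⟨z, hz, rfl⟩ := qexp_surj (q := q) (by simpa using hq.1) hq0
    have hy : Y ≤ z.im := by
      have h2 := hq.2
      rw [norm_qexp, Real.exp_lt_exp] at h2
      nlinarith [Real.pi_pos]
    have := hY z hy
    rw [dist_eq_norm]
    have e : cexp (-(2 * Real.pi * I * ((k : ℝ) : ℂ) * z / ((1 : ℝ) : ℂ))) = (qexp z ^ k)⁻¹ := by
      rw [qexp, ← Complex.exp_nat_mul, ← Complex.exp_neg]; congr 1; push_cast; ring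
    rw [e, hG.2 z hz] at this
    rwa [div_eq_mul_inv, mul_comm]
  obtain ⟨g, h1, h2, h3⟩ := fac_q k hG.1 ht
  exact ⟨g, h1, fun z hz => by rw [hG.2 z hz, h2], by rwa [h3]⟩

end G3

namespace G3

theorem D_of {f : ℂ → ℂ} {a z : ℂ} (h : HasDerivAt f (2 * Real.pi * I * a) z) : Dd f z = a := by
  rw [Dd, h.deriv, mul_div_cancel_left₀ _ tpi_ne]

theorem D_congr {f g : ℂ → ℂ} (h : ∀ z ∈ UHP, f z = g z) {z : ℂ} (hz : z ∈ UHP) :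
    Dd f z = Dd g z := by
  have : f =ᶠ[𝓝 z] g := by filter_upwards [uhp_open.mem_nhds hz] with w hw using h w hw
  rw [Dd, Dd, this.deriv_eq]

def HD (f : ℂ → ℂ) (z a : ℂ) : Prop := HasDerivAt f (2 * Real.pi * I * a) z

theorem HD.add {f g : ℂ → ℂ} {z a b : ℂ} (h : HD f z a) (h' : HD g z b) :
    HD (fun z => f z + g z) z (a + b) := (HasDerivAt.add h h').congr_deriv (by ring)
theorem HD.sub {f g : ℂ → ℂ} {z a b : ℂ} (h : HD f z a) (h' : HD g z b) :
    HD (fun z => f z - g z) z (a - b) := (HasDerivAt.sub h h').congr_deriv (by ring)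
theorem HD.mul {f g : ℂ → ℂ} {z a b : ℂ} (h : HD f z a) (h' : HD g z b) :
    HD (fun z => f z * g z) z (a * g z + f z * b) := (HasDerivAt.mul h h').congr_deriv (by ring)
theorem HD.cmul {f : ℂ → ℂ} {z a : ℂ} (h : HD f z a) (c : ℂ) :
    HD (fun z => c * f z) z (c * a) := (HasDerivAt.const_mul c h).congr_deriv (by ring)
theorem HD.pow {f : ℂ → ℂ} {z a : ℂ} (h : HD f z a) (n : ℕ) :
    HD (fun z => f z ^ n) z (n * f z ^ (n - 1) * a) := (HasDerivAt.pow h n).congr_deriv (by ring)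
theorem HasQ.hd {f G : ℂ → ℂ} (h : HasQ f G) {z : ℂ} (hz : z ∈ UHP) : HD f z (Dd f z) :=
  h.hasDerivAt hz

theorem HasQ.congr' {f f' G : ℂ → ℂ} (h : HasQ f G) (e : ∀ z ∈ UHP, f' z = f z) : HasQ f' G :=
  ⟨h.1, fun z hz => (e z hz).trans (h.2 z hz)⟩

theorem Dd_Se (w : ℕ) (f : ℂ → ℂ) (z : ℂ) : Dd f z = Se w f z + (w / 6) * M2star3 z * f z := by
  rw [Se]; ring

theorem IsM.hd {ε f} {w : ℕ} (h : IsM ε w f) {z : ℂ} (hz : z ∈ UHP) :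
    HD f z (G3.Se w f z + (w / 6) * M2star3 z * f z) := by
  obtain ⟨⟨G, hG⟩, -⟩ := h
  rw [← Dd_Se]; exact hG.hd hz

theorem ph_hd {z : ℂ} (hz : z ∈ UHP) : HD M2star3 z ((M2star3 z ^ 2 - M2minus3 z ^ 2) / 6) := by
  rw [← D_ph hz]; exact hasQ_ph.hd hz
theorem M2_hd {z : ℂ} (hz : z ∈ UHP) : HD M2minus3 z (Nn z + M2star3 z * M2minus3 z / 3) := by
  rw [← D_M2]; exact hasQ_M2.hd hz
theorem M6_hd {z : ℂ} (hz : z ∈ UHP) : HD M6fun z (M2star3 z * M6fun z) := M6_deriv hz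

structure Data (k : ℕ) (ε : ℂ) (f0 f1 g : ℂ → ℂ) : Prop where
  h0 : IsM ε (3 * k + 2) f0
  h1 : IsM ε (3 * k) f1
  hε : ε ^ 2 = (-1) ^ k
  hg : DifferentiableOn ℂ g (Metric.ball 0 1)
  hfg : ∀ z ∈ UHP, f0 z + M2star3 z * f1 z = qexp z ^ k * g (qexp z)
  hg0 : g 0 ≠ 0

section
variable (k : ℕ) (f0 f1 : ℂ → ℂ)

def ff (z : ℂ) : ℂ := f0 z + M2star3 z * f1 z
def d0 : ℂ → ℂ := Se (3 * k + 2) f0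
def d1 : ℂ → ℂ := Se (3 * k) f1
def dd0 : ℂ → ℂ := Se (3 * k + 2 + 2) (d0 k f0)
def dd1 : ℂ → ℂ := Se (3 * k + 2) (d1 k f1)
def Ff (z : ℂ) : ℂ := f0 z ^ 2 + M2minus3 z ^ 2 * f1 z ^ 2 + 6 * (f0 z * d1 k f1 z - f1 z * d0 k f0 z)
def E1f (z : ℂ) : ℂ := M2minus3 z * dd1 k f1 z + M2minus3 z * d0 k f0 z / 3
  - Nn z * (2 * d1 k f1 z + f0 z / 3)
def E0f (z : ℂ) : ℂ := M2minus3 z * dd0 k f0 z - M2minus3 z ^ 3 * d1 k f1 z / 3 - 2 * Nn z * d0 k f0 z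
def Hf (z : ℂ) : ℂ := E0f k f0 f1 z * (f0 z + 6 * d1 k f1 z)
  + E1f k f0 f1 z * (M2minus3 z ^ 2 * f1 z - 6 * d0 k f0 z)
def Lf (z : ℂ) : ℂ := E0f k f0 f1 z + M2star3 z * E1f k f0 f1 z
def Xf (z : ℂ) : ℂ := M2minus3 z * (k / 2) ^ 2 * M2star3 z ^ 2
  + k * M2star3 z * (Nn z + M2star3 z * M2minus3 z / 3)
  - k / 12 * (M2star3 z ^ 2 - M2minus3 z ^ 2) * M2minus3 z
  + Nn z * M2star3 z / 3 + M2star3 z ^ 2 * M2minus3 z / 18 + M2minus3 z ^ 3 / 18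
end

variable {k : ℕ} {ε : ℂ} {f0 f1 g : ℂ → ℂ}

theorem Data.d0M (h : Data k ε f0 f1 g) : IsM ε (3 * k + 2 + 2) (d0 k f0) := h.h0.Se
theorem Data.d1M (h : Data k ε f0 f1 g) : IsM ε (3 * k + 2) (d1 k f1) := h.h1.Se
theorem Data.dd0M (h : Data k ε f0 f1 g) : IsM ε (3 * k + 2 + 2 + 2) (dd0 k f0) := h.d0M.Se
theorem Data.dd1M (h : Data k ε f0 f1 g) : IsM ε (3 * k + 2 + 2) (dd1 k f1) := h.d1M.Se


theorem Data.f0hd (h : Data k ε f0 f1 g) {z : ℂ} (hz : z ∈ UHP) :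
    HD f0 z (d0 k f0 z + (3 * k + 2) / 6 * M2star3 z * f0 z) := by
  have := h.h0.hd hz; push_cast at this; exact this
theorem Data.f1hd (h : Data k ε f0 f1 g) {z : ℂ} (hz : z ∈ UHP) :
    HD f1 z (d1 k f1 z + (3 * k) / 6 * M2star3 z * f1 z) := by
  have := h.h1.hd hz; push_cast at this; exact this
theorem Data.d0hd (h : Data k ε f0 f1 g) {z : ℂ} (hz : z ∈ UHP) :
    HD (d0 k f0) z (dd0 k f0 z + (3 * k + 2 + 2) / 6 * M2star3 z * d0 k f0 z) := by
  have := h.d0M.hd hz; push_cast at this; exact this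
theorem Data.d1hd (h : Data k ε f0 f1 g) {z : ℂ} (hz : z ∈ UHP) :
    HD (d1 k f1) z (dd1 k f1 z + (3 * k + 2) / 6 * M2star3 z * d1 k f1 z) := by
  have := h.d1M.hd hz; push_cast at this; exact this

theorem Data.ff_hd (h : Data k ε f0 f1 g) {z : ℂ} (hz : z ∈ UHP) :
    HD (ff f0 f1) z (d0 k f0 z + ((3 * k + 2) / 6) * M2star3 z * f0 z
      + ((M2star3 z ^ 2 - M2minus3 z ^ 2) / 6 * f1 z + M2star3 z * (d1 k f1 z + k / 2 * M2star3 z * f1 z))) := by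
  have := (h.f0hd hz).add ((ph_hd hz).mul (h.f1hd hz))
  refine HasDerivAt.congr_deriv this ?_
  ring

theorem Data.ff_D (h : Data k ε f0 f1 g) {z : ℂ} (hz : z ∈ UHP) :
    Dd (ff f0 f1) z = d0 k f0 z + ((3 * k + 2) / 6) * M2star3 z * f0 z
      + ((M2star3 z ^ 2 - M2minus3 z ^ 2) / 6 * f1 z + M2star3 z * (d1 k f1 z + k / 2 * M2star3 z * f1 z)) :=
  D_of (h.ff_hd hz)

theorem Data.F_eq (h : Data k ε f0 f1 g) {z : ℂ} (hz : z ∈ UHP) :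
    Ff k f0 f1 z = ff f0 f1 z ^ 2 + 6 * (ff f0 f1 z * (d1 k f1 z + k / 2 * M2star3 z * f1 z)
      - f1 z * Dd (ff f0 f1) z) := by
  rw [h.ff_D hz, Ff, ff]; ring

theorem Data.D2f (h : Data k ε f0 f1 g) {z : ℂ} (hz : z ∈ UHP) :
    Lf k f0 f1 z = M2minus3 z * Dd (Dd (ff f0 f1)) z
      - (k * M2star3 z * M2minus3 z + 2 * Nn z + 2 * M2star3 z * M2minus3 z / 3) * Dd (ff f0 f1) z
      + Xf k z * ff f0 f1 z := by
  have e := D_congr (fun z hz => h.ff_D hz) hz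
  have e2 := D_of (((h.d0hd hz).add (((ph_hd hz).cmul ((3 * k + 2) / 6)).mul (h.f0hd hz))).add
    (((((((ph_hd hz).pow 2).sub ((M2_hd hz).pow 2)).cmul (1 / 6)).mul (h.f1hd hz)).add
      ((ph_hd hz).mul ((h.d1hd hz).add (((ph_hd hz).cmul (k / 2)).mul (h.f1hd hz)))))))
  have e3 := e.trans (Eq.trans (D_congr (fun z _ => by ring) hz) e2)
  rw [e3, h.ff_D hz, Lf, Xf, E0f, E1f]
  simp only [ff, Nat.cast_ofNat]
  ring

theorem Data.FM (h : Data k ε f0 f1 g) : IsM ((-1) ^ k) (6 * k + 4) (Ff k f0 f1) := by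
  have a := ((h.h0.pow 2).add (((M2_isM.pow 2).mul (h.h1.pow 2)).congr (by ring) (by ring) (fun _ _ => rfl))).add
    ((((h.h0.mul h.d1M).sub ((h.h1.mul h.d0M).congr rfl (by ring) (fun _ _ => rfl))).cmul 6).congr (by ring) (by ring) (fun _ _ => rfl))
  exact a.congr h.hε (by ring) (fun _ _ => rfl)

theorem Data.E1M (h : Data k ε f0 f1 g) : IsM (-ε) (3 * k + 6) (E1f k f0 f1) := by
  have a := ((M2_isM.mul h.dd1M).add ((M2_isM.mul h.d0M).cmul (1/3))).sub
    ((N_isM.mul ((h.d1M.cmul 2).add (h.h0.cmul (1/3)))).congr rfl (by ring) (fun _ _ => rfl))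
  exact a.congr (by ring) (by ring) (fun z _ => by rw [E1f]; ring)

theorem Data.E0M (h : Data k ε f0 f1 g) : IsM (-ε) (3 * k + 8) (E0f k f0 f1) := by
  have a := ((M2_isM.mul h.dd0M).sub ((((M2_isM.pow 3).mul h.d1M).cmul (1/3)).congr (by norm_num) (by ring) (fun _ _ => rfl))).sub
    (((N_isM.mul h.d0M).cmul 2).congr rfl (by ring) (fun _ _ => rfl))
  exact a.congr (by ring) (by ring) (fun z _ => by rw [E0f]; ring)

theorem Data.HM (h : Data k ε f0 f1 g) : IsM ((-1) ^ (k + 1)) (6 * k + 10) (Hf k f0 f1) := by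
  have a := (h.E0M.mul (h.h0.add (h.d1M.cmul 6))).add
    ((h.E1M.mul ((((M2_isM.pow 2).mul h.h1).congr (ε' := ε) (by ring) (by ring) (fun _ _ => rfl)).sub (h.d0M.cmul 6))).congr rfl (by ring) (fun _ _ => rfl))
  exact a.congr (by rw [pow_succ, ← h.hε]; ring) (by ring) (fun z _ => by rw [Hf])

/-- the q-side of the form f -/
theorem Data.ffQ (h : Data k ε f0 f1 g) : HasQ (ff f0 f1) (fun q => q ^ k * g q) :=
  ⟨(differentiableOn_id.pow k).mul h.hg, h.hfg⟩

def g1 (k : ℕ) (g : ℂ → ℂ) (q : ℂ) : ℂ := k * g q + q * deriv g q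

theorem g1_diff {g : ℂ → ℂ} (hg : DifferentiableOn ℂ g (Metric.ball 0 1)) :
    DifferentiableOn ℂ (g1 k g) (Metric.ball 0 1) :=
  (hg.const_mul _).add (differentiableOn_id.mul (hg.deriv Metric.isOpen_ball))

theorem D_qk {f g : ℂ → ℂ} (hg : DifferentiableOn ℂ g (Metric.ball 0 1))
    (hf : ∀ z ∈ UHP, f z = qexp z ^ k * g (qexp z)) {z : ℂ} (hz : z ∈ UHP) :
    Dd f z = qexp z ^ k * g1 k g (qexp z) := by
  have hQ : HasQ f (fun q => q ^ k * g q) := ⟨(differentiableOn_id.pow k).mul hg, hf⟩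
  rw [hQ.D_eq hz]
  have h1 : HasDerivAt (fun q => q ^ k * g q) _ (qexp z) := (hasDerivAt_pow k (qexp z)).mul
    (hg.differentiableAt (Metric.isOpen_ball.mem_nhds (qexp_mem hz))).hasDerivAt
  rw [h1.deriv, g1]
  cases k with
  | zero => simp
  | succ n => simp only [Nat.add_sub_cancel, pow_succ]; ring

theorem Data.D1 (h : Data k ε f0 f1 g) {z : ℂ} (hz : z ∈ UHP) :
    Dd (ff f0 f1) z = qexp z ^ k * g1 k g (qexp z) := D_qk h.hg h.hfg hz
theorem Data.D2 (h : Data k ε f0 f1 g) {z : ℂ} (hz : z ∈ UHP) :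
    Dd (Dd (ff f0 f1)) z = qexp z ^ k * g1 k (g1 k g) (qexp z) := D_qk (g1_diff h.hg) (fun _ hz => h.D1 hz) hz

theorem g1_zero : g1 k g 0 = k * g 0 := by simp [g1]

theorem Data.F_fac (h : Data k ε f0 f1 g) : ∃ A, DifferentiableOn ℂ A (Metric.ball 0 1) ∧
    ∀ z ∈ UHP, Ff k f0 f1 z = qexp z ^ k * A (qexp z) := by
  obtain ⟨⟨G, hG⟩, -⟩ := h.h1
  obtain ⟨⟨G1, hG1⟩, -⟩ := h.d1M
  refine ⟨fun q => q ^ k * g q ^ 2 + 6 * (g q * (G1 q + k / 2 * phq q * G q) - G q * g1 k g q), ?_, ?_⟩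
  · exact ((differentiableOn_id.pow k).mul (h.hg.pow 2)).add (((h.hg.mul (hG1.1.add ((hasQ_ph.1.const_mul (k/2)).mul hG.1))).sub
      (hG.1.mul (g1_diff h.hg))).const_mul 6)
  · intro z hz
    rw [h.F_eq hz, h.D1 hz, ff, h.hfg z hz, hG.2 z hz, hG1.2 z hz, hasQ_ph.2 z hz]
    ring

theorem M6k_isM (k : ℕ) : IsM ((-1) ^ k) (6 * k) (fun z => M6fun z ^ k) := M6_isM.pow k

theorem Data.F_form (h : Data k ε f0 f1 g) :
    ∃ C : ℂ, ∀ z ∈ UHP, Ff k f0 f1 z = C * (M2minus3 z ^ 2 * M6fun z ^ k) := by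
  obtain ⟨A, hA, hA2⟩ := h.F_fac
  have hd : DifferentiableOn ℂ (fun q => A q - A 0 * (M2q q ^ 2 * mq q ^ k)) (Metric.ball 0 1) :=
    hA.sub (((hasQ_M2.1.pow 2).mul (mq_diff.pow k)).const_mul _)
  obtain ⟨B, hB, hB2⟩ := div_q hd (by simp [M2q_zero, mq_zero])
  refine ⟨A 0, fun z hz => ?_⟩
  have hM := h.FM.sub ((((M2_isM.pow 2).mul (M6k_isM k)).cmul (A 0)).congr (ε' := (-1) ^ k) (by ring) (by ring) (fun _ _ => rfl))
  have := lemV (n := k + 1) hM (by simp) hB (fun z hz => by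
    rw [hA2 z hz, hasQ_M2.2 z hz, hasQ_M6.2 z hz]
    have := hB2 (qexp z)
    linear_combination qexp z ^ k * this) (by omega) z hz
  exact sub_eq_zero.1 this

theorem Data.L_fac (h : Data k ε f0 f1 g) : ∃ A, DifferentiableOn ℂ A (Metric.ball 0 1) ∧
    (∀ z ∈ UHP, Lf k f0 f1 z = qexp z ^ k * A (qexp z)) ∧ A 0 = k ^ 2 / 4 * g 0 := by
  have hX : ∃ X, HasQ (Xf k) X ∧ X 0 = k ^ 2 / 4 := by
    refine ⟨_, (((((((hasQ_M2.cmul ((k / 2) ^ 2)).mul (hasQ_ph.pow 2)).add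
      ((hasQ_ph.cmul k).mul (hasQ_N.add ((hasQ_ph.mul hasQ_M2).cmul (1/3))))).sub
      ((((hasQ_ph.pow 2).sub (hasQ_M2.pow 2)).cmul (k/12)).mul hasQ_M2)).add
      ((hasQ_N.mul hasQ_ph).cmul (1/3))).add (((hasQ_ph.pow 2).mul hasQ_M2).cmul (1/18))).add
      ((hasQ_M2.pow 3).cmul (1/18))).congr' (fun z _ => ?_), ?_⟩
    · rw [Xf]; ring
    · simp only [phq_zero, M2q_zero, Nq_zero]; ring
  obtain ⟨X, hX, hX0⟩ := hX
  have hY := ((hasQ_ph.cmul k).mul hasQ_M2).add ((hasQ_N.cmul 2).add ((hasQ_ph.mul hasQ_M2).cmul (2/3)))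
  refine ⟨fun q => M2q q * g1 k (g1 k g) q - (k * phq q * M2q q + (2 * Nq q + 2/3 * (phq q * M2q q))) * g1 k g q + X q * g q, ?_, ?_, ?_⟩
  · exact ((hasQ_M2.1.mul (g1_diff (g1_diff h.hg))).sub (hY.1.mul (g1_diff h.hg))).add (hX.1.mul h.hg)
  · intro z hz
    rw [h.D2f hz, h.D1 hz, h.D2 hz, ff, h.hfg z hz, hX.2 z hz, hasQ_M2.2 z hz, hasQ_N.2 z hz, hasQ_ph.2 z hz]
    ring
  · simp only [g1_zero, M2q_zero, phq_zero, Nq_zero, hX0]; ring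

theorem Data.H_eq (h : Data k ε f0 f1 g) {z : ℂ} (hz : z ∈ UHP) :
    Hf k f0 f1 z = Lf k f0 f1 z * (f0 z + 6 * d1 k f1 z)
      + E1f k f0 f1 z * ((3 * k + 1) * M2star3 z * ff f0 f1 z - 6 * Dd (ff f0 f1) z) := by
  rw [h.ff_D hz, Hf, Lf, ff]; ring

theorem Data.H_form (h : Data k ε f0 f1 g) :
    ∃ α β : ℂ, ∀ z ∈ UHP, Hf k f0 f1 z =
      (α * M2minus3 z ^ 5 + β * (M2minus3 z ^ 2 * M6fun z)) * M6fun z ^ k := by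
  obtain ⟨L, hL, hL2, -⟩ := h.L_fac
  obtain ⟨⟨G1, hG1⟩, -⟩ := h.d1M
  obtain ⟨⟨G0, hG0⟩, -⟩ := h.h0
  obtain ⟨⟨E, hE⟩, -⟩ := h.E1M
  obtain ⟨B, hB, hB2⟩ : ∃ B, DifferentiableOn ℂ B (Metric.ball 0 1) ∧
      ∀ z ∈ UHP, Hf k f0 f1 z = qexp z ^ k * B (qexp z) := by
    refine ⟨fun q => L q * (G0 q + 6 * G1 q) + E q * ((3 * k + 1) * phq q * g q - 6 * g1 k g q), ?_, ?_⟩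
    · exact (hL.mul (hG0.1.add (hG1.1.const_mul 6))).add
        (hE.1.mul (((hasQ_ph.1.const_mul (3 * k + 1)).mul h.hg).sub ((g1_diff h.hg).const_mul 6)))
    · intro z hz
      rw [h.H_eq hz, hL2 z hz, hG0.2 z hz, hG1.2 z hz, hE.2 z hz, h.D1 hz, ff, h.hfg z hz, hasQ_ph.2 z hz]
      ring
  have hd : DifferentiableOn ℂ (fun q => B q - B 0 * (M2q q ^ 5 * mq q ^ k)) (Metric.ball 0 1) :=
    hB.sub (((hasQ_M2.1.pow 5).mul (mq_diff.pow k)).const_mul _)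
  obtain ⟨R, hR, hR2⟩ := div_q hd (by simp [M2q_zero, mq_zero])
  have hd2 : DifferentiableOn ℂ (fun q => R q - R 0 * (M2q q ^ 2 * mq q ^ (k + 1))) (Metric.ball 0 1) :=
    hR.sub (((hasQ_M2.1.pow 2).mul (mq_diff.pow (k + 1))).const_mul _)
  obtain ⟨T, hT, hT2⟩ := div_q hd2 (by simp [M2q_zero, mq_zero])
  refine ⟨B 0, R 0, fun z hz => ?_⟩
  have hM := h.HM.sub ((((((M2_isM.pow 5).mul (M6k_isM k)).cmul (B 0)).congr (ε' := (-1) ^ (k + 1)) (w' := 6 * k + 10) (by ring) (by ring) (fun _ _ => rfl)).add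
    (((((M2_isM.pow 2).mul (M6k_isM (k + 1))).cmul (R 0))).congr (by ring) (by ring) (fun _ _ => rfl))))
  have := lemV (n := k + 2) hM (by simp) hT (fun z hz => by
    rw [hB2 z hz, hasQ_M2.2 z hz, hasQ_M6.2 z hz]
    have h1 := hR2 (qexp z)
    have h2 := hT2 (qexp z)
    linear_combination qexp z ^ k * h1 + qexp z ^ (k + 1) * h2) (by omega) z hz
  linear_combination this

/-- the ratio relation -/
theorem Data.ratio (h : Data k ε f0 f1 g) {z : ℂ} (hz : z ∈ UHP) :
    f0 z * E1f k f0 f1 z = f1 z * E0f k f0 f1 z := by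
  obtain ⟨C, hC⟩ := h.F_form
  have e1 := D_of (((((h.f0hd hz).pow 2).add (((M2_hd hz).pow 2).mul ((h.f1hd hz).pow 2))).add
    ((((h.f0hd hz).mul (h.d1hd hz)).sub ((h.f1hd hz).mul (h.d0hd hz))).cmul 6)))
  have e2 := D_of ((((M2_hd hz).pow 2).mul ((M6_hd hz).pow k)).cmul C)
  have e3 := (D_congr hC hz).symm.trans (show Dd (Ff k f0 f1) z = _ from e1)
  rw [e2] at e3
  have hp : (k : ℂ) * M6fun z ^ (k - 1) * (M2star3 z * M6fun z) = k * M2star3 z * M6fun z ^ k := by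
    cases k with
    | zero => simp
    | succ n => simp only [Nat.add_sub_cancel, pow_succ]; ring
  rw [hp] at e3
  have e4 := hC z hz
  rw [Ff] at e4
  simp only [Nat.cast_ofNat, Nat.add_one_sub_one, pow_one] at e3
  rw [E1f, E0f]
  linear_combination (-1/6) * M2minus3 z * e3 + (1/6) * (2 * Nn z + (k + 2/3) * M2star3 z * M2minus3 z) * (-1) * e4

theorem Data.f0H (h : Data k ε f0 f1 g) {z : ℂ} (hz : z ∈ UHP) :
    f0 z * Hf k f0 f1 z = E0f k f0 f1 z * Ff k f0 f1 z := by
  rw [Hf, Ff]; linear_combination (M2minus3 z ^ 2 * f1 z - 6 * d0 k f0 z) * h.ratio hz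
theorem Data.f1H (h : Data k ε f0 f1 g) {z : ℂ} (hz : z ∈ UHP) :
    f1 z * Hf k f0 f1 z = E1f k f0 f1 z * Ff k f0 f1 z := by
  rw [Hf, Ff]; linear_combination (-1) * (f0 z + 6 * d1 k f1 z) * h.ratio hz

end G3

namespace G3
variable {k : ℕ} {ε : ℂ} {f0 f1 g : ℂ → ℂ}

theorem Data.F_ne (h : Data k ε f0 f1 g) (hF : ∀ z ∈ UHP, Ff k f0 f1 z = 0) : False := by
  have hcont : ContinuousAt g 0 :=
    (h.hg.differentiableAt (Metric.isOpen_ball.mem_nhds (by simp))).continuousAt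
  obtain ⟨r, hr, hr2⟩ := Metric.eventually_nhds_iff.1 (hcont.eventually_ne h.hg0)
  set Y : ℝ := max 1 (-Real.log r / (2 * Real.pi)) with hY
  set V : Set ℂ := {z : ℂ | Y < z.im} with hV
  have hVU : ∀ z ∈ V, z ∈ UHP := fun z hz => by
    have h1 : Y < z.im := hz
    have h2 : 1 ≤ Y := le_max_left _ _
    change 0 < z.im
    linarith
  have hfne : ∀ z ∈ V, ff f0 f1 z ≠ 0 := by
    intro z hz
    rw [ff, h.hfg z (hVU z hz)]
    refine mul_ne_zero (pow_ne_zero _ (qexp_ne z)) (hr2 ?_)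
    rw [dist_zero_right, norm_qexp]
    have h1 : Y < z.im := hz
    have h2 : -Real.log r / (2 * Real.pi) ≤ Y := le_max_right _ _
    have hp := Real.pi_pos
    rw [div_le_iff₀ (by positivity)] at h2
    rw [← Real.lt_log_iff_exp_lt hr]
    nlinarith
  have hder : ∀ z ∈ V, HasDerivAt (fun z => f1 z / ff f0 f1 z + 2 * Real.pi * I * (1 / 6) * z) 0 z := by
    intro z hz
    have hz' := hVU z hz
    have hne := hfne z hz
    have h1 := (HasDerivAt.div (h.f1hd hz') (h.ffQ.hd hz') hne).add
      ((hasDerivAt_id z).const_mul (2 * Real.pi * I * (1 / 6)))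
    refine h1.congr_deriv ?_
    have e := h.F_eq hz'
    rw [hF z hz'] at e
    field_simp
    linear_combination (-(2 * Real.pi * I)) * e
  have hconv : Convex ℝ V := by
    have : V = {z : ℂ | Y < Complex.imLm z} := rfl
    rw [this]
    exact convex_halfSpace_gt (LinearMap.isLinear _) Y
  set z0 : ℂ := ((Y + 1 : ℝ) : ℂ) * I with hz0
  have hz0V : z0 ∈ V := by simp [hV, hz0]
  have hz1V : z0 + 1 ∈ V := by simp [hV, hz0]
  have hc := hconv.norm_image_sub_le_of_norm_hasDerivWithin_le
      (f := fun z => f1 z / ff f0 f1 z + 2 * Real.pi * I * (1 / 6) * z) (f' := fun _ => 0) (C := 0)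
      (fun x hx => (hder x hx).hasDerivWithinAt) (by simp) hz0V hz1V
  rw [zero_mul, norm_le_zero_iff, sub_eq_zero] at hc
  obtain ⟨⟨G, hG⟩, -⟩ := h.h1
  have e1 : f1 (z0 + 1) = f1 z0 := by
    rw [hG.2 _ (hVU _ hz0V), hG.2 _ (hVU _ hz1V), qexp_T]
  have e2 : ff f0 f1 (z0 + 1) = ff f0 f1 z0 := by
    rw [h.ffQ.2 _ (hVU _ hz0V), h.ffQ.2 _ (hVU _ hz1V), qexp_T]
  simp only [e1, e2] at hc
  have : (2 * Real.pi * I : ℂ) = 0 := by linear_combination 6 * hc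
  exact tpi_ne this

theorem Data.rel (h : Data k ε f0 f1 g) {C α β : ℂ}
    (hC : ∀ z ∈ UHP, Ff k f0 f1 z = C * (M2minus3 z ^ 2 * M6fun z ^ k))
    (hH : ∀ z ∈ UHP, Hf k f0 f1 z =
      (α * M2minus3 z ^ 5 + β * (M2minus3 z ^ 2 * M6fun z)) * M6fun z ^ k)
    {z : ℂ} (hz : z ∈ UHP) (hM : M2minus3 z ≠ 0) :
    C * E0f k f0 f1 z = f0 z * (α * M2minus3 z ^ 3 + β * M6fun z) ∧
    C * E1f k f0 f1 z = f1 z * (α * M2minus3 z ^ 3 + β * M6fun z) := by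
  have hne : M2minus3 z ^ 2 * M6fun z ^ k ≠ 0 :=
    mul_ne_zero (pow_ne_zero _ hM) (pow_ne_zero _ (M6_ne hz))
  have e0 := h.f0H hz
  have e1 := h.f1H hz
  rw [hC z hz, hH z hz] at e0 e1
  constructor
  · apply mul_right_cancel₀ hne; linear_combination -e0
  · apply mul_right_cancel₀ hne; linear_combination -e1

theorem Data.alpha (h : Data k ε f0 f1 g) {C α β : ℂ}
    (hC : ∀ z ∈ UHP, Ff k f0 f1 z = C * (M2minus3 z ^ 2 * M6fun z ^ k))
    (hH : ∀ z ∈ UHP, Hf k f0 f1 z =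
      (α * M2minus3 z ^ 5 + β * (M2minus3 z ^ 2 * M6fun z)) * M6fun z ^ k) :
    α = C * (k ^ 2 / 4) := by
  obtain ⟨L, hL, hL2, hL0⟩ := h.L_fac
  have c0 : ∀ {G : ℂ → ℂ}, DifferentiableOn ℂ G (Metric.ball 0 1) → Tendsto G (𝓝[≠] 0) (𝓝 (G 0)) := by
    intro G hG
    exact (hG.differentiableAt (Metric.isOpen_ball.mem_nhds (by simp))).continuousAt.tendsto.mono_left
      nhdsWithin_le_nhds
  have t1 := c0 (hL.const_mul C)
  have t2 := c0 (h.hg.mul (((hasQ_M2.1.pow 3).const_mul α).add (hasQ_M6.1.const_mul β)))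
  have hM2 : ∀ᶠ q in 𝓝[≠] (0:ℂ), M2q q ≠ 0 :=
    (c0 hasQ_M2.1).eventually_ne (by rw [M2q_zero]; exact one_ne_zero)
  have t3 := t1.congr' (f₂ := fun q => g q * (α * M2q q ^ 3 + β * (q * mq q))) (by
    filter_upwards [hM2, self_mem_nhdsWithin, mem_nhdsWithin_of_mem_nhds
      (Metric.isOpen_ball.mem_nhds (Metric.mem_ball_self (x := (0:ℂ)) one_pos))] with q hq hq0 hqb
    obtain ⟨z, hz, rfl⟩ := qexp_surj hqb hq0
    rw [← hasQ_M2.2 z hz] at hq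
    obtain ⟨r0, r1⟩ := h.rel hC hH hz hq
    have hl := hL2 z hz
    rw [Lf] at hl
    have hf := h.hfg z hz
    apply mul_left_cancel₀ (pow_ne_zero k (qexp_ne z))
    have e6 := hasQ_M6.2 z hz
    simp only at e6
    rw [← hasQ_M2.2 z hz, ← e6]
    linear_combination (-C) * hl + r0 + M2star3 z * r1 + (α * M2minus3 z ^ 3 + β * M6fun z) * hf)
  have e := tendsto_nhds_unique t3 t2
  simp [M2q_zero] at e
  rw [hL0] at e
  apply mul_left_cancel₀ h.hg0
  linear_combination -e

def rho : ℂ := 1 / 2 + (Real.sqrt 3 : ℂ) / 6 * I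
def om : ℂ := 3 * rho - 1

theorem rho_mem : rho ∈ UHP := by
  change 0 < rho.im
  have : rho = ((1/2 : ℝ) : ℂ) + ((Real.sqrt 3 / 6 : ℝ) : ℂ) * I := by rw [rho]; push_cast; ring
  rw [this]; simp

theorem rho_eq : 3 * rho ^ 2 = 3 * rho - 1 := by
  rw [rho]; linear_combination (1/12) * I ^ 2 * s3 + (1/4) * I_sq
theorem zeta_sq : ((Real.sqrt 3 : ℂ) * rho) ^ 2 = om := by
  rw [mul_pow, s3, om, rho_eq]
theorem om_eq : om ^ 2 = om - 1 := by
  rw [om]; linear_combination 3 * rho_eq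
theorem om3 : om ^ 3 = -1 := by linear_combination (om + 1) * om_eq
theorem zeta_cu : ((Real.sqrt 3 : ℂ) * rho) ^ 3 = I := by
  have : 2 * rho - 1 = (Real.sqrt 3 : ℂ) / 3 * I := by rw [rho]; ring
  rw [pow_succ, zeta_sq, om]
  linear_combination (Real.sqrt 3 : ℂ) * rho_eq + (Real.sqrt 3 : ℂ) * this + I / 3 * s3

theorem om_ne1 : om ≠ 1 := fun h => by have := om_eq; rw [h] at this; norm_num at this
theorem om_ne2 : om ^ 2 ≠ 1 := fun h => by
  have h2 : om = 2 := by linear_combination h - om_eq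
  have := om_eq; rw [h2] at this; norm_num at this
theorem om_nem1 : om ≠ -1 := fun h => by have := om_eq; rw [h] at this; norm_num at this
theorem om_ne0 : om ≠ 0 := fun h => by have := om_eq; rw [h] at this; norm_num at this
theorem om_ne3 : om ^ 3 ≠ 1 := by rw [om3]; norm_num
theorem om_ne4 : om ^ 4 ≠ 1 := fun h => om_nem1 (by linear_combination -h + om * om3)
theorem om_ne5 : om ^ 5 ≠ 1 := fun h => om_ne0 (by linear_combination -h + om ^ 2 * om3 - om_eq)

theorem cancel_pow {n : ℕ} {a b : ℂ → ℂ} (ha : ContinuousAt a rho) (hb : ContinuousAt b rho)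
    (h : ∀ᶠ z in 𝓝 rho, (z - rho) ^ n * a z = (z - rho) ^ n * b z) : a rho = b rho := by
  have h1 : Tendsto a (𝓝[≠] rho) (𝓝 (a rho)) := ha.tendsto.mono_left nhdsWithin_le_nhds
  have h2 : Tendsto b (𝓝[≠] rho) (𝓝 (b rho)) := hb.tendsto.mono_left nhdsWithin_le_nhds
  refine tendsto_nhds_unique (h1.congr' ?_) h2
  filter_upwards [mem_nhdsWithin_of_mem_nhds h, self_mem_nhdsWithin] with z hz hz0
  exact mul_left_cancel₀ (pow_ne_zero n (sub_ne_zero.2 hz0)) hz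

def Dv (n : ℕ) (f : ℂ → ℂ) : Prop :=
  ∃ u : ℂ → ℂ, AnalyticAt ℂ u rho ∧ ∀ᶠ z in 𝓝 rho, f z = (z - rho) ^ n * u z

theorem HasQ.an {f G : ℂ → ℂ} (h : HasQ f G) : AnalyticAt ℂ f rho :=
  DifferentiableOn.analyticAt (s := UHP)
    (fun _ hz => (h.hasDerivAt hz).differentiableAt.differentiableWithinAt) (uhp_open.mem_nhds rho_mem)

theorem IsM.an {f} {w : ℕ} (h : IsM ε w f) : AnalyticAt ℂ f rho := by
  obtain ⟨⟨G, hG⟩, -⟩ := h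
  exact hG.an

theorem IsM.dv0 {f} {w : ℕ} (h : IsM ε w f) : Dv 0 f := ⟨f, h.an, by simp⟩

theorem Dv.succ {n : ℕ} {f u : ℂ → ℂ} (hu : AnalyticAt ℂ u rho)
    (h : ∀ᶠ z in 𝓝 rho, f z = (z - rho) ^ n * u z) (h0 : u rho = 0) : Dv (n + 1) f := by
  refine ⟨dslope u rho, ?_, ?_⟩
  · obtain ⟨p, hp⟩ := hu
    exact ⟨_, hp.has_fpower_series_dslope_fslope⟩
  · filter_upwards [h] with z hz
    have := sub_smul_dslope u rho z
    rw [h0, sub_zero, smul_eq_mul] at this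
    rw [hz, ← this]; ring

theorem IsM.step {f} {w n : ℕ} (h : IsM ε w f) (hn : Dv n f)
    (hne : ε * ((Real.sqrt 3 : ℂ) * rho) ^ (w + 2 * n) ≠ 1) : Dv (n + 1) f := by
  obtain ⟨u, hu, hfu⟩ := hn
  refine Dv.succ hu hfu ?_
  by_contra h0
  apply hne
  obtain ⟨⟨G, hG⟩, hS⟩ := h
  set R : ℂ → ℂ := fun z => -1 / (3 * z) + 1 with hR
  have hr0 := uhp_ne rho_mem
  have hs := s3_ne
  have hRr : R rho = rho := by
    simp only [hR]; field_simp; linear_combination rho_eq * (-1)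
  have hRc : ContinuousAt R rho := ((hasDerivAt_S rho_mem).continuousAt).add continuousAt_const
  have hR2 : Tendsto R (𝓝 rho) (𝓝 rho) := by
    have := hRc.tendsto; rwa [hRr] at this
  have hev : ∀ᶠ z in 𝓝 rho, (z - rho) ^ n * u (R z) =
      (z - rho) ^ n * (ε * ((Real.sqrt 3 : ℂ) * z) ^ (w + n) * ((Real.sqrt 3 : ℂ) * rho) ^ n * u z) := by
    filter_upwards [hfu, hR2.eventually hfu, uhp_open.mem_nhds rho_mem] with z h1 h2 hz
    have hz0 := uhp_ne hz
    have e1 : f (R z) = ε * ((Real.sqrt 3 : ℂ) * z) ^ w * f z := by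
      rw [← hS z hz, hG.2 _ (S_mem hz), ← qexp_T, ← hG.2 _ (T_mem (S_mem hz))]
    have e2 : R z - rho = (z - rho) / (((Real.sqrt 3 : ℂ) * z) * ((Real.sqrt 3 : ℂ) * rho)) := by
      have : ((Real.sqrt 3 : ℂ) * z) * ((Real.sqrt 3 : ℂ) * rho) = 3 * z * rho := by
        linear_combination z * rho * s3
      rw [this]; simp only [hR]; field_simp
      linear_combination (-z) * rho_eq
    rw [h2, h1, e2, div_pow, mul_pow ((Real.sqrt 3 : ℂ) * z)] at e1
    have hA : ((Real.sqrt 3 : ℂ) * z) ^ n ≠ 0 := pow_ne_zero _ (mul_ne_zero hs hz0)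
    have hB : ((Real.sqrt 3 : ℂ) * rho) ^ n ≠ 0 := pow_ne_zero _ (mul_ne_zero hs hr0)
    rw [div_mul_eq_mul_div, div_eq_iff (mul_ne_zero hA hB)] at e1
    rw [e1, pow_add]; ring
  have huR : ContinuousAt (fun z => u (R z)) rho := by
    have : ContinuousAt u (R rho) := by rw [hRr]; exact hu.continuousAt
    exact ContinuousAt.comp (f := R) this hRc
  have hb : ContinuousAt (fun z => ε * ((Real.sqrt 3 : ℂ) * z) ^ (w + n) * ((Real.sqrt 3 : ℂ) * rho) ^ n * u z) rho :=
    ContinuousAt.mul (by fun_prop) hu.continuousAt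
  have key := cancel_pow huR hb hev
  rw [hRr] at key
  apply mul_right_cancel₀ h0
  rw [one_mul, show w + 2 * n = (w + n) + n by ring, pow_add _ (w + n)]
  rw [← mul_assoc]; exact key.symm

theorem char_rho {k : ℕ} (j : ℕ) : (-I) ^ k * ((Real.sqrt 3 : ℂ) * rho) ^ (3 * k + 2 * j) = om ^ j := by
  rw [pow_add, pow_mul, pow_mul, zeta_cu, zeta_sq, ← mul_assoc, ← mul_pow]
  simp

theorem Dv.eval {n : ℕ} {f : ℂ → ℂ} (h : Dv (n + 1) f) : f rho = 0 := by
  obtain ⟨u, -, hu⟩ := h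
  have := hu.self_of_nhds
  simpa using this

theorem N_dv : Dv 1 Nn := N_isM.step N_isM.dv0 (by
  rw [show 4 + 2 * 0 = 2 * 2 by norm_num, pow_mul, zeta_sq, om_eq]
  intro h; exact om_ne0 (by linear_combination -h))

theorem M2_dv : Dv 2 M2minus3 := by
  have h1 : Dv 1 M2minus3 := M2_isM.step M2_isM.dv0 (by
    rw [show 2 + 2 * 0 = 2 * 1 by norm_num, pow_mul, zeta_sq]
    intro h; exact om_nem1 (by linear_combination -h))
  exact M2_isM.step h1 (by
    rw [show 2 + 2 * 1 = 2 * 2 by norm_num, pow_mul, zeta_sq, om_eq]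
    intro h; exact om_ne0 (by linear_combination -h))

theorem M2_rho : M2minus3 rho = 0 := M2_dv.eval
theorem N_rho : Nn rho = 0 := N_dv.eval

theorem M2_exact : ∃ u : ℂ → ℂ, AnalyticAt ℂ u rho ∧ (∀ᶠ z in 𝓝 rho, M2minus3 z = (z - rho) ^ 2 * u z) ∧
    u rho ≠ 0 := by
  obtain ⟨u, hu, hu2⟩ := M2_dv
  refine ⟨u, hu, hu2, ?_⟩
  obtain ⟨n, hn, hn2⟩ := N_dv
  have hn0 : n rho ≠ 0 := by
    intro h0
    have h1 := hasQ_N.hasDerivAt rho_mem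
    rw [D_N rho_mem, M2_rho, N_rho] at h1
    have h2 : HasDerivAt (fun z => (z - rho) ^ 1 * n z) _ rho :=
      (((hasDerivAt_id rho).sub_const rho).pow 1).mul hn.differentiableAt.hasDerivAt
    have h3 := h1.unique (h2.congr_of_eventuallyEq hn2)
    simp [h0, M6_ne rho_mem, Real.pi_ne_zero] at h3
  have hM2c : ContinuousAt M2minus3 rho := hasQ_M2.an.continuousAt
  have hM6c : ContinuousAt M6fun rho := hasQ_M6.an.continuousAt
  have := cancel_pow (n := 2) (a := fun z => n z ^ 2) (b := fun z => u z * (M2minus3 z ^ 3 / 9 - 12 * M6fun z))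
    (hn.continuousAt.pow 2) (hu.continuousAt.mul (by fun_prop)) (by
      filter_upwards [hu2, hn2, uhp_open.mem_nhds rho_mem] with z h1 h2 hz
      have := N_sq hz
      rw [h2] at this
      linear_combination this + (M2minus3 z ^ 3 / 9 - 12 * M6fun z) * h1)
  intro h0
  simp only [h0, zero_mul] at this
  exact hn0 (pow_eq_zero_iff (by norm_num) |>.1 this)

theorem Data.beta (h : Data k ε f0 f1 g) (hε : ε = (-I) ^ k) {C α β : ℂ} (hC0 : C ≠ 0)
    (hC : ∀ z ∈ UHP, Ff k f0 f1 z = C * (M2minus3 z ^ 2 * M6fun z ^ k))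
    (hH : ∀ z ∈ UHP, Hf k f0 f1 z =
      (α * M2minus3 z ^ 5 + β * (M2minus3 z ^ 2 * M6fun z)) * M6fun z ^ k) : β = 0 := by
  by_contra hβ
  obtain ⟨u, hu, hu2, hu0⟩ := M2_exact
  have hM2c : ContinuousAt M2minus3 rho := hasQ_M2.an.continuousAt
  have hM6c : ContinuousAt M6fun rho := hasQ_M6.an.continuousAt
  have hE1c : ContinuousAt (E1f k f0 f1) rho := h.E1M.an.continuousAt
  have hf1c : ContinuousAt f1 rho := h.h1.an.continuousAt
  have hf0c : ContinuousAt f0 rho := h.h0.an.continuousAt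
  have hd1c : ContinuousAt (d1 k f1) rho := h.d1M.an.continuousAt
  have h10 : f1 rho = 0 := by
    have t1 : Tendsto (fun z => C * E1f k f0 f1 z) (𝓝[≠] rho) (𝓝 (C * E1f k f0 f1 rho)) :=
      (hE1c.const_mul C).tendsto.mono_left nhdsWithin_le_nhds
    have c2 : ContinuousAt (fun z => f1 z * (α * M2minus3 z ^ 3 + β * M6fun z)) rho := by fun_prop
    have t2 := c2.tendsto.mono_left (nhdsWithin_le_nhds (s := {rho}ᶜ))
    have e := tendsto_nhds_unique (t1.congr' (by
      filter_upwards [mem_nhdsWithin_of_mem_nhds hu2, mem_nhdsWithin_of_mem_nhds (hu.continuousAt.eventually_ne hu0),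
        self_mem_nhdsWithin, mem_nhdsWithin_of_mem_nhds (uhp_open.mem_nhds rho_mem)] with z a b c d
      refine (h.rel hC hH d ?_).2
      rw [a]; exact mul_ne_zero (pow_ne_zero _ (sub_ne_zero.2 c)) b)) t2
    rw [E1f, M2_rho, N_rho] at e
    simp [hβ, M6_ne rho_mem] at e
    exact e
  subst hε
  obtain ⟨v, hv, hv2⟩ : Dv 1 f1 := Dv.succ (n := 0) h.h1.an (by simp) h10
  have cr : ∀ w n j : ℕ, w + 2 * n = 3 * k + 2 * j → om ^ j ≠ 1 →
      (-I) ^ k * ((Real.sqrt 3 : ℂ) * rho) ^ (w + 2 * n) ≠ 1 := by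
    intro w n j e hj
    rw [e, char_rho]; exact hj
  obtain ⟨a, ha, ha2⟩ : Dv 5 f0 :=
    h.h0.step (h.h0.step (h.h0.step (h.h0.step (h.h0.step h.h0.dv0
      (cr _ _ 1 (by ring) (by simpa using om_ne1))) (cr _ _ 2 (by ring) om_ne2))
      (cr _ _ 3 (by ring) om_ne3)) (cr _ _ 4 (by ring) om_ne4)) (cr _ _ 5 (by ring) om_ne5)
  obtain ⟨b, hb, hb2⟩ : Dv 4 (d0 k f0) :=
    h.d0M.step (h.d0M.step (h.d0M.step (h.d0M.step h.d0M.dv0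
      (cr _ _ 2 (by ring) om_ne2))
      (cr _ _ 3 (by ring) om_ne3)) (cr _ _ 4 (by ring) om_ne4)) (cr _ _ 5 (by ring) om_ne5)
  have huc := hu.continuousAt
  have hvc := hv.continuousAt
  have hac := ha.continuousAt
  have hbc := hb.continuousAt
  have := cancel_pow (n := 4) (a := fun z => C * (u z ^ 2 * M6fun z ^ k))
    (b := fun z => (z - rho) * ((z - rho) ^ 5 * a z ^ 2 + u z ^ 2 * (z - rho) * v z ^ 2 + 6 * (a z * d1 k f1 z - v z * b z)))
    (by fun_prop) (by fun_prop) (by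
      filter_upwards [hu2, hv2, ha2, hb2, uhp_open.mem_nhds rho_mem] with z e1 e2 e3 e4 hz
      have e := hC z hz
      rw [Ff, e1, e2, e3, e4] at e
      linear_combination -e)
  simp [hC0, hu0, M6_ne rho_mem] at this

theorem final_alg {k P f Df D2f M2 N ph M6 : ℂ} (hP : P ≠ 0) (hM : M2 ≠ 0)
    (hN : N ^ 2 = M2 ^ 4 / 9 - 12 * (M2 * M6))
    (hL : k ^ 2 / 4 * M2 ^ 3 * f = M2 * D2f - (k * ph * M2 + 2 * N + 2 * ph * M2 / 3) * Df
      + (M2 * (k / 2) ^ 2 * ph ^ 2 + k * ph * (N + ph * M2 / 3) - k / 12 * (ph ^ 2 - M2 ^ 2) * M2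
        + N * ph / 3 + ph ^ 2 * M2 / 18 + M2 ^ 3 / 18) * f) :
    ((D2f * M2 + Df * (N + ph * M2 / 3) - (Df * ((k / 2 + 1 / 3) * (ph * M2) + N)
      + f * ((k / 2 + 1 / 3) * ((ph ^ 2 - M2 ^ 2) / 6 * M2 + ph * (N + ph * M2 / 3))
        + (2 / 3 * ph * N + 2 / 9 * M2 ^ 3 - 6 * M6)))) * (P * M2 ^ 2)
      - (Df * M2 - f * ((k / 2 + 1 / 3) * (ph * M2) + N)) *
        (k / 2 * ph * P * M2 ^ 2 + P * (2 * M2 * (N + ph * M2 / 3)))) / (P * M2 ^ 2) ^ 2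
    = ((k / 2) ^ 2 * M2 ^ 2 - 18 * M6 / M2) * (f / (P * M2)) := by
  field_simp
  linear_combination (-M2 * (36 * 54)) * hL + (72 * 54) * f * hN

theorem Data.final (h : Data k ε f0 f1 g) (hε : ε = (-I) ^ k) {z : ℂ} (hz : z ∈ UHP) (hM : M2minus3 z ≠ 0) :
    deriv (deriv fun w => ff f0 f1 w / (Pfun3 k w * M2minus3 w)) z
        = -(4 * (Real.pi : ℂ) ^ 2) *
            (((k : ℂ) / 2) ^ 2 * M4plus3 z - 18 * M6fun z / M2minus3 z) *
            (ff f0 f1 z / (Pfun3 k z * M2minus3 z)) := by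
  obtain ⟨C, hC⟩ := h.F_form
  obtain ⟨α, β, hH⟩ := h.H_form
  have hC0 : C ≠ 0 := by
    rintro rfl
    exact h.F_ne (fun z hz => by rw [hC z hz, zero_mul])
  have hβ := h.beta hε hC0 hC hH
  have hα := h.alpha hC hH
  obtain ⟨r0, r1⟩ := h.rel hC hH hz hM
  rw [hβ, hα] at r0 r1
  have hL : Lf k f0 f1 z = k ^ 2 / 4 * M2minus3 z ^ 3 * ff f0 f1 z := by
    apply mul_left_cancel₀ hC0
    rw [Lf, ff]; linear_combination r0 + M2star3 z * r1
  have hL2 := hL.symm.trans (h.D2f hz)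
  rw [Xf] at hL2
  have hev : ∀ᶠ w in 𝓝 z, w ∈ UHP ∧ M2minus3 w ≠ 0 := by
    filter_upwards [uhp_open.mem_nhds hz,
      (hasQ_M2.hasDerivAt hz).continuousAt.eventually_ne hM] with w a b using ⟨a, b⟩
  have hPd : ∀ {w : ℂ}, w ∈ UHP → HD (Pfun3 k) w (k / 2 * M2star3 w * Pfun3 k w) := fun hw => P_deriv k hw
  have h1 : (deriv fun w => ff f0 f1 w / (Pfun3 k w * M2minus3 w)) =ᶠ[𝓝 z] fun w =>
      2 * Real.pi * I * ((Dd (ff f0 f1) w * M2minus3 w - ff f0 f1 w * ((k / 2 + 1 / 3) * (M2star3 w * M2minus3 w) + Nn w)) /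
        (Pfun3 k w * M2minus3 w ^ 2)) := by
    filter_upwards [hev] with w hw
    obtain ⟨hw, hw2⟩ := hw
    have hPn := P_ne k hw
    have := HasDerivAt.div (h.ffQ.hd hw) ((hPd hw).mul (M2_hd hw)) (mul_ne_zero hPn hw2)
    refine HasDerivAt.deriv (this.congr_deriv ?_)
    field_simp
    ring
  rw [h1.deriv_eq]
  have hPn := P_ne k hz
  have hN := hasQ_N.hd hz
  rw [D_N hz] at hN
  have h2 := HasDerivAt.div
    (((h.ffQ.D.hd hz).mul (M2_hd hz)).sub ((h.ffQ.hd hz).mul ((((ph_hd hz).mul (M2_hd hz)).cmul (k / 2 + 1 / 3)).add hN)))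
    ((hPd hz).mul ((M2_hd hz).pow 2)) (mul_ne_zero hPn (pow_ne_zero 2 hM))
  have h3 := (h2.const_mul (2 * Real.pi * I : ℂ)).deriv
  have h4 := final_alg (k := (k : ℂ)) hPn hM (N_sq hz) hL2
  refine h3.trans ?_
  rw [M4_eq hz]
  have hI2 : (2 * Real.pi * I : ℂ) ^ 2 = -(4 * (Real.pi : ℂ) ^ 2) := by
    linear_combination 4 * (Real.pi : ℂ) ^ 2 * I_sq
  rw [← hI2]
  simp only [Nat.cast_ofNat, Nat.add_one_sub_one, pow_one]
  linear_combination (2 * Real.pi * I : ℂ) ^ 2 * h4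

end G3

/-- Theorem: an extremal quasimodular form of weight `3k+2` and depth 1
on `Γ₀⁺(3)` with character `χ^k`, divided by `M₆^{k/2}·M₂`, solves
`y″ = -4π²((k/2)² M₄ - 18 M₆/M₂) y`. -/
theorem extremal_Gamma0plus3_weight3kplus2_MODE
    (χ : SL2R → ℂ)
    (hχmul : ∀ γ ∈ GammaPlus3, ∀ δ ∈ GammaPlus3, χ (γ * δ) = χ γ * χ δ)
    (hχS : χ S3elt = -Complex.I) (hχR : χ R3elt = -Complex.I)
    (k : ℕ)
    (f₀ f₁ : ℂ → ℂ)
    (hf₀ : MFchar GammaPlus3 (fun γ => χ γ ^ k) (3 * k + 2) f₀)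
    (hf₁ : MFchar GammaPlus3 (fun γ => χ γ ^ k) (3 * k) f₁)
    (f : ℂ → ℂ) (hf : ∀ z, f z = f₀ z + M2star3 z * f₁ z)
    (hext : VOrder 1 f (k : ℝ)) :
    ∀ z ∈ UHP, M2minus3 z ≠ 0 →
      deriv (deriv fun w => f w / (Pfun3 k w * M2minus3 w)) z
        = -(4 * (Real.pi : ℂ) ^ 2) *
            (((k : ℂ) / 2) ^ 2 * M4plus3 z - 18 * M6fun z / M2minus3 z) *
            (f z / (Pfun3 k z * M2minus3 z)) := by
  obtain rfl : f = G3.ff f₀ f₁ := funext hf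
  have h0 := G3.isM_of hχmul hχS hχR (w := 3 * k + 2) (by push_cast; ring) hf₀
  have h1 := G3.isM_of hχmul hχS hχR (w := 3 * k) (by push_cast; ring) hf₁
  obtain ⟨G0, hG0⟩ := h0.1
  obtain ⟨G1, hG1⟩ := h1.1
  obtain ⟨g, hg, hfg, hg0⟩ := G3.fac_of_VOrder (hG0.add (G3.hasQ_ph.mul hG1)) hext
  have D : G3.Data k ((-I) ^ k) f₀ f₁ g :=
    { h0 := h0
      h1 := h1
      hε := by rw [← pow_mul, mul_comm, pow_mul, neg_sq, I_sq]
      hg := hg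
      hfg := hfg
      hg0 := hg0 }
  exact fun z hz hM => D.final rfl hz hM
end
end

section
/- Let Γ be a subgroup of SL(2,ℝ) commensurable with SL(2,ℤ) and containing −I, and let Q be a meromorphic function on ℍ, not identically 0, with Q((az+b)/(cz+d)) = (cz+d)⁴ Q(z) for all (a b; c d) ∈ Γ. Let z₀ ∈ ℍ be an elliptic point of Γ whose stabilizer {γ ∈ Γ : γz₀ = z₀} has order 2e with e ≥ 2. Suppose that (z−z₀)² Q(z) has a finite limit A as z → z₀ (so Q has a pole of order at most 2 at z₀), and that A = (1/4 − κ²)/(4π²) for some κ ∈ (1/2)ℤ, κ > 0, such that e does not divide 2κ; thus the local exponents of the equation y″ = −4π² Q y at z₀ are 1/2 ± κ. Then z₀ is an apparent singularity of y″ = −4π² Q y: choosing r > 0 so small that Q has no poles in the punctured disk D* = {0 < |z−z₀| < r} ⊆ ℍ, for every holomorphic solution y of y″ = −4π² Q y on any simply connected open subset U of D*, there exists a meromorphic function on the full disk {|z−z₀| < r} that agrees with y² on U. -/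
noncomputable section

open Complex Matrix Filter Topology

/-- `-I ∈ SL(2,ℝ)`. -/
def negI : SL2R := ⟨-1, by simp [Matrix.det_fin_two_of, Matrix.det_neg]⟩


/-! ### Part 1 : power series -/

def psum (c : ℕ → ℂ) (x : ℂ) : ℂ := ∑' k, c k * x ^ k

def PBd (r : ℝ) (c : ℕ → ℂ) : Prop := ∀ ρ : ℝ, 0 < ρ → ρ < r → ∃ C : ℝ, ∀ k, ‖c k‖ * ρ ^ k ≤ C

lemma PBd.summable_real {r : ℝ} {c : ℕ → ℂ} (h : PBd r c) {s : ℝ} (hs0 : 0 ≤ s) (hs : s < r) :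
    Summable (fun k => ‖c k‖ * s ^ k) := by
  obtain ⟨ρ, h1, h2⟩ := exists_between hs
  have hρ : 0 < ρ := lt_of_le_of_lt hs0 h1
  obtain ⟨C, hC⟩ := h ρ hρ h2
  have hg : Summable (fun k : ℕ => C * (s / ρ) ^ k) :=
    (summable_geometric_of_lt_one (by positivity) ((div_lt_one hρ).2 h1)).mul_left C
  refine Summable.of_nonneg_of_le (fun k => by positivity) (fun k => ?_) hg
  have : ‖c k‖ * s ^ k = (‖c k‖ * ρ ^ k) * (s / ρ) ^ k := by
    rw [div_pow]; field_simp
  rw [this]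
  gcongr
  exact hC k

lemma PBd.summable {r : ℝ} {c : ℕ → ℂ} (h : PBd r c) {x : ℂ} (hx : x ∈ Metric.ball (0 : ℂ) r) :
    Summable (fun k => ‖c k * x ^ k‖) := by
  have := h.summable_real (norm_nonneg x) (by simpa using hx)
  simpa [norm_mul, norm_pow] using this

lemma PBd.of_summable {r : ℝ} {c : ℕ → ℂ}
    (h : ∀ x ∈ Metric.ball (0 : ℂ) r, Summable (fun k => c k * x ^ k)) : PBd r c := by
  intro ρ h0 h1
  have hs := h (ρ : ℂ) (by simp [abs_of_pos h0, h1])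
  have ht := hs.tendsto_atTop_zero.norm
  obtain ⟨C, hC⟩ := ht.bddAbove_range
  refine ⟨C, fun k => ?_⟩
  have := hC ⟨k, rfl⟩
  simpa [norm_mul, norm_pow, abs_of_pos h0] using this

lemma PBd.nat_mul {r : ℝ} {c : ℕ → ℂ} (h : PBd r c) : PBd r (fun k => (k : ℂ) * c k) := by
  intro ρ h0 h1
  obtain ⟨σ, h2, h3⟩ := exists_between h1
  have hσ : 0 < σ := h0.trans h2
  obtain ⟨C, hC⟩ := h σ hσ h3
  have ht : Tendsto (fun k : ℕ => (k : ℝ) * (ρ / σ) ^ k) atTop (𝓝 0) :=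
    tendsto_self_mul_const_pow_of_lt_one (by positivity) ((div_lt_one hσ).2 h2)
  obtain ⟨D, hD⟩ := ht.bddAbove_range
  refine ⟨C * D, fun k => ?_⟩
  have hk := hD ⟨k, rfl⟩
  have : ‖(k : ℂ) * c k‖ * ρ ^ k = (‖c k‖ * σ ^ k) * ((k : ℝ) * (ρ / σ) ^ k) := by
    rw [div_pow, norm_mul]; simp; field_simp
  rw [this]
  have hC0 : 0 ≤ C := le_trans (by positivity) (hC 0)
  exact mul_le_mul (hC k) hk (by positivity) hC0

lemma PBd.diff {r : ℝ} {c : ℕ → ℂ} (h : PBd r c) {x : ℂ} (hx : x ∈ Metric.ball (0 : ℂ) r) :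
    DifferentiableAt ℂ (psum c) x ∧ x * deriv (psum c) x = psum (fun k => (k : ℂ) * c k) x := by
  have hx' : ‖x‖ < r := by simpa using hx
  obtain ⟨s, h1, h2⟩ := exists_between hx'
  have hs0 : 0 ≤ s := (norm_nonneg x).trans h1.le
  have hu := h.summable_real hs0 h2
  have hd : ∀ i, DifferentiableOn ℂ (fun x : ℂ => c i * x ^ i) (Metric.ball (0 : ℂ) s) := by
    intro i; fun_prop
  have hle : ∀ i, ∀ w ∈ Metric.ball (0 : ℂ) s, ‖c i * w ^ i‖ ≤ ‖c i‖ * s ^ i := by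
    intro i w hw
    have : ‖w‖ < s := by simpa using hw
    rw [norm_mul, norm_pow]; gcongr
  have hxs : x ∈ Metric.ball (0 : ℂ) s := by simpa using h1
  refine ⟨(differentiableOn_tsum_of_summable_norm hu hd Metric.isOpen_ball hle).differentiableAt
    (Metric.isOpen_ball.mem_nhds hxs), ?_⟩
  have := hasSum_deriv_of_summable_norm hu hd Metric.isOpen_ball hle hxs
  have h3 := this.mul_left x
  have h4 : psum c = fun w => ∑' i, c i * w ^ i := rfl
  rw [h4, ← h3.tsum_eq, psum]
  congr 1
  ext k
  rw [deriv_const_mul _ (by fun_prop)]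
  rcases k with _ | k
  · simp
  · simp; ring

lemma exists_series {r : ℝ} {f : ℂ → ℂ} (hf : DifferentiableOn ℂ f (Metric.ball (0 : ℂ) r)) :
    ∃ c : ℕ → ℂ, PBd r c ∧ c 0 = f 0 ∧ ∀ x ∈ Metric.ball (0 : ℂ) r, f x = psum c x := by
  have key : ∀ x ∈ Metric.ball (0 : ℂ) r,
      HasSum (fun k => ((k.factorial : ℂ)⁻¹ * iteratedDeriv k f 0) * x ^ k) (f x) := by
    intro x hx
    have := hasSum_taylorSeries_on_ball hf hx
    have e : (fun k : ℕ => ((k.factorial : ℂ)⁻¹ * iteratedDeriv k f 0) * x ^ k) =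
        fun k : ℕ => (k.factorial : ℂ)⁻¹ • (x - 0) ^ k • iteratedDeriv k f 0 := by
      ext k
      rw [smul_eq_mul, smul_eq_mul, sub_zero]; ring
    rw [e]
    exact this
  refine ⟨_, PBd.of_summable (fun x hx => (key x hx).summable), by simp, fun x hx => ?_⟩
  exact (key x hx).tsum_eq.symm

noncomputable def frob (n : ℕ) (b s : ℕ → ℂ) : ℕ → ℂ
  | k => (s k + ∑ i : Fin k, b (k - i) * frob n b s i) / (((k : ℂ) + 1) * (k + n + 1))

lemma frob_eq (n : ℕ) (b s : ℕ → ℂ) (k : ℕ) :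
    ((k : ℂ) + 1) * (k + n + 1) * frob n b s k
      = s k + ∑ i ∈ Finset.range k, b (k - i) * frob n b s i := by
  rw [frob, Finset.sum_range]
  have h1 : ((k : ℂ) + 1) ≠ 0 := by exact_mod_cast Nat.succ_ne_zero k
  have h2 : ((k : ℂ) + n + 1) ≠ 0 := by exact_mod_cast Nat.succ_ne_zero (k + n)
  field_simp

lemma frob_bd (n : ℕ) {r : ℝ} {b s : ℕ → ℂ} (hb : PBd r b) (hs : PBd r s) :
    PBd r (frob n b s) := by
  intro ρ h0 h1
  obtain ⟨M1, hM1⟩ := hb ρ h0 h1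
  obtain ⟨M2, hM2⟩ := hs ρ h0 h1
  set f := frob n b s with hf
  obtain ⟨M, hMb, hMs, hM0⟩ : ∃ M : ℝ, (∀ k, ‖b k‖ * ρ ^ k ≤ M) ∧ (∀ k, ‖s k‖ * ρ ^ k ≤ M) ∧ 0 ≤ M :=
    ⟨max M1 M2, fun k => (hM1 k).trans (le_max_left _ _), fun k => (hM2 k).trans (le_max_right _ _),
      le_trans (le_trans (by positivity) (hM1 0)) (le_max_left _ _)⟩
  obtain ⟨K, hK⟩ := exists_nat_ge (2 * M)
  set C : ℝ := 2 * M + ∑ i ∈ Finset.range K, ‖f i‖ * ρ ^ i with hC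
  have hC2 : 2 * M ≤ C := by
    have : 0 ≤ ∑ i ∈ Finset.range K, ‖f i‖ * ρ ^ i := Finset.sum_nonneg (fun i _ => by positivity)
    linarith
  refine ⟨C, fun k => ?_⟩
  induction k using Nat.strong_induction_on with
  | _ k ih =>
  by_cases hkK : k < K
  · have := Finset.single_le_sum (f := fun i => ‖f i‖ * ρ ^ i) (fun i _ => by positivity)
      (Finset.mem_range.2 hkK)
    linarith
  · have hkK' : (K : ℝ) ≤ k := by exact_mod_cast not_lt.1 hkK
    have e := frob_eq n b s k
    rw [← hf] at e
    have e2 : ((k : ℝ) + 1) * (k + n + 1) * (‖f k‖ * ρ ^ k) ≤ M + k * (M * C) := by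
      have hn : ((k : ℝ) + 1) * (k + n + 1) * ‖f k‖ = ‖((k : ℂ) + 1) * (k + n + 1) * f k‖ := by
        rw [norm_mul, norm_mul]
        congr 2
        · rw [show ((k : ℂ) + 1) = ((k + 1 : ℕ) : ℂ) by push_cast; ring, Complex.norm_natCast]
          push_cast; ring
        · rw [show ((k : ℂ) + n + 1) = ((k + n + 1 : ℕ) : ℂ) by push_cast; ring,
            Complex.norm_natCast]
          push_cast; ring
      rw [← mul_assoc, hn, e]
      calc ‖s k + ∑ i ∈ Finset.range k, b (k - i) * f i‖ * ρ ^ k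
          ≤ (‖s k‖ + ∑ i ∈ Finset.range k, ‖b (k - i)‖ * ‖f i‖) * ρ ^ k := by
            gcongr
            refine (norm_add_le _ _).trans ?_
            gcongr
            refine (norm_sum_le _ _).trans (le_of_eq ?_)
            simp
        _ = ‖s k‖ * ρ ^ k
            + ∑ i ∈ Finset.range k, (‖b (k - i)‖ * ρ ^ (k - i)) * (‖f i‖ * ρ ^ i) := by
            rw [add_mul, Finset.sum_mul]
            congr 1
            refine Finset.sum_congr rfl (fun i hi => ?_)
            have : ρ ^ k = ρ ^ (k - i) * ρ ^ i := by
              rw [← pow_add, Nat.sub_add_cancel (Finset.mem_range.1 hi).le]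
            rw [this]; ring
        _ ≤ M + ∑ i ∈ Finset.range k, M * C := by
            refine add_le_add (hMs k) (Finset.sum_le_sum (fun i hi => ?_))
            exact mul_le_mul (hMb _) (ih i (Finset.mem_range.1 hi)) (by positivity) hM0
        _ = M + k * (M * C) := by simp
    have hC0 : 0 ≤ C := by linarith
    have hF : 0 ≤ ‖f k‖ * ρ ^ k := by positivity
    by_contra hcon
    push Not at hcon
    have h3 : ((k : ℝ) + 1) * (k + 1) * C < ((k : ℝ) + 1) * (k + n + 1) * (‖f k‖ * ρ ^ k) := by
      have hn0 : (0 : ℝ) ≤ n := Nat.cast_nonneg n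
      have hk0 : (0 : ℝ) ≤ k := Nat.cast_nonneg k
      calc ((k : ℝ) + 1) * (k + 1) * C < ((k : ℝ) + 1) * (k + 1) * (‖f k‖ * ρ ^ k) := by gcongr
        _ ≤ _ := by gcongr; linarith
    have hk0 : (0 : ℝ) ≤ k := Nat.cast_nonneg k
    have hMk : M * C ≤ k / 2 * C := by gcongr; linarith
    have h5 : (k : ℝ) * (M * C) ≤ k * (k / 2 * C) := by gcongr
    nlinarith [mul_nonneg hk0 hC0, mul_nonneg (mul_nonneg hk0 hk0) hC0]

lemma frob_solve (n : ℕ) {r : ℝ} {B S : ℂ → ℂ}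
    (hB : DifferentiableOn ℂ B (Metric.ball (0 : ℂ) r)) (hB0 : B 0 = 0)
    (hS : DifferentiableOn ℂ S (Metric.ball (0 : ℂ) r)) :
    ∃ φ : ℂ → ℂ, DifferentiableOn ℂ φ (Metric.ball (0 : ℂ) r) ∧
      ∀ x ∈ Metric.ball (0 : ℂ) r,
        x ^ 2 * deriv (deriv φ) x + (n + 3) * x * deriv φ x + (n + 1) * φ x - B x * φ x = S x := by
  obtain ⟨b, hb, hb0, hBb⟩ := exists_series hB
  obtain ⟨s, hs, -, hSs⟩ := exists_series hS
  set f := frob n b s with hf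
  have hfb : PBd r f := frob_bd n hb hs
  have hd : DifferentiableOn ℂ (psum f) (Metric.ball (0 : ℂ) r) :=
    fun x hx => (hfb.diff hx).1.differentiableWithinAt
  refine ⟨psum f, hd, fun x hx => ?_⟩
  have hnhds := Metric.isOpen_ball.mem_nhds hx
  have hd2 : DifferentiableAt ℂ (deriv (psum f)) x :=
    (hd.deriv Metric.isOpen_ball).differentiableAt hnhds
  have e1 := (hfb.diff hx).2
  have e2 := (hfb.nat_mul.diff hx).2
  have e3 : deriv (psum fun k => (k : ℂ) * f k) x = deriv (psum f) x + x * deriv (deriv (psum f)) x := by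
    have : (psum fun k => (k : ℂ) * f k) =ᶠ[𝓝 x] fun x => x * deriv (psum f) x := by
      filter_upwards [hnhds] with y hy using (hfb.diff hy).2.symm
    rw [this.deriv_eq]
    have h := (hasDerivAt_id' x).fun_mul hd2.hasDerivAt
    rw [h.deriv, one_mul]
  rw [e3] at e2
  have s0 := (hfb.summable hx).of_norm
  have s1 := (hfb.nat_mul.summable hx).of_norm
  have s2 := (hfb.nat_mul.nat_mul.summable hx).of_norm
  have t1 := (s2.hasSum.add (s1.hasSum.mul_left ((n : ℂ) + 2))).add (s0.hasSum.mul_left ((n : ℂ) + 1))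
  have hcauchy := tsum_mul_tsum_eq_tsum_sum_range_of_summable_norm (hfb.summable hx) (hb.summable hx)
  have hcs := summable_norm_sum_mul_range_of_summable_norm (hfb.summable hx) (hb.summable hx)
  have t2 := (hs.summable hx).of_norm.hasSum.add hcs.of_norm.hasSum
  rw [← hcauchy] at t2
  have heq : (fun k : ℕ => (k : ℂ) * ((k : ℂ) * f k) * x ^ k + (n + 2) * ((k : ℂ) * f k * x ^ k)
      + (n + 1) * (f k * x ^ k))
      = fun k : ℕ => s k * x ^ k + ∑ i ∈ Finset.range (k + 1), f i * x ^ i * (b (k - i) * x ^ (k - i)) := by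
    ext k
    have e := frob_eq n b s k
    rw [← hf] at e
    have : ∑ i ∈ Finset.range (k + 1), f i * x ^ i * (b (k - i) * x ^ (k - i))
        = (∑ i ∈ Finset.range k, b (k - i) * f i) * x ^ k := by
      rw [Finset.sum_range_succ, Finset.sum_mul, Nat.sub_self, hb0, hB0]
      simp only [zero_mul, mul_zero, add_zero]
      refine Finset.sum_congr rfl (fun i hi => ?_)
      have : x ^ k = x ^ (k - i) * x ^ i := by
        rw [← pow_add, Nat.sub_add_cancel (Finset.mem_range.1 hi).le]
      rw [this]; ring
    rw [this, ← add_mul, ← e]; ring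
  rw [← heq] at t2
  have t3 := t1.unique t2
  rw [hBb x hx, hSs x hx]
  simp only [psum] at e1 e2 t3 ⊢
  linear_combination t3 + (n+2) * e1 + e2

/-! ### Part 2 : the operator -/

def Lop (m : ℂ) (B h : ℂ → ℂ) (x : ℂ) : ℂ :=
  x ^ 2 * deriv (deriv h) x + (1 + m) * x * deriv h x - B x * h x

lemma Lop_of (m : ℂ) (B h h' : ℂ → ℂ) (h'' x : ℂ) (H : ∀ᶠ y in 𝓝 x, HasDerivAt h (h' y) y)
    (H2 : HasDerivAt h' h'' x) :
    Lop m B h x = x ^ 2 * h'' + (1 + m) * x * h' x - B x * h x := by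
  have e : deriv h =ᶠ[𝓝 x] h' := by
    filter_upwards [H] with y hy using hy.deriv
  rw [Lop, e.deriv_eq, H2.deriv, e.self_of_nhds]

lemma Lop_congr (m : ℂ) (B h g : ℂ → ℂ) (x : ℂ) (H : h =ᶠ[𝓝 x] g) : Lop m B h x = Lop m B g x := by
  rw [Lop, Lop, H.deriv.deriv_eq, H.deriv_eq, H.self_of_nhds]

lemma analytic_HD {f : ℂ → ℂ} {x : ℂ} (hf : AnalyticAt ℂ f x) :
    (∀ᶠ y in 𝓝 x, HasDerivAt f (deriv f y) y) ∧ HasDerivAt (deriv f) (deriv (deriv f) x) x := by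
  refine ⟨?_, hf.deriv.differentiableAt.hasDerivAt⟩
  filter_upwards [hf.eventually_analyticAt] with y hy using hy.differentiableAt.hasDerivAt

lemma Lop_add (m : ℂ) (B f g : ℂ → ℂ) (x : ℂ) (hf : AnalyticAt ℂ f x) (hg : AnalyticAt ℂ g x) :
    Lop m B (fun y => f y + g y) x = Lop m B f x + Lop m B g x := by
  obtain ⟨f1, f2⟩ := analytic_HD hf
  obtain ⟨g1, g2⟩ := analytic_HD hg
  rw [Lop_of m B _ (fun y => deriv f y + deriv g y) _ x ?_ (f2.fun_add g2), Lop, Lop]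
  · ring
  · filter_upwards [f1, g1] with y hy1 hy2 using hy1.fun_add hy2

lemma Lop_sub (m : ℂ) (B f g : ℂ → ℂ) (x : ℂ) (hf : AnalyticAt ℂ f x) (hg : AnalyticAt ℂ g x) :
    Lop m B (fun y => f y - g y) x = Lop m B f x - Lop m B g x := by
  obtain ⟨f1, f2⟩ := analytic_HD hf
  obtain ⟨g1, g2⟩ := analytic_HD hg
  rw [Lop_of m B _ (fun y => deriv f y - deriv g y) _ x ?_ (f2.fun_sub g2), Lop, Lop]
  · ring
  · filter_upwards [f1, g1] with y hy1 hy2 using hy1.fun_sub hy2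

lemma Lop_pow_mul (m : ℂ) (B d : ℂ → ℂ) (k : ℕ) (x : ℂ) (hd : AnalyticAt ℂ d x) :
    Lop m B (fun y => y ^ k * d y) x = x ^ k * (k * (k + m) * d x
      + (2 * k + 1 + m) * x * deriv d x + x ^ 2 * deriv (deriv d) x - B x * d x) := by
  obtain ⟨d1, d2⟩ := analytic_HD hd
  have hd0 : HasDerivAt d (deriv d x) x := hd.differentiableAt.hasDerivAt
  have H2 := (((hasDerivAt_pow (k - 1) x).const_mul (k : ℂ)).fun_mul hd0).fun_add
    ((hasDerivAt_pow k x).fun_mul d2)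
  rw [Lop_of m B _ (fun y => (k * y ^ (k - 1)) * d y + y ^ k * deriv d y) _ x ?_ H2]
  · rcases k with _ | _ | k
    · simp; ring
    · simp; ring
    · simp; ring
  · filter_upwards [d1] with y hy using (hasDerivAt_pow k y).fun_mul hy

lemma eq_of_punctured {f g : ℂ → ℂ} (hf : ContinuousAt f 0) (hg : ContinuousAt g 0)
    (h : ∀ᶠ x in 𝓝[≠] (0 : ℂ), f x = g x) : f 0 = g 0 := by
  have h1 : Tendsto f (𝓝[≠] 0) (𝓝 (f 0)) := hf.tendsto.mono_left nhdsWithin_le_nhds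
  have h2 : Tendsto g (𝓝[≠] 0) (𝓝 (g 0)) := hg.tendsto.mono_left nhdsWithin_le_nhds
  exact tendsto_nhds_unique (h1.congr' h) h2

lemma obs_indep (n : ℕ) (B h g R R' : ℂ → ℂ) (hB : ContinuousAt B 0) (hB0 : B 0 = 0)
    (hh : AnalyticAt ℂ h 0) (hg : AnalyticAt ℂ g 0) (h0 : h 0 = g 0)
    (hR : ContinuousAt R 0) (hR' : ContinuousAt R' 0)
    (e1 : ∀ᶠ x in 𝓝 (0 : ℂ), Lop (-n) B h x = x ^ n * R x)
    (e2 : ∀ᶠ x in 𝓝 (0 : ℂ), Lop (-n) B g x = x ^ n * R' x) : R 0 = R' 0 := by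
  set d : ℂ → ℂ := fun x => h x - g x with hd
  have hda : AnalyticAt ℂ d 0 := hh.fun_sub hg
  have eD : ∀ᶠ x in 𝓝 (0 : ℂ), Lop (-n) B d x = x ^ n * (R x - R' x) := by
    filter_upwards [e1, e2, hh.eventually_analyticAt, hg.eventually_analyticAt] with x a b c c'
    rw [Lop_sub _ _ _ _ _ c c', a, b]; ring
  by_cases hz : ∀ᶠ x in 𝓝 (0 : ℂ), d x = 0
  · apply eq_of_punctured hR hR'
    have hz' : ∀ᶠ x in 𝓝 (0 : ℂ), d =ᶠ[𝓝 x] fun _ => 0 := hz.eventually_nhds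
    filter_upwards [nhdsWithin_le_nhds hz', nhdsWithin_le_nhds eD, self_mem_nhdsWithin] with x a b hx
    rw [Lop_congr _ _ _ _ _ a] at b
    have : Lop (-n) B (fun _ => 0) x = 0 := by simp [Lop]
    rw [this] at b
    have := (mul_eq_zero.1 b.symm).resolve_left (pow_ne_zero _ hx)
    exact sub_eq_zero.1 this
  · obtain ⟨k, f, hf, hf0, hdf⟩ := (hda.exists_eventuallyEq_pow_smul_nonzero_iff).2 hz
    simp only [sub_zero, smul_eq_mul] at hdf
    have hk : k ≠ 0 := by
      rintro rfl
      have := hdf.self_of_nhds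
      simp [hd, h0] at this
      exact hf0 this.symm
    set E : ℂ → ℂ := fun x => k * (k + (-n : ℂ)) * f x + (2 * k + 1 + (-n : ℂ)) * x * deriv f x
      + x ^ 2 * deriv (deriv f) x - B x * f x with hE
    have hEc : ContinuousAt E 0 := by
      have c1 := hf.continuousAt
      have c2 := hf.deriv.continuousAt
      have c3 := hf.deriv.deriv.continuousAt
      fun_prop
    have hE0 : E 0 = k * (k - n : ℂ) * f 0 := by
      simp only [hE, hB0]; ring
    have key : ∀ᶠ x in 𝓝 (0 : ℂ), x ^ k * E x = x ^ n * (R x - R' x) := by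
      filter_upwards [eD, hdf.eventually_nhds, hf.eventually_analyticAt] with x a b c
      rw [← a, Lop_congr _ _ _ _ _ b, Lop_pow_mul _ _ _ _ _ c]
    by_cases hkn : k < n
    · exfalso
      have : E 0 = 0 ^ (n - k) * (R 0 - R' 0) := by
        apply eq_of_punctured (g := fun x => x ^ (n - k) * (R x - R' x)) hEc (by fun_prop)
        filter_upwards [nhdsWithin_le_nhds key, self_mem_nhdsWithin] with x a hx
        have : x ^ n = x ^ k * x ^ (n - k) := by rw [← pow_add]; congr 1; omega
        rw [this, mul_assoc] at a
        exact mul_left_cancel₀ (pow_ne_zero _ hx) a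
      rw [hE0, zero_pow (by omega), zero_mul] at this
      have h1 : (k : ℂ) ≠ 0 := by exact_mod_cast hk
      have h2 : (k - n : ℂ) ≠ 0 := by
        rw [sub_ne_zero]; exact_mod_cast hkn.ne
      exact mul_ne_zero (mul_ne_zero h1 h2) hf0 this
    · have : 0 ^ (k - n) * E 0 = R 0 - R' 0 := by
        apply eq_of_punctured (f := fun x => x ^ (k - n) * E x) (g := fun x => R x - R' x)
          (by fun_prop) (by fun_prop)
        filter_upwards [nhdsWithin_le_nhds key, self_mem_nhdsWithin] with x a hx
        have : x ^ k = x ^ n * x ^ (k - n) := by rw [← pow_add]; congr 1; omega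
        rw [this, mul_assoc] at a
        exact mul_left_cancel₀ (pow_ne_zero _ hx) a
      have h0 : 0 ^ (k - n) * E 0 = 0 := by
        rcases eq_or_ne (k - n) 0 with h | h
        · have : k = n := by omega
          rw [hE0, this]; simp
        · rw [zero_pow h, zero_mul]
      rw [h0] at this
      exact (sub_eq_zero.1 this.symm)

lemma exists_factor {r : ℝ} (hr : 0 < r) {f : ℂ → ℂ}
    (hf : DifferentiableOn ℂ f (Metric.ball (0 : ℂ) r)) :
    ∃ g : ℂ → ℂ, DifferentiableOn ℂ g (Metric.ball (0 : ℂ) r) ∧ ∀ x, f x = f 0 + x * g x := by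
  refine ⟨dslope f 0, (differentiableOn_dslope (Metric.ball_mem_nhds _ hr)).2 hf, fun x => ?_⟩
  have := sub_smul_dslope f 0 x
  simp only [sub_zero, smul_eq_mul] at this
  rw [this]; ring

lemma obs_construct (n : ℕ) {r : ℝ} (hr : 0 < r) {B : ℂ → ℂ}
    (hB : DifferentiableOn ℂ B (Metric.ball (0 : ℂ) r)) (hB0 : B 0 = 0) (m : ℕ) (hm : m < n) :
    ∃ h R : ℂ → ℂ, Differentiable ℂ h ∧ h 0 = 1 ∧ DifferentiableOn ℂ R (Metric.ball (0 : ℂ) r) ∧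
      ∀ x ∈ Metric.ball (0 : ℂ) r, Lop (-n) B h x = x ^ (m + 1) * R x := by
  obtain ⟨B1, hB1, hBB⟩ := exists_factor hr hB
  induction m with
  | zero =>
    refine ⟨fun _ => 1, fun x => - B1 x, by fun_prop, rfl, hB1.fun_neg, fun x _ => ?_⟩
    simp [Lop, hBB x, hB0]
  | succ m ih =>
    obtain ⟨h, R, hh, h0, hR, hL⟩ := ih (by omega)
    obtain ⟨R1, hR1, hRR⟩ := exists_factor hr hR
    set a : ℂ := - R 0 / ((m + 1 : ℕ) * ((m + 1 : ℕ) + (-n : ℂ))) with ha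
    have hden : ((m + 1 : ℕ) * ((m + 1 : ℕ) + (-n : ℂ)) : ℂ) ≠ 0 := by
      apply mul_ne_zero
      · exact_mod_cast Nat.succ_ne_zero m
      · rw [← sub_eq_add_neg, sub_ne_zero]; exact_mod_cast hm.ne
    have ha' : a * ((m + 1 : ℕ) * ((m + 1 : ℕ) + (-n : ℂ))) = - R 0 := div_mul_cancel₀ _ hden
    refine ⟨fun x => h x + x ^ (m + 1) * a, fun x => R1 x - a * B1 x, by fun_prop, by simp [h0],
      hR1.fun_sub (hB1.const_mul a), fun x hx => ?_⟩
    rw [Lop_add _ _ _ _ _ (hh.analyticAt x) (Differentiable.analyticAt (by fun_prop) x), hL x hx,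
      Lop_pow_mul _ _ _ _ _ analyticAt_const, hRR x, hBB x, hB0]
    simp only [deriv_const', deriv_const]
    linear_combination x ^ (m + 1) * ha'

lemma exists_h1 (n : ℕ) {r : ℝ} (hr : 0 < r) {B : ℂ → ℂ}
    (hB : DifferentiableOn ℂ B (Metric.ball (0 : ℂ) r)) (hB0 : B 0 = 0) :
    ∃ h : ℂ → ℂ, DifferentiableOn ℂ h (Metric.ball (0 : ℂ) r) ∧ h 0 = 1 ∧
      ∀ x ∈ Metric.ball (0 : ℂ) r, Lop n B h x = 0 := by
  obtain ⟨B1, hB1, hBB⟩ := exists_factor hr hB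
  obtain ⟨φ, hφ, e⟩ := frob_solve n hB hB0 hB1
  refine ⟨fun x => 1 + x ^ 1 * φ x, by fun_prop, by simp, fun x hx => ?_⟩
  have hφa : AnalyticAt ℂ φ x := hφ.analyticAt (Metric.isOpen_ball.mem_nhds hx)
  rw [Lop_add _ _ _ _ _ analyticAt_const (by fun_prop), Lop_pow_mul _ _ _ _ _ hφa]
  have := e x hx
  simp only [Lop, deriv_const', deriv_const]
  have hb := hBB x
  rw [hB0] at hb
  push_cast
  linear_combination x * this - hb

lemma exists_h2 (n : ℕ) (hn : 0 < n) {r : ℝ} (hr : 0 < r) {B : ℂ → ℂ}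
    (hB : DifferentiableOn ℂ B (Metric.ball (0 : ℂ) r)) (hB0 : B 0 = 0)
    (hobs : ∀ h R : ℂ → ℂ, AnalyticAt ℂ h 0 → h 0 = 1 → AnalyticAt ℂ R 0 →
      (∀ᶠ x in 𝓝 (0 : ℂ), Lop (-n) B h x = x ^ n * R x) → R 0 = 0) :
    ∃ h : ℂ → ℂ, DifferentiableOn ℂ h (Metric.ball (0 : ℂ) r) ∧ h 0 = 1 ∧
      ∀ x ∈ Metric.ball (0 : ℂ) r, Lop (-n) B h x = 0 := by
  obtain ⟨h, R, hh, h0, hR, hL⟩ := obs_construct n hr hB hB0 (n - 1) (by omega)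
  rw [Nat.sub_add_cancel hn] at hL
  have hR0 : R 0 = 0 := hobs h R (hh.analyticAt 0) h0 (hR.analyticAt (Metric.ball_mem_nhds _ hr))
    (by filter_upwards [Metric.ball_mem_nhds (0 : ℂ) hr] with x hx using hL x hx)
  obtain ⟨R1, hR1, hRR⟩ := exists_factor hr hR
  obtain ⟨φ, hφ, e⟩ := frob_solve n hB hB0 hR1.fun_neg
  refine ⟨fun x => h x + x ^ (n + 1) * φ x, by fun_prop, by simp [h0], fun x hx => ?_⟩
  have hφa : AnalyticAt ℂ φ x := hφ.analyticAt (Metric.isOpen_ball.mem_nhds hx)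
  rw [Lop_add _ _ _ _ _ (hh.analyticAt x) (by fun_prop), Lop_pow_mul _ _ _ _ _ hφa, hL x hx, hRR x,
    hR0]
  have := e x hx
  push_cast
  linear_combination x ^ (n + 1) * this

lemma obs_zero (n : ℕ) (B : ℂ → ℂ) (hB : ContinuousAt B 0) (hB0 : B 0 = 0) (ω κ : ℂ)
    (hω : ω ^ n ≠ 1)
    (hsym : ∀ᶠ x in 𝓝 (0 : ℂ), B (ω * x / (1 + κ * x)) + ((n : ℂ) ^ 2 - 1) / 4
      = (1 + κ * x) ^ 2 * (B x + ((n : ℂ) ^ 2 - 1) / 4)) (h R : ℂ → ℂ)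
    (hh : AnalyticAt ℂ h 0) (h0 : h 0 = 1) (hR : AnalyticAt ℂ R 0)
    (hL : ∀ᶠ x in 𝓝 (0 : ℂ), Lop (-n) B h x = x ^ n * R x) : R 0 = 0 := by
  set τ : ℂ → ℂ := fun x => ω * x / (1 + κ * x) with hτ
  set s : ℂ := ((n : ℂ) + 1) / 2 with hs
  set v : ℂ → ℂ := fun x => (1 + κ * x) ^ s with hv
  have hτa : AnalyticAt ℂ τ 0 := by
    apply AnalyticAt.fun_div (by fun_prop) (by fun_prop); simp
  have hτ0 : τ 0 = 0 := by simp [hτ]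
  have hva : AnalyticAt ℂ v 0 := by
    apply AnalyticAt.cpow (by fun_prop) (by fun_prop); simp
  have hv0 : v 0 = 1 := by simp [hv]
  have hha : AnalyticAt ℂ (fun x => h (τ x)) 0 :=
    AnalyticAt.fun_comp (by rwa [hτ0]) hτa
  have hRa : AnalyticAt ℂ (fun x => R (τ x)) 0 :=
    AnalyticAt.fun_comp (by rwa [hτ0]) hτa
  have hslit : ∀ᶠ x in 𝓝 (0 : ℂ), 1 + κ * x ∈ slitPlane := by
    have hc : ContinuousAt (fun x : ℂ => 1 + κ * x) 0 := by fun_prop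
    exact hc.eventually_mem (isOpen_slitPlane.mem_nhds (by simp))
  have htend : Tendsto τ (𝓝 0) (𝓝 0) := by
    have := hτa.continuousAt.tendsto
    rwa [hτ0] at this
  have key := obs_indep n B h (fun x => v x * h (τ x)) R
    (fun x => ω ^ n * v x * ((1 + κ * x) ^ (n + 2))⁻¹ * R (τ x)) hB hB0 hh (hva.fun_mul hha)
    (by simp [h0, hv0, hτ0]) hR.continuousAt
    (by
      have c1 := hva.continuousAt
      have c2 := hRa.continuousAt
      have c3 : ContinuousAt (fun x : ℂ => ((1 + κ * x) ^ (n + 2))⁻¹) 0 :=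
        ContinuousAt.inv₀ (by fun_prop) (by simp)
      exact ((continuousAt_const.mul c1).mul c3).mul c2) hL ?_
  · simp only [hv0, hτ0, mul_zero, add_zero, one_pow, inv_one, mul_one] at key
    have : (1 - ω ^ n) * R 0 = 0 := by linear_combination key
    exact (mul_eq_zero.1 this).resolve_left (sub_ne_zero.2 hω.symm)
  · filter_upwards [hsym, htend.eventually hL, hslit.eventually_nhds,
      (htend.eventually hh.eventually_analyticAt).eventually_nhds,
      htend.eventually hh.eventually_analyticAt] with x a b c d d0
    -- derivatives
    have hvd : ∀ᶠ y in 𝓝 x, HasDerivAt v (s * κ * v y / (1 + κ * y)) y := by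
      filter_upwards [c] with y hy
      have h1 : HasDerivAt (fun y : ℂ => 1 + κ * y) κ y := by
        simpa using ((hasDerivAt_id' y).const_mul κ).const_add 1
      have h2 := h1.cpow_const (c := s) hy
      convert h2 using 1
      have hne : 1 + κ * y ≠ 0 := slitPlane_ne_zero hy
      rw [cpow_sub _ _ hne, cpow_one]
      simp only [hv]; ring
    have hτd : ∀ᶠ y in 𝓝 x, HasDerivAt τ (ω / (1 + κ * y) ^ 2) y := by
      filter_upwards [c] with y hy
      have hne : 1 + κ * y ≠ 0 := slitPlane_ne_zero hy
      have h1 : HasDerivAt (fun y : ℂ => 1 + κ * y) κ y := by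
        simpa using ((hasDerivAt_id' y).const_mul κ).const_add 1
      have h2 := ((hasDerivAt_id' y).const_mul ω).fun_div h1 hne
      refine h2.congr_deriv ?_
      congr 1; ring
    have hnex : 1 + κ * x ≠ 0 := slitPlane_ne_zero c.self_of_nhds
    have hJ : HasDerivAt (fun y : ℂ => 1 + κ * y) κ x := by
      simpa using ((hasDerivAt_id' x).const_mul κ).const_add 1
    have H1 : ∀ᶠ y in 𝓝 x, HasDerivAt (fun y => v y * h (τ y))
        (s * κ * v y / (1 + κ * y) * h (τ y) + v y * (deriv h (τ y) * (ω / (1 + κ * y) ^ 2))) y := by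
      filter_upwards [hvd, hτd, d] with y a1 a2 a3
      exact a1.fun_mul (a3.differentiableAt.hasDerivAt.comp y a2)
    have v1 := hvd.self_of_nhds
    have τ1 := hτd.self_of_nhds
    have g1 := d0.differentiableAt.hasDerivAt.comp x τ1
    have g2 := d0.deriv.differentiableAt.hasDerivAt.comp x τ1
    have H2 := (((v1.const_mul (s * κ)).fun_div hJ hnex).fun_mul g1).fun_add
      (v1.fun_mul (g2.fun_mul ((hasDerivAt_const x ω).fun_div (hJ.fun_pow 2) (pow_ne_zero 2 hnex))))
    rw [Lop_of _ B _ _ _ x H1 H2]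
    have bb : Lop (-n) B h (τ x) = (τ x) ^ n * R (τ x) := b
    have e1 : ω ^ n * v x * ((1 + κ * x) ^ (n + 2))⁻¹ * R (τ x) * x ^ n
        = v x / (1 + κ * x) ^ 2 * Lop (-n) B h (τ x) := by
      rw [bb]
      have : τ x ^ n = ω ^ n * x ^ n / (1 + κ * x) ^ n := by simp only [hτ, div_pow, mul_pow]
      rw [this, pow_add]
      field_simp
    rw [show x ^ n * (ω ^ n * v x * ((1 + κ * x) ^ (n + 2))⁻¹ * R (τ x))
      = ω ^ n * v x * ((1 + κ * x) ^ (n + 2))⁻¹ * R (τ x) * x ^ n by ring, e1, Lop]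
    have aB : B (τ x) = (1 + κ * x) ^ 2 * (B x + ((n : ℂ) ^ 2 - 1) / 4) - ((n : ℂ) ^ 2 - 1) / 4 := by
      linear_combination a
    rw [aB]
    have eτ : τ x = ω * x / (1 + κ * x) := rfl
    simp only [Function.comp]
    generalize deriv (deriv h) (τ x) = D2
    generalize deriv h (τ x) = D1
    generalize h (τ x) = D0
    generalize v x = V
    generalize B x = BB
    rw [eτ, hs]
    simp only [Nat.cast_ofNat, Nat.add_one_sub_one, pow_one]
    clear * - hnex
    generalize hJJ : 1 + κ * x = J at hnex ⊢
    field_simp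
    subst hJJ
    ring

/-! ### Part 3 : from the two series to the square of a solution -/

lemma wronsk (n : ℕ) {r : ℝ} (hr : 0 < r) {B h1 h2 : ℂ → ℂ}
    (d1 : DifferentiableOn ℂ h1 (Metric.ball (0 : ℂ) r)) (d2 : DifferentiableOn ℂ h2 (Metric.ball (0 : ℂ) r))
    (i1 : h1 0 = 1) (i2 : h2 0 = 1)
    (e1 : ∀ x ∈ Metric.ball (0 : ℂ) r, Lop n B h1 x = 0)
    (e2 : ∀ x ∈ Metric.ball (0 : ℂ) r, Lop (-n) B h2 x = 0) :
    ∀ x ∈ Metric.ball (0 : ℂ) r,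
      n * (h1 x * h2 x) + x * (deriv h1 x * h2 x - h1 x * deriv h2 x) = n := by
  set W : ℂ → ℂ := fun x => n * (h1 x * h2 x) + x * (deriv h1 x * h2 x - h1 x * deriv h2 x) with hW
  have d1' := d1.deriv Metric.isOpen_ball
  have d2' := d2.deriv Metric.isOpen_ball
  have hWd : DifferentiableOn ℂ W (Metric.ball (0 : ℂ) r) := by fun_prop
  have key : ∀ x ∈ Metric.ball (0 : ℂ) r, x * deriv W x = 0 := by
    intro x hx
    have hn := Metric.isOpen_ball.mem_nhds hx
    have a1 := (d1.differentiableAt hn).hasDerivAt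
    have a2 := (d2.differentiableAt hn).hasDerivAt
    have b1 := (d1'.differentiableAt hn).hasDerivAt
    have b2 := (d2'.differentiableAt hn).hasDerivAt
    have := ((a1.fun_mul a2).const_mul (n : ℂ)).fun_add
      ((hasDerivAt_id' x).fun_mul ((b1.fun_mul a2).fun_sub (a1.fun_mul b2)))
    rw [hW, this.deriv]
    have E1 := e1 x hx
    have E2 := e2 x hx
    simp only [Lop] at E1 E2
    linear_combination h2 x * E1 - h1 x * E2
  have hW0 : ∀ x ∈ Metric.ball (0 : ℂ) r, deriv W x = 0 := by
    intro x hx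
    by_cases h : x = 0
    · subst h
      have hc : ContinuousAt (deriv W) 0 :=
        ((hWd.deriv Metric.isOpen_ball).differentiableAt (Metric.ball_mem_nhds _ hr)).continuousAt
      apply eq_of_punctured (g := fun _ => 0) hc continuousAt_const
      filter_upwards [nhdsWithin_le_nhds (Metric.ball_mem_nhds (0 : ℂ) hr), self_mem_nhdsWithin]
        with y hy hy0
      exact (mul_eq_zero.1 (key y hy)).resolve_left hy0
    · exact (mul_eq_zero.1 (key x hx)).resolve_left h
  intro x hx
  have := Metric.isOpen_ball.is_const_of_deriv_eq_zero (convex_ball (0 : ℂ) r).isPreconnected hWd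
    (fun y hy => hW0 y hy) hx (Metric.mem_ball_self hr)
  simp only [hW] at this
  rw [this]; simp [i1, i2]

lemma euler_const {U : Set ℂ} (hU : IsOpen U) (hpc : IsPreconnected U) (h0 : (0 : ℂ) ∉ U) (μ : ℤ)
    {F : ℂ → ℂ} (hF : DifferentiableOn ℂ F U) (he : ∀ x ∈ U, x * deriv F x = μ * F x) :
    ∃ k : ℂ, ∀ x ∈ U, F x = k * x ^ μ := by
  rcases U.eq_empty_or_nonempty with rfl | ⟨u, hu⟩
  · exact ⟨0, by simp⟩
  have hne : ∀ x ∈ U, x ≠ 0 := fun x hx h => h0 (h ▸ hx)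
  have hd : ∀ x ∈ U, HasDerivAt (fun x => F x * x ^ (-μ)) 0 x := by
    intro x hx
    have := (hF.differentiableAt (hU.mem_nhds hx)).hasDerivAt.fun_mul
      (hasDerivAt_zpow (-μ) x (Or.inl (hne x hx)))
    refine this.congr_deriv ?_
    have hx0 := hne x hx
    rw [zpow_sub₀ hx0, zpow_one]
    have h2 := he x hx
    field_simp
    push_cast
    linear_combination x ^ (-μ) * h2
  refine ⟨F u * u ^ (-μ), fun x hx => ?_⟩
  have := hU.is_const_of_deriv_eq_zero hpc
    (fun y hy => (hd y hy).differentiableAt.differentiableWithinAt)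
    (fun y hy => (hd y hy).deriv) hx hu
  rw [← this, mul_assoc, ← zpow_add₀ (hne x hx)]; simp

lemma square_mero (n : ℕ) (hn : 0 < n) {r : ℝ} (hr : 0 < r) {B h1 h2 : ℂ → ℂ}
    (d1 : DifferentiableOn ℂ h1 (Metric.ball (0 : ℂ) r)) (d2 : DifferentiableOn ℂ h2 (Metric.ball (0 : ℂ) r))
    (i1 : h1 0 = 1) (i2 : h2 0 = 1)
    (e1 : ∀ x ∈ Metric.ball (0 : ℂ) r, Lop n B h1 x = 0)
    (e2 : ∀ x ∈ Metric.ball (0 : ℂ) r, Lop (-n) B h2 x = 0)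
    {U : Set ℂ} (hU : IsOpen U) (hpc : IsPreconnected U) (hUb : U ⊆ Metric.ball (0 : ℂ) r \ {0})
    {Y : ℂ → ℂ} (hY : DifferentiableOn ℂ Y U)
    (hode : ∀ x ∈ U, x ^ 2 * deriv (deriv Y) x = (B x + ((n : ℂ) ^ 2 - 1) / 4) * Y x) :
    ∃ G : ℂ → ℂ, MeromorphicOn G (Metric.ball (0 : ℂ) r) ∧ ∀ x ∈ U, G x = Y x ^ 2 := by
  have hW := wronsk n hr d1 d2 i1 i2 e1 e2
  have h0U : (0 : ℂ) ∉ U := fun h => (hUb h).2 rfl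
  have hUb' : U ⊆ Metric.ball (0 : ℂ) r := fun x hx => (hUb hx).1
  set P : ℂ → ℂ := fun x => Y x * ((1 + n) / 2 * h1 x + x * deriv h1 x) - x * deriv Y x * h1 x with hP
  set R : ℂ → ℂ := fun x => Y x * ((1 - n) / 2 * h2 x + x * deriv h2 x) - x * deriv Y x * h2 x with hR
  have hder : ∀ x ∈ U, ∃ p q : ℂ, HasDerivAt P p x ∧ HasDerivAt R q x ∧ x * p = (1 - n) / 2 * P x ∧
      x * q = (1 + n) / 2 * R x := by
    intro x hx
    have hnb := Metric.isOpen_ball.mem_nhds (hUb' hx)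
    have a1 := (d1.differentiableAt hnb).hasDerivAt
    have a2 := (d2.differentiableAt hnb).hasDerivAt
    have b1 := ((d1.deriv Metric.isOpen_ball).differentiableAt hnb).hasDerivAt
    have b2 := ((d2.deriv Metric.isOpen_ball).differentiableAt hnb).hasDerivAt
    have y1 := (hY.differentiableAt (hU.mem_nhds hx)).hasDerivAt
    have y2 := ((hY.deriv hU).differentiableAt (hU.mem_nhds hx)).hasDerivAt
    have id' := hasDerivAt_id' x
    refine ⟨_, _, (y1.fun_mul ((a1.const_mul ((1 + n : ℂ) / 2)).fun_add (id'.fun_mul b1))).fun_sub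
      ((id'.fun_mul y2).fun_mul a1),
      (y1.fun_mul ((a2.const_mul ((1 - n : ℂ) / 2)).fun_add (id'.fun_mul b2))).fun_sub
      ((id'.fun_mul y2).fun_mul a2), ?_, ?_⟩
    · have E := e1 x (hUb' hx)
      have O := hode x hx
      simp only [Lop] at E
      simp only [hP]
      linear_combination Y x * E - h1 x * O
    · have E := e2 x (hUb' hx)
      have O := hode x hx
      simp only [Lop] at E
      simp only [hR]
      linear_combination Y x * E - h2 x * O
  have hPd : DifferentiableOn ℂ P U := fun x hx => by
    obtain ⟨p, q, hp, -⟩ := hder x hx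
    exact hp.differentiableAt.differentiableWithinAt
  have hRd : DifferentiableOn ℂ R U := fun x hx => by
    obtain ⟨p, q, -, hq, -⟩ := hder x hx
    exact hq.differentiableAt.differentiableWithinAt
  obtain ⟨k1, hk1⟩ := euler_const hU hpc h0U (1 - n) (F := fun x => P x * P x) (hPd.fun_mul hPd)
    (fun x hx => by
      obtain ⟨p, q, hp, hq, ep, eq⟩ := hder x hx
      rw [(hp.fun_mul hp).deriv]
      push_cast
      linear_combination 2 * P x * ep)
  obtain ⟨k2, hk2⟩ := euler_const hU hpc h0U 1 (F := fun x => P x * R x) (hPd.fun_mul hRd)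
    (fun x hx => by
      obtain ⟨p, q, hp, hq, ep, eq⟩ := hder x hx
      rw [(hp.fun_mul hq).deriv]
      push_cast
      linear_combination R x * ep + P x * eq)
  obtain ⟨k3, hk3⟩ := euler_const hU hpc h0U (1 + n) (F := fun x => R x * R x) (hRd.fun_mul hRd)
    (fun x hx => by
      obtain ⟨p, q, hp, hq, ep, eq⟩ := hder x hx
      rw [(hq.fun_mul hq).deriv]
      push_cast
      linear_combination 2 * R x * eq)
  have hn0 : (n : ℂ) ≠ 0 := by exact_mod_cast hn.ne'
  refine ⟨fun x => ((n : ℂ) ^ 2)⁻¹ * (k1 * x ^ (1 - n : ℤ) * (h2 x) ^ 2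
      - 2 * (k2 * x ^ (1 : ℤ)) * (h1 x * h2 x) + k3 * x ^ (1 + n : ℤ) * (h1 x) ^ 2), ?_, ?_⟩
  · intro x hx
    have m1 : MeromorphicAt h1 x :=
      (d1.analyticAt (Metric.isOpen_ball.mem_nhds hx)).meromorphicAt
    have m2 : MeromorphicAt h2 x :=
      (d2.analyticAt (Metric.isOpen_ball.mem_nhds hx)).meromorphicAt
    have mx : MeromorphicAt (fun x : ℂ => x) x := MeromorphicAt.id x
    have c : ∀ k : ℂ, MeromorphicAt (fun _ : ℂ => k) x := fun k => MeromorphicAt.const k x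
    exact (c _).fun_mul (((((c _).fun_mul (mx.fun_zpow _)).fun_mul (m2.fun_pow 2)).fun_sub
      (((c _).fun_mul ((c _).fun_mul (mx.fun_zpow _))).fun_mul (m1.fun_mul m2))).fun_add
      (((c _).fun_mul (mx.fun_zpow _)).fun_mul (m1.fun_pow 2)))
  · intro x hx
    have w := hW x (hUb' hx)
    have K1 := hk1 x hx
    have K2 := hk2 x hx
    have K3 := hk3 x hx
    beta_reduce
    rw [← K1, ← K2, ← K3]
    have hsum : P x * h2 x - R x * h1 x = n * Y x := by
      simp only [hP, hR]
      linear_combination Y x * w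
    rw [inv_mul_eq_iff_eq_mul₀ (pow_ne_zero 2 hn0)]
    linear_combination (P x * h2 x - R x * h1 x + n * Y x) * hsum

/-! ### Part 4 : the stabilizer -/

lemma jfac_ne_zero (γ : SL2R) {z : ℂ} (hz : z ∈ UHP) : jfac γ z ≠ 0 := by
  intro h
  have hz' : 0 < z.im := hz
  have hdet := γ.2
  rw [Matrix.det_fin_two] at hdet
  have hi := congrArg Complex.im h
  have hre := congrArg Complex.re h
  simp [jfac] at hi hre
  rcases hi with hi | hi
  · rw [hi] at hre hdet
    simp at hre
    rw [hre] at hdet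
    simp at hdet
  · exact hz'.ne' hi

lemma moeb_fix_iff (γ : SL2R) {z : ℂ} (hz : z ∈ UHP) :
    moeb γ z = z ↔ (γ.1 0 0 : ℂ) * z + γ.1 0 1 = z * jfac γ z := by
  have := jfac_ne_zero γ hz
  have h : moeb γ z = ((γ.1 0 0 : ℂ) * z + γ.1 0 1) / jfac γ z := rfl
  rw [h, div_eq_iff this]

lemma det_C (γ : SL2R) : (γ.1 0 0 : ℂ) * γ.1 1 1 - γ.1 0 1 * γ.1 1 0 = 1 := by
  have hdet := γ.2
  rw [Matrix.det_fin_two] at hdet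
  exact_mod_cast hdet

lemma jfac_inv (γ : SL2R) {z : ℂ} (hz : z ∈ UHP) (h : moeb γ z = z) :
    jfac γ z * ((γ.1 0 0 : ℂ) - γ.1 1 0 * z) = 1 := by
  rw [moeb_fix_iff γ hz] at h
  have := det_C γ
  simp only [jfac] at h ⊢
  linear_combination this + (γ.1 1 0 : ℂ) * h

lemma stab_inj {γ δ : SL2R} {z : ℂ} (hz : z ∈ UHP) (h1 : moeb γ z = z) (h2 : moeb δ z = z)
    (h : jfac γ z = jfac δ z) : γ = δ := by
  have hz' : 0 < z.im := hz
  have aux : ∀ a b c d : ℝ, (a : ℂ) * z + b = c * z + d → a = c ∧ b = d := by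
    intro a b c d e
    have hi := congrArg Complex.im e
    have hre := congrArg Complex.re e
    simp at hi hre
    rcases hi with rfl | hi
    · exact ⟨rfl, by linarith⟩
    · exact absurd hi hz'.ne'
  rw [moeb_fix_iff γ hz] at h1
  rw [moeb_fix_iff δ hz] at h2
  rw [h, ← h2] at h1
  obtain ⟨a, b⟩ := aux _ _ _ _ h1
  obtain ⟨c, d⟩ := aux _ _ _ _ h
  ext i j
  fin_cases i <;> fin_cases j
  · exact a
  · exact b
  · exact c
  · exact d

def stabU (Γ : Subgroup SL2R) (z : ℂ) (hz : z ∈ UHP) : Subgroup ℂˣ where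
  carrier := {u | ∃ γ ∈ Γ, moeb γ z = z ∧ jfac γ z = u}
  one_mem' := ⟨1, Γ.one_mem, by simp [moeb], by simp [jfac]⟩
  mul_mem' := by
    rintro u v ⟨γ, hγ, f1, j1⟩ ⟨δ, hδ, f2, j2⟩
    rw [moeb_fix_iff _ hz] at f1 f2
    refine ⟨γ * δ, Γ.mul_mem hγ hδ, ?_, ?_⟩
    · rw [moeb_fix_iff _ hz]
      simp only [jfac, Matrix.SpecialLinearGroup.coe_mul, Matrix.mul_apply, Fin.sum_univ_two] at f1 f2 ⊢
      push_cast
      linear_combination ((γ.1 0 0 : ℂ) - z * γ.1 1 0) * f2 + ((δ.1 1 0 : ℂ) * z + δ.1 1 1) * f1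
    · rw [Units.val_mul, ← j1, ← j2]
      simp only [jfac, Matrix.SpecialLinearGroup.coe_mul, Matrix.mul_apply, Fin.sum_univ_two] at f1 f2 ⊢
      push_cast
      linear_combination (γ.1 1 0 : ℂ) * f2
  inv_mem' := by
    rintro u ⟨γ, hγ, f1, j1⟩
    have hi := jfac_inv γ hz f1
    rw [moeb_fix_iff _ hz] at f1
    have hj : jfac γ⁻¹ z = (γ.1 0 0 : ℂ) - γ.1 1 0 * z := by
      simp [jfac, Matrix.SpecialLinearGroup.coe_inv, Matrix.adjugate_fin_two]; ring
    refine ⟨γ⁻¹, Γ.inv_mem hγ, ?_, ?_⟩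
    · rw [moeb_fix_iff _ hz, hj]
      simp [Matrix.SpecialLinearGroup.coe_inv, Matrix.adjugate_fin_two]
      simp only [jfac] at f1
      linear_combination -f1
    · rw [hj, Units.val_inv_eq_inv_val, ← j1]
      exact eq_inv_of_mul_eq_one_right hi

lemma exists_stab (Γ : Subgroup SL2R) (z₀ : ℂ) (hz₀ : z₀ ∈ UHP) (e : ℕ) (he : 2 ≤ e)
    (hstab : Set.ncard {γ : SL2R | γ ∈ Γ ∧ moeb γ z₀ = z₀} = 2 * e)
    (n : ℕ) (hne : ¬ e ∣ n) :
    ∃ γ ∈ Γ, moeb γ z₀ = z₀ ∧ jfac γ z₀ ^ (2 * n) ≠ 1 := by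
  by_contra hcon
  push Not at hcon
  set H := stabU Γ z₀ hz₀ with hH
  have hcard : Nat.card H = 2 * e := by
    rw [← hstab, ← Nat.card_coe_set_eq]
    symm
    refine Nat.card_congr (Equiv.ofBijective
      (fun γ => ⟨Units.mk0 (jfac γ.1 z₀) (jfac_ne_zero γ.1 hz₀), γ.1, γ.2.1, γ.2.2, rfl⟩) ⟨?_, ?_⟩)
    · intro γ δ h
      apply Subtype.ext
      refine stab_inj hz₀ γ.2.2 δ.2.2 ?_
      have := congrArg (fun u : H => ((u : ℂˣ) : ℂ)) h
      simpa using this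
    · rintro ⟨u, γ, h1, h2, h3⟩
      refine ⟨⟨γ, h1, h2⟩, ?_⟩
      apply Subtype.ext
      apply Units.ext
      simpa using h3
  have : Finite H := Nat.finite_of_card_ne_zero (by omega)
  have hcyc : IsCyclic H := isCyclic_subgroup_units H
  have hexp : Monoid.exponent H = 2 * e := by rw [IsCyclic.exponent_eq_card, hcard]
  have hdvd : Monoid.exponent H ∣ 2 * n := by
    apply Monoid.exponent_dvd_of_forall_pow_eq_one
    rintro ⟨u, γ, h1, h2, h3⟩
    apply Subtype.ext
    apply Units.ext
    have := hcon γ h1 h2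
    rw [h3] at this
    simpa using this
  rw [hexp] at hdvd
  exact hne (Nat.dvd_of_mul_dvd_mul_left (by norm_num) hdvd)

/-- Theorem: a modular differential equation is apparent at an
elliptic point `z₀` of order `e` whenever `e ∤ 2κ_{z₀}`: every local solution `y` of
`y″ = -4π²Qy` near `z₀` has single-valued square, i.e. `y²` extends to a meromorphic
function on a full disk around `z₀`. -/
theorem apparent_at_elliptic_point
    (Γ : Subgroup SL2R) (hcomm : Subgroup.Commensurable SL2ZR Γ) (hnegI : negI ∈ Γ)
    (Q : ℂ → ℂ) (hQne : ∃ z ∈ UHP, Q z ≠ 0)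
    (hQmod : ∀ γ ∈ Γ, ∀ z ∈ UHP, Q (moeb γ z) = jfac γ z ^ 4 * Q z)
    (z₀ : ℂ) (hz₀ : z₀ ∈ UHP)
    (e : ℕ) (he : 2 ≤ e)
    (hstab : Set.ncard {γ : SL2R | γ ∈ Γ ∧ moeb γ z₀ = z₀} = 2 * e)
    (n : ℤ) (hn : 0 < n) (hne : ¬ ((e : ℤ) ∣ n))   -- `κ = n/2 ∈ (1/2)ℤ`, `κ > 0`, `e ∤ 2κ`
    (A : ℂ) (hA : A = (1 / 4 - ((n : ℂ) / 2) ^ 2) / (4 * (Real.pi : ℂ) ^ 2))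
    (hlim : Tendsto (fun z : ℂ => (z - z₀) ^ 2 * Q z) (𝓝[≠] z₀) (𝓝 A))
    (r : ℝ) (hr : 0 < r) (hball : Metric.ball z₀ r ⊆ UHP)
    (hQr : DifferentiableOn ℂ Q (Metric.ball z₀ r \ {z₀})) :
    ∀ U : Set ℂ, IsOpen U → U ⊆ Metric.ball z₀ r \ {z₀} → SimplyConnectedSpace U →
      ∀ y : ℂ → ℂ, DifferentiableOn ℂ y U →
      (∀ z ∈ U, deriv (deriv y) z = -(4 * (Real.pi : ℂ) ^ 2) * Q z * y z) →
      ∃ g : ℂ → ℂ, MeromorphicOn g (Metric.ball z₀ r) ∧ ∀ z ∈ U, g z = y z ^ 2 := by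
  intro U hU hUb hsc y hy hode
  lift n to ℕ using hn.le
  have hn' : 0 < n := by exact_mod_cast hn
  have hne' : ¬ e ∣ n := by
    intro h; exact hne (by exact_mod_cast h)
  obtain ⟨γ, hγ, hfix, hj⟩ := exists_stab Γ z₀ hz₀ e he hstab n hne'
  set p : ℂ := ((n : ℂ) ^ 2 - 1) / 4 with hp
  have hπ : (Real.pi : ℂ) ≠ 0 := by exact_mod_cast Real.pi_ne_zero
  have hAp : -(4 * (Real.pi : ℂ) ^ 2) * A = p := by
    rw [hA, hp]; field_simp; push_cast; ring
  set P : ℂ → ℂ := fun x => -(4 * (Real.pi : ℂ) ^ 2) * (x ^ 2 * Q (z₀ + x)) with hP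
  set B : ℂ → ℂ := fun x => Function.update P 0 p x - p with hB
  have hB0 : B 0 = 0 := by simp [hB]
  have hBne : ∀ x, x ≠ 0 → B x + p = P x := by
    intro x hx; simp [hB, Function.update_of_ne hx]
  have hmem : ∀ x, x ∈ Metric.ball (0 : ℂ) r → z₀ + x ∈ Metric.ball z₀ r := by
    intro x hx; simpa using hx
  have hlim' : Tendsto P (𝓝[≠] 0) (𝓝 p) := by
    have ht : Tendsto (fun x : ℂ => z₀ + x) (𝓝[≠] 0) (𝓝[≠] z₀) := by
      apply tendsto_nhdsWithin_of_tendsto_nhds_of_eventually_within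
      · have : ContinuousAt (fun x : ℂ => z₀ + x) 0 := by fun_prop
        have h := this.tendsto
        simp only [add_zero] at h
        exact h.mono_left nhdsWithin_le_nhds
      · filter_upwards [self_mem_nhdsWithin] with x hx
        simpa using hx
    have := (hlim.comp ht).const_mul (-(4 * (Real.pi : ℂ) ^ 2))
    rw [hAp] at this
    refine this.congr (fun x => ?_)
    simp [hP]
  have hBd : DifferentiableOn ℂ B (Metric.ball (0 : ℂ) r) := by
    have h1 : DifferentiableOn ℂ (Function.update P 0 p) (Metric.ball (0 : ℂ) r) := by
      rw [← differentiableOn_compl_singleton_and_continuousAt_iff (Metric.ball_mem_nhds (0 : ℂ) hr)]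
      refine ⟨?_, continuousAt_update_same.2 hlim'⟩
      have hPd : DifferentiableOn ℂ P (Metric.ball (0 : ℂ) r \ {0}) := by
        have hc : DifferentiableOn ℂ (fun x => Q (z₀ + x)) (Metric.ball (0 : ℂ) r \ {0}) := by
          refine hQr.fun_comp (by fun_prop) ?_
          rintro x ⟨hx, hx0⟩
          exact ⟨hmem x hx, by simpa using hx0⟩
        exact ((differentiableOn_id.fun_pow 2).fun_mul hc).const_mul _
      exact hPd.congr (fun x hx => Function.update_of_ne hx.2 _ _)
    exact h1.sub_const p
  have hBc : ContinuousAt B 0 := (hBd.differentiableAt (Metric.ball_mem_nhds _ hr)).continuousAt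
  have hj0 : jfac γ z₀ ≠ 0 := jfac_ne_zero γ hz₀
  have hsym : ∀ᶠ x in 𝓝 (0 : ℂ),
      B ((jfac γ z₀ ^ 2)⁻¹ * x / (1 + (γ.1 1 0 : ℂ) / jfac γ z₀ * x)) + p
      = (1 + (γ.1 1 0 : ℂ) / jfac γ z₀ * x) ^ 2 * (B x + p) := by
    filter_upwards [Metric.ball_mem_nhds (0 : ℂ) hr] with x hx
    by_cases hx0 : x = 0
    · subst hx0; simp
    have hzU : z₀ + x ∈ UHP := hball (hmem x hx)
    have hjx := jfac_ne_zero γ hzU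
    have hJ : 1 + (γ.1 1 0 : ℂ) / jfac γ z₀ * x = jfac γ (z₀ + x) / jfac γ z₀ := by
      rw [eq_div_iff hj0, add_mul, one_mul]
      have : (γ.1 1 0 : ℂ) / jfac γ z₀ * x * jfac γ z₀ = γ.1 1 0 * x := by field_simp
      rw [this]; simp only [jfac]; ring
    have hτ : (jfac γ z₀ ^ 2)⁻¹ * x / (jfac γ (z₀ + x) / jfac γ z₀)
        = x / (jfac γ (z₀ + x) * jfac γ z₀) := by field_simp
    have hm : z₀ + x / (jfac γ (z₀ + x) * jfac γ z₀) = moeb γ (z₀ + x) := by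
      have hi := jfac_inv γ hz₀ hfix
      have hf := (moeb_fix_iff γ hz₀).1 hfix
      have h3 : moeb γ (z₀ + x)
        = ((γ.1 0 0 : ℂ) * (z₀ + x) + γ.1 0 1) / jfac γ (z₀ + x) := rfl
      rw [h3, eq_div_iff hjx, add_mul]
      have h4 : x / (jfac γ (z₀ + x) * jfac γ z₀) * jfac γ (z₀ + x)
          = x * ((γ.1 0 0 : ℂ) - γ.1 1 0 * z₀) := by
        rw [← eq_inv_of_mul_eq_one_right hi |>.symm]
        field_simp
      rw [h4]
      simp only [jfac] at hf ⊢
      linear_combination -hf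
    rw [hJ, hτ, hBne x hx0, hBne _ (div_ne_zero hx0 (mul_ne_zero hjx hj0))]
    simp only [hP]
    rw [hm, hQmod γ hγ _ hzU]
    field_simp
  have hω : ((jfac γ z₀ ^ 2)⁻¹) ^ n ≠ 1 := by
    rw [inv_pow, ← pow_mul]
    intro h; exact hj (inv_eq_one.1 h)
  have hobs := obs_zero n B hBc hB0 _ _ hω hsym
  obtain ⟨h1, d1, i1, e1⟩ := exists_h1 n hr hBd hB0
  obtain ⟨h2, d2, i2, e2⟩ := exists_h2 n hn' hr hBd hB0 hobs
  set V : Set ℂ := (fun x => z₀ + x) ⁻¹' U with hV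
  have hVo : IsOpen V := hU.preimage (by fun_prop)
  have hUpc : IsPreconnected U := by
    have : PathConnectedSpace U := inferInstance
    exact isPreconnected_iff_preconnectedSpace.2 inferInstance
  have hVpc : IsPreconnected V := by
    have : V = (fun x => x - z₀) '' U := by
      ext x; constructor
      · intro hx; exact ⟨z₀ + x, hx, by ring⟩
      · rintro ⟨u, hu, rfl⟩
        simpa [hV] using hu
    rw [this]
    exact hUpc.image _ (by fun_prop)
  have hVb : V ⊆ Metric.ball (0 : ℂ) r \ {0} := by
    intro x hx
    have := hUb hx
    exact ⟨by simpa using this.1, by simpa using this.2⟩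
  obtain ⟨G, hG, hGe⟩ := square_mero n hn' hr d1 d2 i1 i2 e1 e2 hVo hVpc hVb
    (Y := fun x => y (z₀ + x)) (hy.fun_comp (by fun_prop) (fun x hx => hx)) (by
      intro x hx
      have hd1 : deriv (fun x => y (z₀ + x)) = fun x => deriv y (z₀ + x) := by
        ext t; exact deriv_comp_const_add _ _ _
      have hd2 : deriv (fun x => deriv y (z₀ + x)) x = deriv (deriv y) (z₀ + x) :=
        deriv_comp_const_add _ _ _
      have hx0 : x ≠ 0 := (hVb hx).2
      rw [hd1, hd2, hode _ hx, hBne x hx0]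
      simp only [hP]; ring)
  refine ⟨fun z => G (z - z₀), ?_, ?_⟩
  · intro z hz
    have hz' : z - z₀ ∈ Metric.ball (0 : ℂ) r := by
      simpa [dist_eq_norm] using hz
    exact (hG _ hz').comp_analyticAt (g := fun z => z - z₀) (by fun_prop)
  · intro z hz
    have := hGe (z - z₀) (by simpa [hV] using hz)
    simpa using this
end
end
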